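/- arXiv:2111.05751 — 2 statements merged into one kernel-verified Lean document; each statement's English description precedes it below -/
import Mathlib

section
/- There exist absolute constants C > 0 and c₀ > 0 such that for every prime p and all nonempty sets A, B, C ⊆ 𝔽_p with |A| ≤ √p one has #{(a, a', b, b', c, c') ∈ A² × B² × C² : a + b ≠ 0, a' + b' ≠ 0, and (a + b)^{−1} + c = (a' + b')^{−1} + c'} ≤ C · |A|^{7/5} · |B|^{8/5} · |C|^{6/5} · (E⁺(C))^{1/5} · (log(2|A|))^{c₀}. -/
open Finset
open scoped Classical

/-- The additive energy `E⁺(C) = #{(c₁,c₂,c₃,c₄) ∈ C⁴ : c₁ + c₂ = c₃ + c₄}`. -/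
def addEnergy {p : ℕ} (C : Finset (ZMod p)) : ℕ :=
  (((C ×ˢ C) ×ˢ (C ×ˢ C)).filter fun q => q.1.1 + q.1.2 = q.2.1 + q.2.2).card

namespace Polynomial

lemma resultant_ne_zero_of_irreducible {S : Type*} [CommRing S] [IsDomain S]
    [UniqueFactorizationMonoid S] {F G : S[X]} (hF : Irreducible F) (hdeg : F.natDegree ≠ 0)
    (hFG : ¬ F ∣ G) : F.resultant G ≠ 0 := by
  let _ : NormalizedGCDMonoid S := Classical.choice inferInstance
  let L := FractionRing S
  have hprim : F.IsPrimitive := hF.isPrimitive hdeg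
  have hirr : Irreducible (F.map (algebraMap S L)) :=
    (hprim.irreducible_iff_irreducible_map_fraction_map (K := L)).1 hF
  have hinj : Function.Injective (algebraMap S L) := IsFractionRing.injective S L
  have hndvd : ¬ F.map (algebraMap S L) ∣ G.map (algebraMap S L) := by
    rw [← hprim.dvd_iff_fraction_map_dvd_fraction_map L]
    exact hFG
  have hcop : IsCoprime (F.map (algebraMap S L)) (G.map (algebraMap S L)) :=
    (hirr.coprime_iff_not_dvd).2 hndvd
  intro h0
  have h1 := resultant_ne_zero _ _ hcop
  rw [natDegree_map_eq_of_injective hinj, natDegree_map_eq_of_injective hinj,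
    resultant_map_map, h0, map_zero] at h1
  exact h1 rfl

end Polynomial

namespace MvPolynomial

variable {K : Type*} [Field K]

lemma totalDegree_det_le {σ ι : Type*} [Fintype ι] [DecidableEq ι]
    (M : Matrix ι ι (MvPolynomial σ K)) (d : ι → ℕ) (h : ∀ i j, (M i j).totalDegree ≤ d j) :
    M.det.totalDegree ≤ ∑ j, d j := by
  rw [Matrix.det_apply]
  refine totalDegree_finsetSum_le fun s _ => ?_
  refine (totalDegree_smul_le _ _).trans ?_
  refine (totalDegree_finsetProd _ _).trans ?_
  exact Finset.sum_le_sum fun i _ => h _ _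

lemma totalDegree_coeff_finSuccEquiv_le {n : ℕ} (f : MvPolynomial (Fin (n + 1)) K) (i : ℕ) :
    ((finSuccEquiv K n f).coeff i).totalDegree ≤ f.totalDegree := by
  by_cases h : (finSuccEquiv K n f).coeff i = 0
  · simp [h]
  · exact (Nat.le_add_right _ _).trans (totalDegree_coeff_finSuccEquiv_add_le f i h)

lemma natDegree_finSuccEquiv_le {n : ℕ} (f : MvPolynomial (Fin (n + 1)) K) :
    (finSuccEquiv K n f).natDegree ≤ f.totalDegree := by
  rw [natDegree_finSuccEquiv]
  exact degreeOf_le_totalDegree f 0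

lemma aeval_eq_eval₂_finSuccEquiv {n : ℕ} {S : Type*} [CommRing S] [Algebra K S]
    (g : Fin (n + 1) → S) (f : MvPolynomial (Fin (n + 1)) K) :
    aeval g f = (finSuccEquiv K n f).eval₂
      (aeval (fun i => g i.succ) : MvPolynomial (Fin n) K →ₐ[K] S).toRingHom (g 0) := by
  induction f using MvPolynomial.induction_on with
  | C a => simp [finSuccEquiv_apply]
  | add p q hp hq => simp only [map_add, hp, hq, Polynomial.eval₂_add]
  | mul_X p i hp =>
    rw [map_mul, hp, map_mul, Polynomial.eval₂_mul]
    congr 1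
    refine Fin.cases ?_ (fun j => ?_) i
    · rw [finSuccEquiv_X_zero]; simp
    · rw [finSuccEquiv_X_succ]; simp

end MvPolynomial

namespace RuledSurface

open MvPolynomial

variable {K : Type*} [Field K]

/-- The line `{(z + w t, v, t)}`, as a triple of polynomials in `t`. -/
noncomputable def lineMap (l : K × K × K) : Fin 3 → Polynomial K :=
  ![Polynomial.C l.2.1 + Polynomial.C l.2.2 * Polynomial.X, Polynomial.C l.1, Polynomial.X]

/-- The restriction of a polynomial to the line `{(z + w t, v, t)}`. -/
noncomputable def restr (l : K × K × K) : MvPolynomial (Fin 3) K →ₐ[K] Polynomial K :=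
  aeval (lineMap l)

/-- If an irreducible `f` and a polynomial `g` not divisible by `f` vanish on common lines
in many planes of the pencil `X₁ = const`, then the number of planes is bounded in terms of
degrees. -/
lemma card_planes_le {f g : MvPolynomial (Fin 3) K} (hf : Irreducible f)
    (hf0 : pderiv 0 f ≠ 0) (hfg : ¬ f ∣ g) (V : Finset K)
    (hV : ∀ v ∈ V, ∃ z w, restr (v, z, w) f = 0 ∧ restr (v, z, w) g = 0) :
    V.card ≤ 2 * (f.totalDegree * g.totalDegree) := by
  set F := finSuccEquiv K 2 f with hFdef
  set G := finSuccEquiv K 2 g with hGdef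
  have hFirr : Irreducible F := (MulEquiv.irreducible_iff (finSuccEquiv K 2)).2 hf
  have hdeg : F.natDegree ≠ 0 := by
    rw [hFdef, natDegree_finSuccEquiv]
    intro h
    apply hf0
    apply pderiv_eq_zero_of_notMem_vars
    rw [mem_vars_iff_degreeOf_ne_zero]
    exact not_not.2 h
  have hFG : ¬ F ∣ G := fun h => hfg ((map_dvd_iff (finSuccEquiv K 2)).1 h)
  set r := F.resultant G with hr
  have hr0 : r ≠ 0 := Polynomial.resultant_ne_zero_of_irreducible hFirr hdeg hFG
  obtain ⟨P, Q, -, -, hPQ⟩ :=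
    Polynomial.exists_mul_add_mul_eq_C_resultant F G le_rfl le_rfl (Or.inl hdeg)
  rw [← hr] at hPQ
  have hrdeg : r.totalDegree ≤ 2 * (f.totalDegree * g.totalDegree) := by
    have h1 : r.totalDegree ≤ ∑ j : Fin (F.natDegree + G.natDegree),
        j.addCases (motive := fun _ => ℕ) (fun _ => g.totalDegree) (fun _ => f.totalDegree) := by
      rw [hr, Polynomial.resultant]
      refine totalDegree_det_le _ _ fun i j => ?_
      induction j using Fin.addCases with
      | left j =>
        simp only [Polynomial.sylvester, Matrix.of_apply, Fin.addCases_left]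
        split_ifs
        · exact totalDegree_coeff_finSuccEquiv_le _ _
        · simp
      | right j =>
        simp only [Polynomial.sylvester, Matrix.of_apply, Fin.addCases_right]
        split_ifs
        · exact totalDegree_coeff_finSuccEquiv_le _ _
        · simp
    rw [Fin.sum_univ_add] at h1
    simp only [Fin.addCases_left, Fin.addCases_right, sum_const, card_univ, Fintype.card_fin,
      smul_eq_mul] at h1
    have h2 := natDegree_finSuccEquiv_le f
    have h3 := natDegree_finSuccEquiv_le g
    rw [← hFdef] at h2
    rw [← hGdef] at h3
    nlinarith
  set ρ := finSuccEquiv K 1 r with hρ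
  have hρ0 : ρ ≠ 0 := by simpa [hρ] using hr0
  have hroots : V.image (fun v => (C v : MvPolynomial (Fin 1) K)) ⊆ ρ.roots.toFinset := by
    intro x hx
    obtain ⟨v, hv, rfl⟩ := Finset.mem_image.1 hx
    obtain ⟨z, w, h1, h2⟩ := hV v hv
    rw [Multiset.mem_toFinset, Polynomial.mem_roots hρ0, Polynomial.IsRoot.def]
    have h3 := congrArg (Polynomial.eval₂ (aeval (fun i : Fin 2 => lineMap (v, z, w) i.succ) :
      MvPolynomial (Fin 2) K →ₐ[K] Polynomial K).toRingHom (lineMap (v, z, w) 0)) hPQ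
    rw [Polynomial.eval₂_add, Polynomial.eval₂_mul, Polynomial.eval₂_mul,
      ← aeval_eq_eval₂_finSuccEquiv, ← aeval_eq_eval₂_finSuccEquiv, Polynomial.eval₂_C] at h3
    change restr _ _ * _ + restr _ _ * _ = aeval _ r at h3
    rw [h1, h2, zero_mul, zero_mul, add_zero, aeval_eq_eval₂_finSuccEquiv] at h3
    let e : MvPolynomial (Fin 1) K →ₐ[K] Polynomial K := aeval fun _ => Polynomial.X
    let e' : Polynomial K →ₐ[K] MvPolynomial (Fin 1) K := Polynomial.aeval (X 0)
    have hinj : Function.Injective e := by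
      apply Function.LeftInverse.injective (g := e')
      intro q
      have : (e'.comp e) = AlgHom.id K _ := by
        ext i
        fin_cases i
        simp [e, e']
      exact DFunLike.congr_fun this q
    apply hinj
    rw [map_zero]
    have h4 : (fun i : Fin 1 => lineMap (v, z, w) i.succ.succ) = fun _ => Polynomial.X := by
      funext i
      fin_cases i
      rfl
    have h5 : lineMap (v, z, w) (Fin.succ 0) = e.toRingHom (C v) := by
      simp [e, lineMap]
    rw [h4, h5, Polynomial.eval₂_hom] at h3
    exact h3.symm
  calc V.card = (V.image (fun v => (C v : MvPolynomial (Fin 1) K))).card :=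
        (Finset.card_image_of_injective _ (C_injective _ _)).symm
    _ ≤ ρ.roots.toFinset.card := Finset.card_le_card hroots
    _ ≤ ρ.natDegree := (Multiset.toFinset_card_le _).trans (Polynomial.card_roots' _)
    _ ≤ r.totalDegree := natDegree_finSuccEquiv_le r
    _ ≤ _ := hrdeg

end RuledSurface

namespace Polynomial

lemma eq_zero_of_second_order_relation {K : Type*} [Field K] {p : ℕ} [CharP K p]
    {H b Q₁ Q₂ : K[X]} {c : K} (hrel : b ^ 2 * derivative (derivative H) = H * Q₁ + derivative H * Q₂)
    (hb : b.eval c ≠ 0) (h0 : H.eval c = 0) (h1 : (derivative H).eval c = 0)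
    (hdeg : H.natDegree < p) : H = 0 := by
  by_contra hH
  obtain ⟨h, hfac, hndvd⟩ := exists_eq_pow_rootMultiplicity_mul_and_not_dvd H hH c
  have hmult : 1 < H.rootMultiplicity c :=
    (one_lt_rootMultiplicity_iff_isRoot hH).2 ⟨h0, h1⟩
  obtain ⟨j, hj⟩ : ∃ j, H.rootMultiplicity c = j + 2 := ⟨H.rootMultiplicity c - 2, by omega⟩
  have hjp : j + 2 < p := by
    have h2 := natDegree_le_of_dvd (pow_rootMultiplicity_dvd H c) hH
    rw [natDegree_pow, natDegree_X_sub_C, hj] at h2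
    omega
  rw [hj] at hfac
  have hc1 : ((j + 1 : ℕ) : K) ≠ 0 := fun h =>
    absurd (Nat.le_of_dvd (by omega) ((CharP.cast_eq_zero_iff K p _).1 h)) (by omega)
  have hc2 : ((j + 2 : ℕ) : K) ≠ 0 := fun h =>
    absurd (Nat.le_of_dvd (by omega) ((CharP.cast_eq_zero_iff K p _).1 h)) (by omega)
  set A : K[X] := ((j + 2 : ℕ) : K[X]) * h + (X - C c) * derivative h with hA
  have hH' : derivative H = (X - C c) ^ (j + 1) * A := by
    rw [hfac, hA]
    simp only [derivative_mul, derivative_X_sub_C_pow]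
    push_cast
    simp only [map_add, map_ofNat, map_natCast]
    ring
  have hH'' : derivative (derivative H) =
      (X - C c) ^ j * (((j + 1 : ℕ) : K[X]) * A + (X - C c) * derivative A) := by
    rw [hH']
    simp only [derivative_mul, derivative_X_sub_C_pow]
    push_cast
    simp only [map_add, map_one, map_natCast]
    ring
  have hXc : (X - C c) ^ j ≠ 0 := pow_ne_zero _ (X_sub_C_ne_zero c)
  have key : b ^ 2 * (((j + 1 : ℕ) : K[X]) * A + (X - C c) * derivative A) =
      (X - C c) ^ 2 * h * Q₁ + (X - C c) * A * Q₂ := by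
    apply mul_left_cancel₀ hXc
    have h2 : H = (X - C c) ^ (j + 2) * h := hfac
    rw [hH'', hH'] at hrel
    rw [show (X - C c) ^ j * (b ^ 2 * (((j + 1 : ℕ) : K[X]) * A + (X - C c) * derivative A)) =
      b ^ 2 * ((X - C c) ^ j * (((j + 1 : ℕ) : K[X]) * A + (X - C c) * derivative A)) by ring, hrel, h2]
    ring
  have hev := congrArg (eval c) key
  simp only [eval_mul, eval_add, eval_pow, eval_sub, eval_X, eval_C, sub_self, zero_mul,
    eval_natCast, hA, add_zero, ne_eq, OfNat.ofNat_ne_zero, not_false_eq_true, zero_pow] at hev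
  have hhc : h.eval c ≠ 0 := fun h' => hndvd (dvd_iff_isRoot.2 h')
  exact (mul_ne_zero (pow_ne_zero 2 hb) (mul_ne_zero hc1 (mul_ne_zero hc2 hhc))) hev

end Polynomial

namespace MvPolynomial

variable {K : Type*} [Field K]

lemma totalDegree_pderiv_le {σ : Type*} (i : σ) (f : MvPolynomial σ K) :
    (pderiv i f).totalDegree ≤ f.totalDegree - 1 := by
  refine Finset.sup_le fun m hm => ?_
  rw [mem_support_iff, coeff_pderiv] at hm
  have h1 : m + Finsupp.single i 1 ∈ f.support := by
    rw [mem_support_iff]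
    exact left_ne_zero_of_mul hm
  have h2 := le_totalDegree h1
  rw [Finsupp.sum_add_index' (fun _ => rfl) (fun _ _ _ => rfl), Finsupp.sum_single_index rfl] at h2
  omega

lemma not_dvd_pderiv {σ : Type*} {i : σ} {f : MvPolynomial σ K} (h : pderiv i f ≠ 0) :
    ¬ f ∣ pderiv i f := by
  rintro ⟨q, hq⟩
  have hf : f ≠ 0 := by rintro rfl; simp at h
  have hq0 : q ≠ 0 := by rintro rfl; simp [hq] at h
  have h1 := totalDegree_mul_of_isDomain hf hq0
  have h2 := totalDegree_pderiv_le i f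
  rw [hq, h1] at h2
  have h3 : f.totalDegree = 0 := by omega
  rw [totalDegree_eq_zero_iff_eq_C] at h3
  rw [h3, pderiv_C] at h
  exact h rfl

lemma notMem_vars_of_pderiv_eq_zero {σ : Type*} {p : ℕ} [CharP K p] {i : σ}
    {f : MvPolynomial σ K} (h : pderiv i f = 0) (hdeg : f.totalDegree < p) : i ∉ f.vars := by
  intro hi
  obtain ⟨s, hs, his⟩ := (mem_vars_iff_mem_support i).1 hi
  have hsi : s i ≠ 0 := by simpa using his
  have h1 : coeff (s - Finsupp.single i 1) (pderiv i f) = 0 := by rw [h, coeff_zero]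
  have h2 : s - Finsupp.single i 1 + Finsupp.single i 1 = s :=
    tsub_add_cancel_of_le (by rw [Finsupp.single_le_iff]; omega)
  rw [coeff_pderiv, h2] at h1
  have h3 : coeff s f ≠ 0 := mem_support_iff.1 hs
  have h4 : s i ≤ f.totalDegree := by
    refine le_trans ?_ (le_totalDegree hs)
    exact Finset.single_le_sum (f := fun j => s j) (fun _ _ => Nat.zero_le _) his
  have h5 : (((s - Finsupp.single i 1 : σ →₀ ℕ) i : ℕ) : K) + 1 = (s i : ℕ) := by
    have h6 := DFunLike.congr_fun h2 i
    rw [Finsupp.add_apply, Finsupp.single_eq_same] at h6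
    rw [← h6]
    push_cast
    ring
  rw [h5] at h1
  have h7 : ((s i : ℕ) : K) ≠ 0 := fun h' =>
    absurd (Nat.le_of_dvd (by omega) ((CharP.cast_eq_zero_iff K p _).1 h')) (by omega)
  exact mul_ne_zero h3 h7 h1

lemma derivative_aeval {σ : Type*} [Fintype σ] (g : σ → Polynomial K) (f : MvPolynomial σ K) :
    Polynomial.derivative (aeval g f) =
      ∑ i, aeval g (pderiv i f) * Polynomial.derivative (g i) := by
  induction f using MvPolynomial.induction_on with
  | C a => simp [← algebraMap_eq]
  | add p q hp hq => simp only [map_add, hp, hq, add_mul, Finset.sum_add_distrib]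
  | mul_X p j hp =>
    have h1 : ∀ i, aeval g (pderiv i (p * X j)) * Polynomial.derivative (g i) =
        g j * (aeval g (pderiv i p) * Polynomial.derivative (g i)) +
          if i = j then aeval g p * Polynomial.derivative (g j) else 0 := by
      intro i
      rw [pderiv_mul, map_add, map_mul, map_mul, aeval_X]
      split_ifs with h
      · subst h
        rw [pderiv_X_self, map_one]
        ring
      · rw [pderiv_X_of_ne (Ne.symm h), map_zero]
        ring
    simp only [h1, Finset.sum_add_distrib, Finset.sum_ite_eq', Finset.mem_univ, if_true,
      ← Finset.mul_sum, ← hp]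
    rw [map_mul, aeval_X, Polynomial.derivative_mul]
    ring

end MvPolynomial

namespace RuledSurface

open MvPolynomial

variable {K : Type*} [Field K]

/-- Interchange of the coordinates `X₀` and `X₁`. -/
noncomputable def swap : MvPolynomial (Fin 3) K ≃ₐ[K] MvPolynomial (Fin 3) K :=
  renameEquiv K (Equiv.swap 0 1)

lemma swap_swap (f : MvPolynomial (Fin 3) K) : swap (swap f) = f := by
  simp only [swap, renameEquiv_apply, rename_rename]
  rw [show (⇑(Equiv.swap (0 : Fin 3) 1) ∘ ⇑(Equiv.swap (0 : Fin 3) 1)) = id from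
    funext fun i => by simp]
  simp

lemma totalDegree_swap (f : MvPolynomial (Fin 3) K) :
    (swap f).totalDegree = f.totalDegree :=
  totalDegree_renameEquiv _ f

lemma irreducible_swap {f : MvPolynomial (Fin 3) K} (h : Irreducible f) : Irreducible (swap f) :=
  (MulEquiv.irreducible_iff (swap (K := K))).2 h

lemma pderiv_zero_swap (f : MvPolynomial (Fin 3) K) : pderiv 0 (swap f) = swap (pderiv 1 f) := by
  have := pderiv_rename (R := K) (Equiv.swap (0 : Fin 3) 1).injective 1 f
  rwa [Equiv.swap_apply_right] at this

lemma eval_restr (l : K × K × K) (f : MvPolynomial (Fin 3) K) (t : K) :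
    (restr l f).eval t = eval ![l.2.1 + l.2.2 * t, l.1, t] f := by
  have h : (Polynomial.evalRingHom t).comp (restr l).toRingHom =
      eval ![l.2.1 + l.2.2 * t, l.1, t] := by
    apply MvPolynomial.ringHom_ext
    · intro a
      simp [restr]
    · intro i
      fin_cases i <;> simp [restr, lineMap]
  exact RingHom.congr_fun h f

lemma eval_restr_swap (l : K × K × K) (f : MvPolynomial (Fin 3) K) (t : K) :
    (restr l (swap f)).eval t = eval ![l.1, l.2.1 + l.2.2 * t, t] f := by
  rw [eval_restr, swap, renameEquiv_apply, eval_rename]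
  congr 2
  funext i
  fin_cases i <;> rfl

lemma natDegree_restr_le (l : K × K × K) (f : MvPolynomial (Fin 3) K) :
    (restr l f).natDegree ≤ f.totalDegree := by
  have := MvPolynomial.aeval_natDegree_le f le_rfl (lineMap l) (n := 1) (fun i => by
    fin_cases i
    · simp only [lineMap]
      exact (Polynomial.natDegree_add_le _ _).trans (by
        simpa using (Polynomial.natDegree_C_mul_le _ _).trans Polynomial.natDegree_X_le)
    · simp [lineMap]
    · simp [lineMap])
  simpa [restr] using this

lemma derivative_restr (l : K × K × K) (f : MvPolynomial (Fin 3) K) :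
    Polynomial.derivative (restr l f) =
      Polynomial.C l.2.2 * restr l (pderiv 0 f) + restr l (pderiv 2 f) := by
  rw [restr, derivative_aeval, Fin.sum_univ_three]
  simp [lineMap]
  ring

/-- The numerator of the curvature of the planar sections `X₁ = const` of the surface `f = 0`. -/
noncomputable def curv (f : MvPolynomial (Fin 3) K) : MvPolynomial (Fin 3) K :=
  pderiv 0 f ^ 2 * pderiv 2 (pderiv 2 f)
    - pderiv 0 f * pderiv 2 f * (pderiv 0 (pderiv 2 f) + pderiv 2 (pderiv 0 f))
    + pderiv 2 f ^ 2 * pderiv 0 (pderiv 0 f)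

lemma totalDegree_curv_le (f : MvPolynomial (Fin 3) K) :
    (curv f).totalDegree ≤ 3 * f.totalDegree := by
  have h1 : ∀ i, (pderiv i f).totalDegree ≤ f.totalDegree := fun i =>
    (totalDegree_pderiv_le i f).trans (Nat.sub_le _ _)
  have h2 : ∀ i j, (pderiv i (pderiv j f)).totalDegree ≤ f.totalDegree := fun i j =>
    ((totalDegree_pderiv_le i _).trans (Nat.sub_le _ _)).trans (h1 j)
  have h3 : ∀ a b c : MvPolynomial (Fin 3) K, a.totalDegree ≤ f.totalDegree →
      b.totalDegree ≤ f.totalDegree → c.totalDegree ≤ f.totalDegree →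
      (a * b * c).totalDegree ≤ 3 * f.totalDegree := by
    intro a b c ha hb hc
    have := totalDegree_mul (a * b) c
    have := totalDegree_mul a b
    omega
  rw [curv, pow_two, pow_two]
  refine (totalDegree_add _ _).trans (max_le ((totalDegree_sub _ _).trans (max_le ?_ ?_)) ?_)
  · exact h3 _ _ _ (h1 _) (h1 _) (h2 _ _)
  · exact h3 _ _ _ (h1 _) (h1 _) ((totalDegree_add _ _).trans (max_le (h2 _ _) (h2 _ _)))
  · exact h3 _ _ _ (h1 _) (h1 _) (h2 _ _)

lemma sq_mul_derivative_derivative_restr (l : K × K × K) (f : MvPolynomial (Fin 3) K) :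
    restr l (pderiv 0 f) ^ 2 * Polynomial.derivative (Polynomial.derivative (restr l f)) =
      restr l (curv f) + Polynomial.derivative (restr l f) *
        ((Polynomial.derivative (restr l f) - 2 * restr l (pderiv 2 f)) *
          restr l (pderiv 0 (pderiv 0 f)) + restr l (pderiv 0 f) *
          (restr l (pderiv 0 (pderiv 2 f)) + restr l (pderiv 2 (pderiv 0 f)))) := by
  simp only [curv, map_add, map_sub, map_mul, map_pow, derivative_restr,
    Polynomial.derivative_C_mul]
  ring

lemma restr_curv_eq_zero {l : K × K × K} {f : MvPolynomial (Fin 3) K} (h : restr l f = 0) :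
    restr l (curv f) = 0 := by
  have := sq_mul_derivative_derivative_restr l f
  simpa [h] using this.symm

/-- If the curvature vanishes on the surface, the tangent line to a planar section at a regular
point lies on the surface. -/
lemma restr_tangent_eq_zero {p : ℕ} [CharP K p] {f : MvPolynomial (Fin 3) K} (hruled : f ∣ curv f)
    (hdeg : f.totalDegree < p) {s v t m : K} (hf : eval ![s, v, t] f = 0)
    (h0 : eval ![s, v, t] (pderiv 0 f) ≠ 0)
    (hm : eval ![s, v, t] (pderiv 2 f) + m * eval ![s, v, t] (pderiv 0 f) = 0) :
    restr (v, s - m * t, m) f = 0 := by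
  obtain ⟨q, hq⟩ := hruled
  set l : K × K × K := (v, s - m * t, m) with hl
  have hpt : ![l.2.1 + l.2.2 * t, l.1, t] = ![s, v, t] := by simp [hl]
  have hd : Polynomial.derivative (restr l f) =
    Polynomial.C m * restr l (pderiv 0 f) + restr l (pderiv 2 f) := derivative_restr l f
  refine Polynomial.eq_zero_of_second_order_relation (p := p) (b := restr l (pderiv 0 f))
    (Q₁ := restr l q) (c := t) (by
      rw [← map_mul, ← hq]
      exact sq_mul_derivative_derivative_restr l f) ?_ ?_ ?_
    ((natDegree_restr_le _ _).trans_lt hdeg)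
  · rwa [eval_restr, hpt]
  · rwa [eval_restr, hpt]
  · rw [hd, Polynomial.eval_add, Polynomial.eval_mul, Polynomial.eval_C, eval_restr, eval_restr,
      hpt, add_comm]
    exact hm

/-- The line `{(z + w t, v, t)}` given by `(v, z, w)` meets the line `{(s, e + u t, t)}` given by
`(s, e, u)`. -/
def Meets (r b : K × K × K) : Prop :=
  (r.1 - b.2.1) * r.2.2 = (b.1 - r.2.1) * b.2.2

lemma meets_comm (r b : K × K × K) : Meets r b ↔ Meets b r := eq_comm

lemma card_meets_le {g : MvPolynomial (Fin 3) K} {r : K × K × K} (hr : restr r g ≠ 0)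
    (hw : r.2.2 ≠ 0) {B : Finset (K × K × K)} (hB : Set.InjOn Prod.fst (B : Set (K × K × K)))
    (hBg : ∀ b ∈ B, restr b (swap g) = 0) :
    (B.filter fun b => Meets r b).card ≤ g.totalDegree := by
  refine le_trans ?_ (natDegree_restr_le r g)
  refine le_trans ?_ ((Multiset.toFinset_card_le _).trans (Polynomial.card_roots' _))
  refine Finset.card_le_card_of_injOn (fun b => (b.1 - r.2.1) / r.2.2) ?_ ?_
  · intro b hb
    obtain ⟨hbB, hm⟩ := Finset.mem_filter.1 hb
    rw [Finset.mem_coe, Multiset.mem_toFinset, Polynomial.mem_roots hr, Polynomial.IsRoot.def]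
    have h1 := congrArg (Polynomial.eval ((b.1 - r.2.1) / r.2.2)) (hBg b hbB)
    rw [eval_restr_swap, Polynomial.eval_zero] at h1
    rw [eval_restr, ← h1]
    congr 2
    unfold Meets at hm
    have e1 : r.2.1 + r.2.2 * ((b.1 - r.2.1) / r.2.2) = b.1 := by field_simp; ring
    have e2 : b.2.1 + b.2.2 * ((b.1 - r.2.1) / r.2.2) = r.1 := by
      rw [← mul_div_assoc, mul_comm b.2.2, ← hm]; field_simp; ring
    rw [e1, e2]
  · intro b hb b' hb' h
    have h1 : b.1 = b'.1 := by
      simp only at h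
      rw [div_left_inj' hw] at h
      simpa using h
    exact hB (Finset.mem_filter.1 hb).1 (Finset.mem_filter.1 hb').1 h1

/-- On a surface ruled by lines of the first family, a line of the second family which is not
singular meets almost all lines of the first family. -/
lemma card_not_meets_le [Infinite K] {p : ℕ} [CharP K p] {f : MvPolynomial (Fin 3) K}
    (hf : Irreducible f) (hruled : f ∣ curv f) (hdeg : f.totalDegree < p) {b : K × K × K}
    (hu : b.2.2 ≠ 0) (hb : restr b (swap f) = 0) (hb0 : restr b (swap (pderiv 0 f)) ≠ 0)
    {R : Finset (K × K × K)} (hR : Set.InjOn Prod.fst (R : Set (K × K × K)))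
    (hRf : ∀ r ∈ R, restr r f = 0) :
    (R.filter fun r => ¬ Meets r b).card ≤ f.totalDegree := by
  obtain ⟨s, e, u⟩ := b
  simp only at hu
  set α := restr (s, e, u) (swap (pderiv 2 f)) with hα
  set β := restr (s, e, u) (swap (pderiv 0 f)) with hβ
  have hf0 : pderiv 0 f ≠ 0 := by
    intro h
    rw [hβ, h, map_zero, map_zero] at hb0
    exact hb0 rfl
  let τ : MvPolynomial (Fin 3) K := C u⁻¹ * (X 1 - C e)
  let lam : MvPolynomial (Fin 3) K :=
    Polynomial.aeval τ α * (X 2 - τ) + Polynomial.aeval τ β * (X 0 - C s)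
  have hτ : ∀ l : K × K × K, restr l τ = Polynomial.C ((l.1 - e) / u) := by
    intro l
    simp only [τ, restr, map_mul, map_sub, aeval_X, ← algebraMap_eq, AlgHom.commutes]
    simp only [lineMap, Polynomial.algebraMap_eq]
    simp only [Matrix.cons_val_one, Matrix.cons_val_zero]
    rw [← Polynomial.C_sub, ← Polynomial.C_mul, div_eq_inv_mul]
  have hcomp : ∀ (l : K × K × K) (q : Polynomial K),
      restr l (Polynomial.aeval τ q) = Polynomial.C (q.eval ((l.1 - e) / u)) := by
    intro l q
    rw [← Polynomial.aeval_algHom_apply, hτ, ← Polynomial.algebraMap_eq,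
      Polynomial.aeval_algebraMap_apply]
    rfl
  have hlam : ∀ l : K × K × K, restr l lam =
      Polynomial.C (α.eval ((l.1 - e) / u)) * (Polynomial.X - Polynomial.C ((l.1 - e) / u)) +
      Polynomial.C (β.eval ((l.1 - e) / u)) *
        (Polynomial.C l.2.1 + Polynomial.C l.2.2 * Polynomial.X - Polynomial.C s) := by
    intro l
    simp only [lam, map_add, map_mul, map_sub, hcomp, hτ]
    simp [restr, lineMap]
  have hdvd : f ∣ lam := by
    by_contra hnd
    have hfin : {v : K | β.eval ((v - e) / u) = 0}.Finite := by
      have h1 : {v : K | β.eval ((v - e) / u) = 0} ⊆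
          (fun t => u * t + e) '' (β.roots.toFinset : Set K) := by
        intro v hv
        refine ⟨(v - e) / u, ?_, by field_simp; ring⟩
        rw [Finset.mem_coe, Multiset.mem_toFinset, Polynomial.mem_roots hb0]
        exact hv
      exact (Set.Finite.image _ (Finset.finite_toSet _)).subset h1
    obtain ⟨V, hVsub, hVcard⟩ := hfin.infinite_compl.exists_subset_card_eq
      (2 * (f.totalDegree * lam.totalDegree) + 1)
    have := card_planes_le hf hf0 hnd V (fun v hv => by
      have hv0 : β.eval ((v - e) / u) ≠ 0 := hVsub hv
      set t := (v - e) / u with ht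
      set m := - (α.eval t / β.eval t) with hm
      have hvt : e + u * t = v := by rw [ht]; field_simp; ring
      refine ⟨s - m * t, m, ?_, ?_⟩
      · refine restr_tangent_eq_zero (p := p) hruled hdeg ?_ ?_ ?_
        · have := congrArg (Polynomial.eval t) hb
          rw [eval_restr_swap, Polynomial.eval_zero] at this
          simpa [hvt] using this
        · rw [hβ, eval_restr_swap] at hv0
          simpa [hvt] using hv0
        · have e1 : eval ![s, v, t] (pderiv 2 f) = α.eval t := by
            rw [hα, eval_restr_swap]; simp [hvt]
          have e2 : eval ![s, v, t] (pderiv 0 f) = β.eval t := by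
            rw [hβ, eval_restr_swap]; simp [hvt]
          rw [e1, e2, hm]
          field_simp
          ring
      · rw [hlam]
        simp only
        rw [← ht]
        have e3 : α.eval t = - m * β.eval t := by rw [hm]; field_simp
        rw [e3]
        simp only [Polynomial.C_mul, Polynomial.C_neg, Polynomial.C_sub]
        ring)
    omega
  have hD : β.natDegree ≤ f.totalDegree := by
    refine (natDegree_restr_le _ _).trans ?_
    rw [totalDegree_swap]
    exact (totalDegree_pderiv_le _ _).trans (Nat.sub_le _ _)
  refine le_trans ?_ hD
  refine le_trans ?_ ((Multiset.toFinset_card_le _).trans (Polynomial.card_roots' _))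
  refine Finset.card_le_card_of_injOn (fun r => (r.1 - e) / u) ?_ ?_
  · intro r hr
    obtain ⟨hrR, hm⟩ := Finset.mem_filter.1 hr
    rw [Finset.mem_coe, Multiset.mem_toFinset, Polynomial.mem_roots hb0, Polynomial.IsRoot.def]
    by_contra hne
    apply hm
    obtain ⟨q, hq⟩ := hdvd
    have h1 : restr r lam = 0 := by rw [hq, map_mul, hRf r hrR, zero_mul]
    rw [hlam] at h1
    have h2 := congrArg (Polynomial.eval ((r.1 - e) / u)) h1
    simp only [Polynomial.eval_add, Polynomial.eval_mul, Polynomial.eval_C, Polynomial.eval_sub,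
      Polynomial.eval_X, sub_self, mul_zero, zero_add, Polynomial.eval_zero] at h2
    have h3 := (mul_eq_zero.1 h2).resolve_left hne
    unfold Meets
    simp only
    field_simp at h3
    linear_combination h3
  · intro r hr r' hr' h
    have h1 : r.1 = r'.1 := by
      simp only at h
      rw [div_left_inj' hu] at h
      simpa using h
    exact hR (Finset.mem_filter.1 hr).1 (Finset.mem_filter.1 hr').1 h1

end RuledSurface

namespace RuledSurface

open MvPolynomial

variable {K : Type*} [Field K]

lemma eval_eq_of_notMem_vars {f : MvPolynomial (Fin 3) K} {x y : Fin 3 → K}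
    (h : ∀ i, i ∈ f.vars → x i = y i) : eval x f = eval y f :=
  eval₂Hom_congr' rfl (fun i hi _ => h i hi) rfl

lemma pderiv_zero_ne_zero [Infinite K] {p : ℕ} [CharP K p] {f : MvPolynomial (Fin 3) K}
    (hf : Irreducible f) (hdeg : f.totalDegree < p) {r b : K × K × K} (hu : b.2.2 ≠ 0)
    (hr : restr r f = 0) (hb : restr b (swap f) = 0) : pderiv 0 f ≠ 0 := by
  intro h0
  have hv0 := notMem_vars_of_pderiv_eq_zero (p := p) h0 hdeg
  have hr' : ∀ x t, eval ![x, r.1, t] f = 0 := by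
    intro x t
    have h1 := congrArg (Polynomial.eval t) hr
    rw [eval_restr, Polynomial.eval_zero] at h1
    rw [← h1]
    refine eval_eq_of_notMem_vars fun i hi => ?_
    fin_cases i
    · exact absurd hi hv0
    · rfl
    · rfl
  by_cases h1 : pderiv 1 f = 0
  · have hv1 := notMem_vars_of_pderiv_eq_zero (p := p) h1 hdeg
    apply hf.ne_zero
    apply MvPolynomial.funext
    intro x
    rw [map_zero, ← hr' 0 (x 2)]
    refine eval_eq_of_notMem_vars fun i hi => ?_
    fin_cases i
    · exact absurd hi hv0
    · exact absurd hi hv1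
    · rfl
  · obtain ⟨s, e, u⟩ := b
    simp only at hu
    have hsw : pderiv 0 (swap f) ≠ 0 := by
      rw [pderiv_zero_swap]
      simpa using h1
    set h : MvPolynomial (Fin 3) K := X 0 - C e - C u * X 2 with hh
    have hdvd : swap f ∣ h := by
      by_contra hnd
      obtain ⟨V, hV⟩ := Infinite.exists_subset_card_eq K
        (2 * ((swap f).totalDegree * h.totalDegree) + 1)
      have := card_planes_le (irreducible_swap hf) hsw hnd V (fun v _ => by
        refine ⟨e, u, ?_, ?_⟩
        · apply Polynomial.funext
          intro t
          have h2 := congrArg (Polynomial.eval t) hb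
          rw [eval_restr_swap, Polynomial.eval_zero] at h2
          rw [eval_restr_swap, Polynomial.eval_zero, ← h2]
          refine eval_eq_of_notMem_vars fun i hi => ?_
          fin_cases i
          · exact absurd hi hv0
          · rfl
          · rfl
        · simp only [hh, restr, map_sub, map_mul, aeval_X, ← algebraMap_eq, AlgHom.commutes]
          simp [lineMap])
      omega
    obtain ⟨q, hq⟩ := hdvd
    have key : ∀ t, r.1 - e - u * t = 0 := by
      intro t
      have h2 := congrArg (eval ![r.1, 0, t]) hq
      have h3 : eval ![r.1, 0, t] (swap f) = 0 := by
        have := hr' 0 t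
        rw [swap, renameEquiv_apply, eval_rename]
        refine Eq.trans ?_ this
        congr 2
        funext i
        fin_cases i <;> rfl
      rw [map_mul, h3, zero_mul] at h2
      simpa [hh] using h2
    have h0 := key 0
    have h1 := key 1
    apply hu
    linear_combination h0 - h1

lemma pderiv_one_ne_zero [Infinite K] {p : ℕ} [CharP K p] {f : MvPolynomial (Fin 3) K}
    (hf : Irreducible f) (hdeg : f.totalDegree < p) {r b : K × K × K} (hw : r.2.2 ≠ 0)
    (hr : restr r f = 0) (hb : restr b (swap f) = 0) : pderiv 1 f ≠ 0 := by
  have := pderiv_zero_ne_zero (p := p) (irreducible_swap hf) (by rwa [totalDegree_swap]) hw hb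
    (by rwa [swap_swap])
  rw [pderiv_zero_swap] at this
  simpa using this

/-- A family of lines with nonzero slopes, at most one in each plane of the pencil. -/
def Transversal (R : Finset (K × K × K)) : Prop :=
  Set.InjOn Prod.fst (R : Set (K × K × K)) ∧ ∀ r ∈ R, r.2.2 ≠ 0

lemma Transversal.mono {R R' : Finset (K × K × K)} (h : Transversal R) (hs : R' ⊆ R) :
    Transversal R' :=
  ⟨h.1.mono (Finset.coe_subset.2 hs), fun r hr => h.2 r (hs hr)⟩

/-- Any two lines of `B` have at most `κ` common neighbours in `R`. -/
def CodegreeLE (κ : ℕ) (R B : Finset (K × K × K)) : Prop :=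
  ∀ b₁ ∈ B, ∀ b₂ ∈ B, b₁ ≠ b₂ → (R.filter fun r => Meets r b₁ ∧ Meets r b₂).card ≤ κ

lemma CodegreeLE.mono {κ : ℕ} {R R' B B' : Finset (K × K × K)} (h : CodegreeLE κ R B)
    (hR : R' ⊆ R) (hB : B' ⊆ B) : CodegreeLE κ R' B' := fun b₁ h₁ b₂ h₂ hne =>
  (Finset.card_le_card (Finset.filter_subset_filter _ hR)).trans (h b₁ (hB h₁) b₂ (hB h₂) hne)

/-- The number of incident pairs. -/
noncomputable def inc (R B : Finset (K × K × K)) : ℕ :=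
  ∑ r ∈ R, (B.filter fun b => Meets r b).card

lemma inc_comm (R B : Finset (K × K × K)) : inc R B = inc B R := by
  unfold inc
  have := Finset.sum_card_bipartiteAbove_eq_sum_card_bipartiteBelow (s := R) (t := B)
    (fun r b => Meets r b)
  simp only [Finset.bipartiteAbove, Finset.bipartiteBelow] at this
  rw [this]
  simp only [meets_comm]

lemma inc_le_mul_of_forall {R B : Finset (K × K × K)} {D : ℕ}
    (h : ∀ r ∈ R, (B.filter fun b => Meets r b).card ≤ D) : inc R B ≤ R.card * D := by
  exact Finset.sum_le_card_nsmul R _ D h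

lemma inc_le_mul (R B : Finset (K × K × K)) : inc R B ≤ R.card * B.card :=
  inc_le_mul_of_forall fun _ _ => Finset.card_filter_le _ _

lemma inc_filter_add (R B : Finset (K × K × K)) (P : K × K × K → Prop)
    [DecidablePred P] [DecidablePred fun r => ¬ P r] :
    inc (R.filter P) B + inc (R.filter fun r => ¬ P r) B = inc R B :=
  Finset.sum_filter_add_sum_filter_not R P _

lemma inc_add_filter (R B : Finset (K × K × K)) (P : K × K × K → Prop)
    [DecidablePred P] [DecidablePred fun r => ¬ P r] :
    inc R (B.filter P) + inc R (B.filter fun r => ¬ P r) = inc R B := by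
  rw [inc_comm, inc_comm R (B.filter _), inc_comm R B]
  exact inc_filter_add B R P

lemma Transversal.card_le {f g : MvPolynomial (Fin 3) K} (hf : Irreducible f)
    (hf0 : pderiv 0 f ≠ 0) (hfg : ¬ f ∣ g) {R : Finset (K × K × K)} (hR : Transversal R)
    (hRf : ∀ r ∈ R, restr r f = 0) (hRg : ∀ r ∈ R, restr r g = 0) :
    R.card ≤ 2 * (f.totalDegree * g.totalDegree) := by
  rw [← Finset.card_image_of_injOn hR.1]
  refine card_planes_le hf hf0 hfg _ fun v hv => ?_
  obtain ⟨r, hr, rfl⟩ := Finset.mem_image.1 hv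
  exact ⟨r.2.1, r.2.2, hRf r hr, hRg r hr⟩

lemma CodegreeLE.card_le_of_dense {κ : ℕ} {R B : Finset (K × K × K)} (h : CodegreeLE κ R B)
    (hB : 8 ≤ B.card) (hR : ∀ r ∈ R, B.card ≤ 2 * (B.filter fun b => Meets r b).card) :
    R.card ≤ 8 * κ := by
  have h1 : ∑ r ∈ R, (B.filter fun b => Meets r b).offDiag.card ≤ κ * B.card ^ 2 := by
    have h2 : ∀ r ∈ R, (B.filter fun b => Meets r b).offDiag.card =
        (B.offDiag.filter fun q => Meets r q.1 ∧ Meets r q.2).card := by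
      intro r _
      congr 1
      ext q
      simp only [Finset.mem_offDiag, Finset.mem_filter]
      tauto
    rw [Finset.sum_congr rfl h2]
    have h3 := Finset.sum_card_bipartiteAbove_eq_sum_card_bipartiteBelow (s := R) (t := B.offDiag)
      (fun r q => Meets r q.1 ∧ Meets r q.2)
    simp only [Finset.bipartiteAbove, Finset.bipartiteBelow] at h3
    rw [h3]
    calc _ ≤ B.offDiag.card • κ := Finset.sum_le_card_nsmul _ _ _ fun q hq => by
          rw [Finset.mem_offDiag] at hq
          exact h _ hq.1 _ hq.2.1 hq.2.2
      _ ≤ κ * B.card ^ 2 := by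
          rw [smul_eq_mul, mul_comm, Finset.offDiag_card, pow_two]
          exact Nat.mul_le_mul_left _ (Nat.sub_le _ _)
  have h4 : ∀ r ∈ R, B.card ^ 2 ≤ 8 * (B.filter fun b => Meets r b).offDiag.card := by
    intro r hr
    have h5 := hR r hr
    rw [Finset.offDiag_card]
    generalize (B.filter fun b => Meets r b).card = x at h5 ⊢
    have : x * x - x = x * (x - 1) := by rw [Nat.mul_sub, mul_one]
    rw [this]
    obtain ⟨y, rfl⟩ : ∃ y, x = y + 4 := ⟨x - 4, by omega⟩
    have : y + 4 - 1 = y + 3 := rfl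
    rw [this]
    nlinarith
  have h6 : R.card * B.card ^ 2 ≤ 8 * κ * B.card ^ 2 := by
    calc R.card * B.card ^ 2 = ∑ r ∈ R, B.card ^ 2 := by simp
      _ ≤ ∑ r ∈ R, 8 * (B.filter fun b => Meets r b).offDiag.card := Finset.sum_le_sum h4
      _ = 8 * ∑ r ∈ R, (B.filter fun b => Meets r b).offDiag.card := by rw [Finset.mul_sum]
      _ ≤ 8 * (κ * B.card ^ 2) := Nat.mul_le_mul_left _ h1
      _ = _ := by ring
  exact Nat.le_of_mul_le_mul_right h6 (by positivity)

set_option maxHeartbeats 400000 in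
/-- Incidences on an irreducible surface, up to the incidences of small subfamilies. -/
lemma exists_inc_le_of_irreducible [Infinite K] {p : ℕ} [CharP K p] {f : MvPolynomial (Fin 3) K}
    (hf : Irreducible f) (hdeg : f.totalDegree < p) {R B : Finset (K × K × K)}
    (hR : Transversal R) (hB : Transversal B) {κ : ℕ} (hκ : CodegreeLE κ R B)
    (hRf : ∀ r ∈ R, restr r f = 0) (hBf : ∀ b ∈ B, restr b (swap f) = 0) :
    ∃ R' ⊆ R, ∃ B' ⊆ B, R'.card ≤ (3 * f.totalDegree) ^ 2 ∧ B'.card ≤ (3 * f.totalDegree) ^ 2 ∧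
      inc R B ≤ 10 * f.totalDegree * (R.card + B.card) + 8 * κ * B.card + inc R' B' := by
  set D := f.totalDegree with hD
  rcases R.eq_empty_or_nonempty with rfl | ⟨r₀, hr₀⟩
  · exact ⟨∅, by simp, ∅, by simp, by simp, by simp, by simp [inc]⟩
  rcases B.eq_empty_or_nonempty with rfl | ⟨b₀, hb₀⟩
  · exact ⟨∅, by simp, ∅, by simp, by simp, by simp, by simp [inc]⟩
  have hf0 : pderiv 0 f ≠ 0 :=
    pderiv_zero_ne_zero (p := p) hf hdeg (hB.2 _ hb₀) (hRf _ hr₀) (hBf _ hb₀)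
  have hf1 : pderiv 1 f ≠ 0 :=
    pderiv_one_ne_zero (p := p) hf hdeg (hR.2 _ hr₀) (hRf _ hr₀) (hBf _ hb₀)
  have hsf0 : pderiv 0 (swap f) ≠ 0 := by rw [pderiv_zero_swap]; simpa using hf1
  have hsf : Irreducible (swap f) := irreducible_swap hf
  have hswap_dvd : ∀ g, swap f ∣ swap g ↔ f ∣ g := fun g => map_dvd_iff (swap (K := K))
  have hD1 : 1 ≤ D := by
    by_contra h
    have h0 : f.totalDegree = 0 := by omega
    rw [totalDegree_eq_zero_iff_eq_C] at h0
    rw [h0, pderiv_C] at hf0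
    exact hf0 rfl
  have hpd : ∀ i, (pderiv i f).totalDegree ≤ D := fun i =>
    (totalDegree_pderiv_le i f).trans (Nat.sub_le _ _)
  have hsmall : ∀ g, ¬ f ∣ g → g.totalDegree ≤ D → ∀ R' ⊆ R, ∀ B' ⊆ B,
      (∀ r ∈ R', restr r g = 0) → (∀ b ∈ B', restr b (swap g) = 0) →
      R'.card ≤ (3 * D) ^ 2 ∧ B'.card ≤ (3 * D) ^ 2 := by
    intro g hg hgd R' hR' B' hB' hr hb
    constructor
    · have := (hR.mono hR').card_le hf hf0 hg (fun r h => hRf r (hR' h)) hr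
      nlinarith
    · have := (hB.mono hB').card_le hsf hsf0 (mt (hswap_dvd g).1 hg) (fun r h => hBf r (hB' h)) hb
      rw [totalDegree_swap, totalDegree_swap] at this
      nlinarith
  by_cases hred : f ∣ curv f
  · set g := pderiv 0 f with hg
    have hng : ¬ f ∣ g := not_dvd_pderiv hf0
    set R₂ := R.filter fun r => restr r g = 0 with hR₂
    set B₂ := B.filter fun b => restr b (swap g) = 0 with hB₂
    set R₁ := R.filter fun r => ¬ restr r g = 0 with hR₁
    set B₁ := B.filter fun b => ¬ restr b (swap g) = 0 with hB₁
    have hB₁s : B₁ ⊆ B := Finset.filter_subset _ _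
    have hB₂s : B₂ ⊆ B := Finset.filter_subset _ _
    have hR₁s : R₁ ⊆ R := Finset.filter_subset _ _
    obtain ⟨hc1, hc2⟩ := hsmall g hng (hpd 0) R₂ (Finset.filter_subset _ _) B₂ hB₂s
      (fun r hr => (Finset.mem_filter.1 hr).2) (fun r hr => (Finset.mem_filter.1 hr).2)
    refine ⟨R₂, Finset.filter_subset _ _, B₂, hB₂s, hc1, hc2, ?_⟩
    have hsplit1 : inc R B₂ + inc R B₁ = inc R B :=
      inc_add_filter R B fun b => restr b (swap g) = 0
    have hsplit2 : inc R₂ B₂ + inc R₁ B₂ = inc R B₂ :=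
      inc_filter_add R B₂ fun r => restr r g = 0
    have hi1 : inc R B₁ ≤ R.card + (2 * D + κ) * B.card := by
      by_cases hcard : B₁.card ≤ 1
      · calc inc R B₁ ≤ R.card * B₁.card := inc_le_mul _ _
          _ ≤ R.card * 1 := Nat.mul_le_mul_left _ hcard
          _ ≤ _ := by omega
      · obtain ⟨b₁, hb₁, b₂, hb₂, hne⟩ := Finset.one_lt_card.1 (not_le.1 hcard)
        have hm : ∀ b ∈ B₁, (R.filter fun r => ¬ Meets r b).card ≤ D := fun b hb =>
          card_not_meets_le (p := p) hf hred hdeg (hB.2 b (hB₁s hb)) (hBf b (hB₁s hb))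
            (Finset.mem_filter.1 hb).2 hR.1 hRf
        have hcover : R ⊆ (R.filter fun r => ¬ Meets r b₁) ∪ ((R.filter fun r => ¬ Meets r b₂) ∪
            (R.filter fun r => Meets r b₁ ∧ Meets r b₂)) := by
          intro r hr
          simp only [Finset.mem_union, Finset.mem_filter, hr, true_and]
          tauto
        have h1 := Finset.card_le_card hcover
        have h2 := Finset.card_union_le (R.filter fun r => ¬ Meets r b₁)
          ((R.filter fun r => ¬ Meets r b₂) ∪ (R.filter fun r => Meets r b₁ ∧ Meets r b₂))
        have h3 := Finset.card_union_le (R.filter fun r => ¬ Meets r b₂)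
          (R.filter fun r => Meets r b₁ ∧ Meets r b₂)
        have h4 := hm b₁ hb₁
        have h5 := hm b₂ hb₂
        have h6 := hκ b₁ (hB₁s hb₁) b₂ (hB₁s hb₂) hne
        have h7 : R.card ≤ 2 * D + κ := by omega
        calc inc R B₁ ≤ R.card * B₁.card := inc_le_mul _ _
          _ ≤ (2 * D + κ) * B.card := Nat.mul_le_mul h7 (Finset.card_le_card hB₁s)
          _ ≤ _ := by omega
    have hi2 : inc R₁ B₂ ≤ R.card * D := by
      refine (inc_le_mul_of_forall (D := D) fun r hr => ?_).trans
        (Nat.mul_le_mul_right _ (Finset.card_le_card hR₁s))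
      exact (card_meets_le (Finset.mem_filter.1 hr).2 (hR.2 r (hR₁s hr)) (hB.mono hB₂s).1
        fun b hb => (Finset.mem_filter.1 hb).2).trans (hpd 0)
    nlinarith [Nat.zero_le R.card, Nat.zero_le B.card, Nat.zero_le (κ * B.card),
      Nat.mul_le_mul_right R.card hD1]
  by_cases hblue : swap f ∣ curv (swap f)
  · set g := pderiv 1 f with hg
    have hng : ¬ f ∣ g := not_dvd_pderiv hf1
    set R₂ := R.filter fun r => restr r g = 0 with hR₂
    set B₂ := B.filter fun b => restr b (swap g) = 0 with hB₂
    set R₁ := R.filter fun r => ¬ restr r g = 0 with hR₁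
    set B₁ := B.filter fun b => ¬ restr b (swap g) = 0 with hB₁
    have hB₁s : B₁ ⊆ B := Finset.filter_subset _ _
    have hR₁s : R₁ ⊆ R := Finset.filter_subset _ _
    have hR₂s : R₂ ⊆ R := Finset.filter_subset _ _
    obtain ⟨hc1, hc2⟩ := hsmall g hng (hpd 1) R₂ hR₂s B₂ (Finset.filter_subset _ _)
      (fun r hr => (Finset.mem_filter.1 hr).2) (fun r hr => (Finset.mem_filter.1 hr).2)
    refine ⟨R₂, hR₂s, B₂, Finset.filter_subset _ _, hc1, hc2, ?_⟩
    have hsplit1 : inc R₂ B + inc R₁ B = inc R B :=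
      inc_filter_add R B fun r => restr r g = 0
    have hsplit2 : inc R₂ B₂ + inc R₂ B₁ = inc R₂ B :=
      inc_add_filter R₂ B fun b => restr b (swap g) = 0
    have hi1 : inc R₁ B ≤ 10 * D * R.card + 8 * κ * B.card := by
      by_cases hcard : B.card ≤ 2 * D + 8
      · calc inc R₁ B ≤ R₁.card * B.card := inc_le_mul _ _
          _ ≤ R.card * (10 * D) := Nat.mul_le_mul (Finset.card_le_card hR₁s) (by omega)
          _ ≤ _ := by rw [mul_comm]; omega
      · have h7 : R₁.card ≤ 8 * κ := by
          refine (hκ.mono hR₁s (subset_refl B)).card_le_of_dense (by omega) fun r hr => ?_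
          have h1 : (B.filter fun b => ¬ Meets b r).card ≤ (swap f).totalDegree := by
            refine card_not_meets_le (p := p) hsf hblue (by rwa [totalDegree_swap])
              (hR.2 r (hR₁s hr)) ?_ ?_ hB.1 hBf
            · rw [swap_swap]
              exact hRf r (hR₁s hr)
            · rw [pderiv_zero_swap, swap_swap]
              exact (Finset.mem_filter.1 hr).2
          rw [totalDegree_swap] at h1
          simp only [meets_comm _ r] at h1
          have h2 := Finset.card_filter_add_card_filter_not (s := B) (fun b => Meets r b)
          omega
        calc inc R₁ B ≤ R₁.card * B.card := inc_le_mul _ _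
          _ ≤ 8 * κ * B.card := Nat.mul_le_mul_right _ h7
          _ ≤ _ := by omega
    have hi2 : inc R₂ B₁ ≤ B.card * D := by
      rw [inc_comm]
      refine (inc_le_mul_of_forall (D := D) fun b hb => ?_).trans
        (Nat.mul_le_mul_right _ (Finset.card_le_card hB₁s))
      have := card_meets_le (g := swap g) (Finset.mem_filter.1 hb).2 (hB.2 b (hB₁s hb))
        (hR.mono hR₂s).1 (fun r hr => by rw [swap_swap]; exact (Finset.mem_filter.1 hr).2)
      rw [totalDegree_swap] at this
      exact this.trans (hpd 1)
    nlinarith [Nat.zero_le R.card, Nat.zero_le B.card, Nat.zero_le (κ * B.card)]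
  · refine ⟨R, subset_refl _, B, subset_refl _, ?_, ?_, by omega⟩
    · have h1 := hR.card_le hf hf0 hred hRf fun r hr => restr_curv_eq_zero (hRf r hr)
      have h2 := totalDegree_curv_le f
      nlinarith
    · have h1 := hB.card_le hsf hsf0 hblue hBf fun b hb => restr_curv_eq_zero (hBf b hb)
      have h2 := totalDegree_curv_le (swap f)
      rw [totalDegree_swap] at h1 h2
      nlinarith

end RuledSurface

namespace RuledSurface

open MvPolynomial

variable {K : Type*} [Field K]

lemma restr_ne_zero_of_isUnit {f : MvPolynomial (Fin 3) K} (hf : IsUnit f) (l : K × K × K) :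
    restr l f ≠ 0 :=
  (hf.map (restr l)).ne_zero

/-- Incidences on a surface of small degree, assuming a bound for small families. -/
lemma inc_le_of_vanish [Infinite K] {p : ℕ} [CharP K p] {κ k L S : ℕ}
    (hrec : ∀ s ≤ S, ∀ R B : Finset (K × K × K), Transversal R → Transversal B →
      CodegreeLE κ R B → R.card ≤ s ^ 2 → B.card ≤ s ^ 2 →
      inc R B ≤ k * s ^ 3 + κ * L * B.card)
    (f : MvPolynomial (Fin 3) K) (hf : f ≠ 0) :
    f.totalDegree < p → 3 * f.totalDegree ≤ S →
    ∀ R B : Finset (K × K × K), Transversal R → Transversal B → CodegreeLE κ R B →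
    (∀ r ∈ R, restr r f = 0) → (∀ b ∈ B, restr b (swap f) = 0) →
    inc R B ≤ 11 * f.totalDegree * (R.card + B.card) + κ * (8 + L) * B.card
      + 27 * k * f.totalDegree ^ 3 := by
  induction f using WfDvdMonoid.induction_on_irreducible with
  | zero => exact absurd rfl hf
  | unit u hu =>
    intro _ _ R B _ _ _ hR _
    have : R = ∅ := Finset.eq_empty_of_forall_notMem fun r hr =>
      restr_ne_zero_of_isUnit hu r (hR r hr)
    simp [this, inc]
  | mul f q hf0 hq ih =>
    intro hdeg hS R B hR hB hκ hRf hBf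
    have hq0 : q ≠ 0 := hq.ne_zero
    rw [totalDegree_mul_of_isDomain hq0 hf0] at hdeg hS ⊢
    set D₁ := q.totalDegree with hD₁
    set D₂ := f.totalDegree with hD₂
    set R₁ := R.filter fun r => restr r q = 0 with hR₁
    set R₂ := R.filter fun r => ¬ restr r q = 0 with hR₂
    set B₁ := B.filter fun b => restr b (swap q) = 0 with hB₁
    set B₂ := B.filter fun b => ¬ restr b (swap q) = 0 with hB₂
    have hR₁s : R₁ ⊆ R := Finset.filter_subset _ _
    have hR₂s : R₂ ⊆ R := Finset.filter_subset _ _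
    have hB₁s : B₁ ⊆ B := Finset.filter_subset _ _
    have hB₂s : B₂ ⊆ B := Finset.filter_subset _ _
    have hcR : R₁.card + R₂.card = R.card := Finset.card_filter_add_card_filter_not _
    have hcB : B₁.card + B₂.card = B.card := Finset.card_filter_add_card_filter_not _
    have hs1 : inc R₁ B + inc R₂ B = inc R B := inc_filter_add R B fun r => restr r q = 0
    have hs2 : inc R₁ B₁ + inc R₁ B₂ = inc R₁ B :=
      inc_add_filter R₁ B fun b => restr b (swap q) = 0
    have hs3 : inc R₂ B₁ + inc R₂ B₂ = inc R₂ B :=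
      inc_add_filter R₂ B fun b => restr b (swap q) = 0
    have h12 : inc R₁ B₂ ≤ B₂.card * D₁ := by
      rw [inc_comm]
      refine inc_le_mul_of_forall fun b hb => ?_
      have := card_meets_le (g := swap q) (Finset.mem_filter.1 hb).2 (hB.2 b (hB₂s hb))
        (hR.mono hR₁s).1 (fun r hr => by rw [swap_swap]; exact (Finset.mem_filter.1 hr).2)
      rwa [totalDegree_swap] at this
    have h21 : inc R₂ B₁ ≤ R₂.card * D₁ :=
      inc_le_mul_of_forall fun r hr => card_meets_le (Finset.mem_filter.1 hr).2
        (hR.2 r (hR₂s hr)) (hB.mono hB₁s).1 fun b hb => (Finset.mem_filter.1 hb).2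
    have h22 := ih hf0 (by omega) (by omega) R₂ B₂ (hR.mono hR₂s) (hB.mono hB₂s)
      (hκ.mono hR₂s hB₂s)
      (fun r hr => by
        have := hRf r (hR₂s hr)
        rw [map_mul] at this
        exact (mul_eq_zero.1 this).resolve_left (Finset.mem_filter.1 hr).2)
      (fun b hb => by
        have := hBf b (hB₂s hb)
        rw [map_mul, map_mul] at this
        exact (mul_eq_zero.1 this).resolve_left (Finset.mem_filter.1 hb).2)
    obtain ⟨R', hR', B', hB', hcR', hcB', h11⟩ := exists_inc_le_of_irreducible (p := p) hq
      (by omega) (hR.mono hR₁s) (hB.mono hB₁s) (hκ.mono hR₁s hB₁s)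
      (fun r hr => (Finset.mem_filter.1 hr).2) (fun r hr => (Finset.mem_filter.1 hr).2)
    have hR's := hR'.trans hR₁s
    have hB's := hB'.trans hB₁s
    have h := hrec (3 * D₁) (by omega) R' B' (hR.mono hR's) (hB.mono hB's) (hκ.mono hR's hB's)
      hcR' hcB'
    have hB'c : κ * L * B'.card ≤ κ * L * B₁.card :=
      Nat.mul_le_mul_left _ (Finset.card_le_card hB')
    have hcube : D₁ ^ 3 + D₂ ^ 3 ≤ (D₁ + D₂) ^ 3 := by
      have : (D₁ + D₂) ^ 3 = D₁ ^ 3 + D₂ ^ 3 + (3 * D₁ ^ 2 * D₂ + 3 * D₁ * D₂ ^ 2) := by ring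
      omega
    have hcube' : 27 * k * D₁ ^ 3 + 27 * k * D₂ ^ 3 ≤ 27 * k * (D₁ + D₂) ^ 3 := by
      rw [← mul_add]
      exact Nat.mul_le_mul_left _ hcube
    rw [← hcR, ← hcB]
    have e : k * (3 * D₁) ^ 3 = 27 * k * D₁ ^ 3 := by ring
    rw [← hD₁] at h11
    generalize D₁ ^ 3 = c₁ at *
    generalize D₂ ^ 3 = c₂ at *
    generalize (D₁ + D₂) ^ 3 = c₃ at *
    have key : inc R B ≤ B₂.card * D₁ + R₂.card * D₁ + (11 * D₂ * (R₂.card + B₂.card)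
        + κ * (8 + L) * B₂.card) + (10 * D₁ * (R₁.card + B₁.card) + 8 * κ * B₁.card
        + κ * L * B₁.card) + 27 * k * c₃ := by omega
    refine key.trans ?_
    nlinarith [Nat.zero_le (D₁ * R₁.card), Nat.zero_le (D₁ * R₂.card), Nat.zero_le (D₁ * B₁.card),
      Nat.zero_le (D₁ * B₂.card), Nat.zero_le (D₂ * R₁.card), Nat.zero_le (D₂ * B₁.card)]

lemma exists_vanishing (B : Finset (K × K × K)) {d : ℕ}
    (hd : B.card * (2 * d + 1) < (d + 1) ^ 3) :
    ∃ f : MvPolynomial (Fin 3) K, f ≠ 0 ∧ f.totalDegree ≤ 3 * d ∧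
      ∀ b ∈ B, restr b (swap f) = 0 := by
  let ex : (Fin 3 → Fin (d + 1)) → (Fin 3 →₀ ℕ) := fun e =>
    Finsupp.equivFunOnFinite.symm fun i => (e i : ℕ)
  have hex : Function.Injective ex := by
    intro e e' h
    funext i
    have := DFunLike.congr_fun h i
    exact Fin.ext this
  let P : ((Fin 3 → Fin (d + 1)) → K) →ₗ[K] MvPolynomial (Fin 3) K :=
    ∑ e, (monomial (ex e)).comp (LinearMap.proj e)
  have hP : ∀ a, P a = ∑ e, monomial (ex e) (a e) := fun a => by simp [P]
  let Φ : ((Fin 3 → Fin (d + 1)) → K) →ₗ[K] (B × Fin (2 * d + 1) → K) :=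
    LinearMap.pi fun q => (Polynomial.lcoeff K (q.2 : ℕ)).comp ((restr q.1.1).toLinearMap.comp P)
  have hrank : Module.finrank K (B × Fin (2 * d + 1) → K) <
      Module.finrank K ((Fin 3 → Fin (d + 1)) → K) := by
    simpa using hd
  obtain ⟨a, ha, ha0⟩ := (Submodule.ne_bot_iff _).1 (LinearMap.ker_ne_bot_of_finrank_lt (f := Φ) hrank)
  have hexi : ∀ e i, ex e i ≤ d := fun e i => Nat.lt_succ_iff.1 (e i).2
  refine ⟨swap (P a), ?_, ?_, ?_⟩
  · intro h0
    have h1 : P a = 0 := by simpa using h0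
    apply ha0
    funext e
    have := congrArg (coeff (ex e)) h1
    rw [hP, coeff_sum, coeff_zero] at this
    simp only [coeff_monomial, hex.eq_iff] at this
    simpa using this
  · rw [totalDegree_swap, hP]
    refine totalDegree_finsetSum_le fun e _ => ?_
    refine (totalDegree_monomial_le _ _).trans ?_
    rw [Finsupp.sum_fintype _ _ (fun _ => rfl), Fin.sum_univ_three]
    have h0 := hexi e 0
    have h1 := hexi e 1
    have h2 := hexi e 2
    simp only [id]
    omega
  · intro b hb
    rw [swap_swap]
    have hdeg : (restr b (P a)).natDegree ≤ 2 * d := by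
      rw [hP, map_sum]
      refine Polynomial.natDegree_sum_le_of_forall_le _ _ fun e _ => ?_
      rw [restr, aeval_monomial, Finsupp.prod_fintype _ _ (fun _ => pow_zero _),
        Fin.prod_univ_three]
      have h0 := hexi e 0
      have h2 := hexi e 2
      have e0 : (lineMap b 0 ^ ex e 0).natDegree ≤ ex e 0 := by
        refine (Polynomial.natDegree_pow_le).trans ?_
        have : (lineMap b 0).natDegree ≤ 1 := by
          simp only [lineMap]
          exact (Polynomial.natDegree_add_le _ _).trans (by
            simpa using (Polynomial.natDegree_C_mul_le _ _).trans Polynomial.natDegree_X_le)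
        nlinarith
      have e1 : (lineMap b 1 ^ ex e 1).natDegree ≤ 0 := by
        refine (Polynomial.natDegree_pow_le).trans ?_
        simp [lineMap]
      have e2 : (lineMap b 2 ^ ex e 2).natDegree ≤ ex e 2 := by
        simp [lineMap]
      rw [← mul_assoc, ← mul_assoc]
      refine (Polynomial.natDegree_mul_le).trans ?_
      have h3 := Polynomial.natDegree_mul_le
        (p := algebraMap K (Polynomial K) (a e) * lineMap b 0 ^ ex e 0) (q := lineMap b 1 ^ ex e 1)
      have h4 := Polynomial.natDegree_mul_le
        (p := algebraMap K (Polynomial K) (a e)) (q := lineMap b 0 ^ ex e 0)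
      have h5 : (algebraMap K (Polynomial K) (a e)).natDegree = 0 := Polynomial.natDegree_C _
      omega
    ext i
    rw [Polynomial.coeff_zero]
    by_cases hi : i < 2 * d + 1
    · exact congrFun (LinearMap.mem_ker.1 ha) (⟨b, hb⟩, ⟨i, hi⟩)
    · exact Polynomial.coeff_eq_zero_of_natDegree_lt (by omega)

lemma inc_le_of_groups {R : Finset (K × K × K)} {m a β : ℕ} (hm : 0 < m)
    (B : Finset (K × K × K))
    (h : ∀ B' ⊆ B, B'.card ≤ m → inc R B' ≤ a + β * B'.card) :
    inc R B ≤ (B.card / m + 1) * a + β * B.card := by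
  induction hn : B.card using Nat.strong_induction_on generalizing B with
  | _ n ih =>
    by_cases hle : B.card ≤ m
    · have := h B (subset_refl _) hle
      rw [hn] at this
      nlinarith [Nat.zero_le (n / m * a)]
    · obtain ⟨B', hB', hc⟩ := Finset.exists_subset_card_eq (le_of_not_ge hle)
      have h1 := h B' hB' hc.le
      have hcd : (B \ B').card = n - m := by rw [Finset.card_sdiff_of_subset hB', hn, hc]
      have h2 := ih (n - m) (by omega) (B \ B')
        (fun B'' hs hc => h B'' (hs.trans Finset.sdiff_subset) hc) hcd
      have h3 : inc R B = inc R B' + inc R (B \ B') := by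
        rw [inc_comm, inc_comm R B', inc_comm R (B \ B')]
        unfold inc
        rw [add_comm, Finset.sum_sdiff hB']
      have h4 : n / m = (n - m) / m + 1 := by
        rw [Nat.div_eq_sub_div hm (by omega)]
      rw [h3, h4]
      have h5 : β * n = β * m + β * (n - m) := by rw [← mul_add]; congr 1; omega
      rw [h5]
      rw [hc] at h1
      nlinarith

/-- A point–plane type incidence bound for two transversal families of lines. -/
theorem inc_le [Infinite K] {p : ℕ} [CharP K p] {κ : ℕ} (s : ℕ) (hs : s ≤ 4 * p)
    (R B : Finset (K × K × K)) (hR : Transversal R) (hB : Transversal B)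
    (hκ : CodegreeLE κ R B) (hRs : R.card ≤ s ^ 2) (hBs : B.card ≤ s ^ 2) :
    inc R B ≤ 2 ^ 25 * s ^ 3 + κ * (8 * Nat.log 2 s) * B.card := by
  induction s using Nat.strong_induction_on generalizing R B with
  | _ s ih =>
    by_cases hsG : s < 2 ^ 14
    · have h1 := (inc_le_mul R B).trans (Nat.mul_le_mul hRs hBs)
      have h2 : s ^ 2 * s ^ 2 = s * s ^ 3 := by ring
      have h3 : s * s ^ 3 ≤ 2 ^ 25 * s ^ 3 := Nat.mul_le_mul_right _ (by omega)
      omega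
    obtain ⟨d, hd⟩ : ∃ d, d = s / 2 ^ 14 := ⟨_, rfl⟩
    have hd1 : 2 ^ 14 * d ≤ s := by omega
    have hd2 : s ≤ 2 ^ 15 * d := by omega
    have hd0 : 1 ≤ d := by omega
    obtain ⟨L, hL⟩ : ∃ L, L + 8 = 8 * Nat.log 2 s := by
      refine ⟨8 * Nat.log 2 s - 8, ?_⟩
      have : 1 ≤ Nat.log 2 s := Nat.log_pos (by norm_num) (by omega)
      omega
    have hrec : ∀ s' ≤ 9 * d, ∀ R B : Finset (K × K × K), Transversal R → Transversal B →
        CodegreeLE κ R B → R.card ≤ s' ^ 2 → B.card ≤ s' ^ 2 →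
        inc R B ≤ 2 ^ 25 * s' ^ 3 + κ * L * B.card := by
      intro s' hs' R B hR hB hκ hRs hBs
      have h1 := ih s' (by omega) (by omega) R B hR hB hκ hRs hBs
      have h2 : 8 * Nat.log 2 s' ≤ L := by
        have h3 : Nat.log 2 s' ≤ Nat.log 2 (s / 2) := Nat.log_mono_right (by omega)
        rw [Nat.log_div_base] at h3
        omega
      have h3 := Nat.mul_le_mul_right B.card (Nat.mul_le_mul_left κ h2)
      omega
    set m := (d ^ 2 + d) / 2 with hm
    have hm2 : d ^ 2 + d = 2 * m := by
      have : Even (d ^ 2 + d) := by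
        rw [pow_two, ← Nat.mul_succ]
        exact Nat.even_mul_succ_self d
      obtain ⟨c, hc⟩ := this
      omega
    have hm0 : 0 < m := by nlinarith
    have hgroup : ∀ B' ⊆ B, B'.card ≤ m →
        inc R B' ≤ (69 * d * s ^ 2 + 27 * 2 ^ 25 * (3 * d) ^ 3) +
          κ * (8 * Nat.log 2 s) * B'.card := by
      intro B' hB' hc
      obtain ⟨f, hf0, hfd, hfB⟩ := exists_vanishing B' (d := d) (by
        have : B'.card * (2 * d + 1) ≤ m * (2 * d + 1) := Nat.mul_le_mul_right _ hc
        nlinarith)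
      set R₁ := R.filter fun r => restr r f = 0 with hR₁
      set R₂ := R.filter fun r => ¬ restr r f = 0 with hR₂
      have hR₁s : R₁ ⊆ R := Finset.filter_subset _ _
      have hR₂s : R₂ ⊆ R := Finset.filter_subset _ _
      have hsplit : inc R₁ B' + inc R₂ B' = inc R B' :=
        inc_filter_add R B' fun r => restr r f = 0
      have h2 : inc R₂ B' ≤ R₂.card * (3 * d) :=
        inc_le_mul_of_forall fun r hr => (card_meets_le (Finset.mem_filter.1 hr).2
          (hR.2 r (hR₂s hr)) (hB.mono hB').1 hfB).trans hfd
      have h1 := inc_le_of_vanish (p := p) hrec f hf0 (by omega) (by omega) R₁ B' (hR.mono hR₁s)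
        (hB.mono hB') (hκ.mono hR₁s hB') (fun r hr => (Finset.mem_filter.1 hr).2) hfB
      have hc1 : R₁.card ≤ s ^ 2 := (Finset.card_le_card hR₁s).trans hRs
      have hc2 : R₂.card ≤ s ^ 2 := (Finset.card_le_card hR₂s).trans hRs
      have hc3 : B'.card ≤ s ^ 2 := (Finset.card_le_card hB').trans hBs
      have h3 : f.totalDegree ^ 3 ≤ (3 * d) ^ 3 := Nat.pow_le_pow_left hfd 3
      have h4 : 11 * f.totalDegree * (R₁.card + B'.card) ≤ 11 * (3 * d) * (s ^ 2 + s ^ 2) :=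
        Nat.mul_le_mul (Nat.mul_le_mul_left _ hfd) (Nat.add_le_add hc1 hc3)
      have h5 : R₂.card * (3 * d) ≤ s ^ 2 * (3 * d) := Nat.mul_le_mul_right _ hc2
      have h6 : κ * (8 + L) * B'.card = κ * (8 * Nat.log 2 s) * B'.card := by
        rw [← hL, add_comm 8 L]
      have h7 : 27 * 2 ^ 25 * f.totalDegree ^ 3 ≤ 27 * 2 ^ 25 * (3 * d) ^ 3 :=
        Nat.mul_le_mul_left _ h3
      have h8 : 11 * (3 * d) * (s ^ 2 + s ^ 2) + s ^ 2 * (3 * d) = 69 * d * s ^ 2 := by ring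
      omega
    have h := inc_le_of_groups hm0 B hgroup
    refine h.trans (Nat.add_le_add_right ?_ _)
    have hN : B.card / m + 1 ≤ 9 * 2 ^ 28 := by
      have h1 : B.card / m ≤ 2 ^ 31 := by
        refine (Nat.div_le_div_right hBs).trans ?_
        refine Nat.div_le_of_le_mul ?_
        have : s ^ 2 ≤ (2 ^ 15 * d) ^ 2 := Nat.pow_le_pow_left hd2 2
        nlinarith
      omega
    have hx : 2 ^ 14 * d * s ^ 2 ≤ s ^ 3 := by
      have := Nat.mul_le_mul_right (s ^ 2) hd1
      calc _ ≤ s * s ^ 2 := this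
        _ = s ^ 3 := by ring
    have hy : (2 ^ 14 * d) ^ 3 ≤ s ^ 3 := Nat.pow_le_pow_left hd1 3
    refine (Nat.mul_le_mul_right _ hN).trans ?_
    have hv : 2 ^ 42 * d ^ 3 ≤ s ^ 3 := by rw [mul_pow] at hy; exact hy
    have hu : 2 ^ 14 * (d * s ^ 2) ≤ s ^ 3 := by rw [← mul_assoc]; exact hx
    have he : 69 * d * s ^ 2 + 27 * 2 ^ 25 * (3 * d) ^ 3 =
        69 * (d * s ^ 2) + 729 * 2 ^ 25 * d ^ 3 := by ring
    rw [he]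
    generalize d * s ^ 2 = u at *
    generalize d ^ 3 = v at *
    generalize s ^ 3 = w at *
    norm_num at hu hv ⊢
    linarith

end RuledSurface

namespace RuledSurface

open Polynomial

variable {F : Type*} [Field F]

/-- For `i = (x, m, c)` and `j = (x', m', c')`, the line `y = m t + c` takes at `x'` the value
taken by `y = m' t + c'` at `x`. -/
def Aligned (i j : F × F × F) : Prop :=
  i.2.2 + i.2.1 * j.1 = j.2.2 + j.2.1 * i.1

/-- The line attached to `i` as the left argument of `Aligned`. -/
noncomputable def redLine (i : F × F × F) : RatFunc F × RatFunc F × RatFunc F :=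
  (algebraMap F[X] (RatFunc F) (C i.2.2 + C i.2.1 * X ^ 5 + C i.1 * X ^ 10) /
      algebraMap F[X] (RatFunc F) (1 + C i.1 * X),
    algebraMap F[X] (RatFunc F) (C i.2.1) / algebraMap F[X] (RatFunc F) (C i.1),
    algebraMap F[X] (RatFunc F) (1 + C i.1 * X) / algebraMap F[X] (RatFunc F) (C i.1))

/-- The line attached to `j` as the right argument of `Aligned`. -/
noncomputable def blueLine (j : F × F × F) : RatFunc F × RatFunc F × RatFunc F :=
  (algebraMap F[X] (RatFunc F) (X ^ 10 + C j.2.1 - C j.2.2 * X) /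
      algebraMap F[X] (RatFunc F) (C j.1 - X ^ 5),
    algebraMap F[X] (RatFunc F) (C j.2.2),
    algebraMap F[X] (RatFunc F) (C j.1 - X ^ 5))

lemma algebraMap_one_add_ne_zero (x : F) :
    algebraMap F[X] (RatFunc F) (1 + C x * X) ≠ 0 := by
  rw [Ne, map_eq_zero_iff _ (RatFunc.algebraMap_injective F)]
  intro h
  have := congrArg (fun f => coeff f 0) h
  simp at this

lemma algebraMap_sub_pow_ne_zero (x : F) :
    algebraMap F[X] (RatFunc F) (C x - X ^ 5) ≠ 0 := by
  rw [Ne, map_eq_zero_iff _ (RatFunc.algebraMap_injective F)]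
  intro h
  have := congrArg (fun f => coeff f 5) h
  simp at this

lemma meets_redLine_blueLine {i : F × F × F} (hi : i.1 ≠ 0) (j : F × F × F) :
    Meets (redLine i) (blueLine j) ↔ Aligned i j := by
  have hx : algebraMap F[X] (RatFunc F) (C i.1) ≠ 0 := by
    rw [Ne, map_eq_zero_iff _ (RatFunc.algebraMap_injective F)]
    simpa using hi
  have h1 := algebraMap_one_add_ne_zero i.1
  have h2 := algebraMap_sub_pow_ne_zero j.1
  have key : Aligned i j ↔ algebraMap F[X] (RatFunc F) (C (i.2.2 + i.2.1 * j.1)) =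
      algebraMap F[X] (RatFunc F) (C (j.2.2 + j.2.1 * i.1)) := by
    rw [(RatFunc.algebraMap_injective F).eq_iff, C_inj, Aligned]
  rw [key, Meets, redLine, blueLine]
  dsimp only
  simp only [map_add, map_mul, map_sub, map_pow, map_one] at *
  rw [mul_comm] at h1
  field_simp
  constructor <;> intro h <;> linear_combination h

lemma redLine_fst_injective : Function.Injective fun i : F × F × F => (redLine i).1 := by
  rintro ⟨x, m, c⟩ ⟨x', m', c'⟩ h
  simp only [redLine] at h
  rw [div_eq_div_iff (algebraMap_one_add_ne_zero x) (algebraMap_one_add_ne_zero x'), ← map_mul,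
    ← map_mul] at h
  have h := RatFunc.algebraMap_injective F h
  have e : ∀ a b d e : F, (C a + C b * X ^ 5 + C d * X ^ 10) * (1 + C e * X) =
      C a + C (a * e) * X + C b * X ^ 5 + C (b * e) * X ^ 6 + C d * X ^ 10
        + C (d * e) * X ^ 11 := by
    intro a b d e
    simp only [C_mul]
    ring
  rw [e, e] at h
  have h0 := congrArg (fun f => coeff f 0) h
  have h5 := congrArg (fun f => coeff f 5) h
  have h10 := congrArg (fun f => coeff f 10) h
  simp [coeff_C, coeff_X, coeff_X_pow, -map_mul] at h0 h5 h10
  simp [h0, h5, h10]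

lemma blueLine_fst_injective : Function.Injective fun j : F × F × F => (blueLine j).1 := by
  rintro ⟨x, m, c⟩ ⟨x', m', c'⟩ h
  simp only [blueLine] at h
  rw [div_eq_div_iff (algebraMap_sub_pow_ne_zero x) (algebraMap_sub_pow_ne_zero x'), ← map_mul,
    ← map_mul] at h
  have h := RatFunc.algebraMap_injective F h
  have e : ∀ b a e : F, (X ^ 10 + C b - C a * X) * (C e - X ^ 5) =
      C (b * e) - C (a * e) * X - C b * X ^ 5 + C a * X ^ 6 + C e * X ^ 10 - X ^ 15 := by
    intro b a e
    simp only [C_mul]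
    ring
  rw [e, e] at h
  have h5 := congrArg (fun f => coeff f 5) h
  have h6 := congrArg (fun f => coeff f 6) h
  have h10 := congrArg (fun f => coeff f 10) h
  simp [coeff_X_pow, -map_mul] at h5 h6 h10
  simp [h5, h6, h10]

instance infinite_ratFunc : Infinite (RatFunc F) :=
  Infinite.of_injective _ (RatFunc.algebraMap_injective F)

/-- Counting aligned pairs. -/
lemma sum_aligned_le {p : ℕ} [CharP F p] {κ s : ℕ} (hs : s ≤ 4 * p) (I : Finset (F × F × F))
    (h0 : ∀ i ∈ I, i.1 ≠ 0) (hI : I.card ≤ s ^ 2)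
    (hκ : ∀ j₁ ∈ I, ∀ j₂ ∈ I, j₁ ≠ j₂ →
      (I.filter fun i => Aligned i j₁ ∧ Aligned i j₂).card ≤ κ) :
    ∑ i ∈ I, (I.filter fun j => Aligned i j).card ≤
      2 ^ 25 * s ^ 3 + κ * (8 * Nat.log 2 s) * I.card := by
  have hr : Function.Injective (redLine : F × F × F → _) :=
    Function.Injective.of_comp (f := Prod.fst) redLine_fst_injective
  have hb : Function.Injective (blueLine : F × F × F → _) :=
    Function.Injective.of_comp (f := Prod.fst) blueLine_fst_injective
  have : CharP (RatFunc F) p := charP_of_injective_algebraMap (algebraMap F (RatFunc F)).injective p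
  have h := inc_le (K := RatFunc F) (p := p) (κ := κ) s hs (I.image redLine) (I.image blueLine)
    ⟨?_, ?_⟩ ⟨?_, ?_⟩ ?_ (by rwa [Finset.card_image_of_injective _ hr])
    (by rwa [Finset.card_image_of_injective _ hb])
  · rw [Finset.card_image_of_injective _ hb] at h
    refine le_trans (le_of_eq ?_) h
    rw [inc, Finset.sum_image hr.injOn]
    refine Finset.sum_congr rfl fun i hi => ?_
    rw [Finset.filter_image, Finset.card_image_of_injective _ hb]
    congr 1
    exact Finset.filter_congr fun j _ => (meets_redLine_blueLine (h0 i hi) j).symm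
  · rw [Finset.coe_image]
    rintro _ ⟨i, _, rfl⟩ _ ⟨j, _, rfl⟩ hij
    rw [redLine_fst_injective hij]
  · intro r hr'
    obtain ⟨i, hi, rfl⟩ := Finset.mem_image.1 hr'
    refine div_ne_zero (algebraMap_one_add_ne_zero i.1) ?_
    rw [Ne, map_eq_zero_iff _ (RatFunc.algebraMap_injective F)]
    simpa using h0 i hi
  · rw [Finset.coe_image]
    rintro _ ⟨i, _, rfl⟩ _ ⟨j, _, rfl⟩ hij
    rw [blueLine_fst_injective hij]
  · intro r hr'
    obtain ⟨i, hi, rfl⟩ := Finset.mem_image.1 hr'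
    exact algebraMap_sub_pow_ne_zero i.1
  · intro b₁ h₁ b₂ h₂ hne
    obtain ⟨j₁, hj₁, rfl⟩ := Finset.mem_image.1 h₁
    obtain ⟨j₂, hj₂, rfl⟩ := Finset.mem_image.1 h₂
    refine le_trans (le_of_eq ?_) (hκ j₁ hj₁ j₂ hj₂ fun h => hne (congrArg _ h))
    rw [Finset.filter_image, Finset.card_image_of_injective _ hr]
    congr 1
    refine Finset.filter_congr fun i hi => ?_
    rw [meets_redLine_blueLine (h0 i hi), meets_redLine_blueLine (h0 i hi)]

end RuledSurface

namespace RichLines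

open RuledSurface

lemma card_mul_le_card_filter_product {α β : Type*} {L : Finset α} {Y : Finset β}
    (P : α → β → Prop) [∀ l, DecidablePred (P l)]
    [DecidablePred fun q : α × β => P q.1 q.2] {k : ℕ} (h : ∀ l ∈ L, k ≤ (Y.filter fun y => P l y).card) :
    L.card * k ≤ ((L ×ˢ Y).filter fun q => P q.1 q.2).card := by
  rw [Finset.card_filter, Finset.sum_product]
  refine Finset.card_nsmul_le_sum _ _ _ fun l hl => ?_
  rw [← Finset.card_filter]
  refine (h l hl).trans (le_of_eq ?_)
  congr

variable {F : Type*} [Field F]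

/-- The line `y = l.1 * x + l.2` contains at least `k` points of `X × X'`. -/
def IsRich (X X' : Finset F) (k : ℕ) (l : F × F) : Prop :=
  k ≤ (X.filter fun x => l.1 * x + l.2 ∈ X').card

variable {X X' : Finset F} {k n : ℕ} {L : Finset (F × F)}

lemma card_mul_le_of_mem (hL : ∀ l ∈ L, IsRich X X' k l) {x₀ y₀ : F}
    (h₀ : ∀ l ∈ L, l.1 * x₀ + l.2 = y₀) : L.card * (k - 1) ≤ X.card * X'.card := by
  have h1 : ∀ l ∈ L, k - 1 ≤ (X.filter fun x => x ≠ x₀ ∧ l.1 * x + l.2 ∈ X').card := by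
    intro l hl
    have h2 : ((X.filter fun x => l.1 * x + l.2 ∈ X').erase x₀) ⊆
        X.filter fun x => x ≠ x₀ ∧ l.1 * x + l.2 ∈ X' := by
      intro x hx
      simp only [Finset.mem_erase, Finset.mem_filter] at hx ⊢
      tauto
    exact (Nat.sub_le_sub_right (hL l hl) 1).trans
      (Finset.pred_card_le_card_erase.trans (Finset.card_le_card h2))
  refine (card_mul_le_card_filter_product
    (fun (l : F × F) x => x ≠ x₀ ∧ l.1 * x + l.2 ∈ X') h1).trans ?_
  rw [← Finset.card_product]
  refine Finset.card_le_card_of_injOn (fun q => (q.2, q.1.1 * q.2 + q.1.2)) ?_ ?_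
  · rintro ⟨l, x⟩ h
    simp only [Finset.coe_filter, Finset.mem_product, Set.mem_ofPred_eq] at h
    simp only [Finset.coe_product, Set.mem_prod, Finset.mem_coe]
    tauto
  · rintro ⟨⟨m, c⟩, x⟩ h ⟨⟨m', c'⟩, x'⟩ h' e
    simp only [Finset.coe_filter, Finset.mem_product, Set.mem_ofPred_eq] at h h'
    simp only [Prod.mk.injEq] at e ⊢
    obtain ⟨rfl, e⟩ := e
    have a := h₀ _ h.1.1
    have a' := h₀ _ h'.1.1
    simp only at a a'
    have hm : m = m' := by
      have : (m - m') * (x - x₀) = 0 := by linear_combination e - a + a'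
      rcases mul_eq_zero.1 this with h3 | h3
      · exact sub_eq_zero.1 h3
      · exact absurd (sub_eq_zero.1 h3) h.2.1
    subst hm
    exact ⟨⟨rfl, by linear_combination e⟩, rfl⟩

lemma card_mul_le_sq (hL : ∀ l ∈ L, IsRich X X' k l) :
    L.card * (k * (k - 1)) ≤ (X.card * X'.card) ^ 2 := by
  have h1 : ∀ l ∈ L, k * (k - 1) ≤ ((X ×ˢ X).filter fun q : F × F => q.1 ≠ q.2 ∧
      l.1 * q.1 + l.2 ∈ X' ∧ l.1 * q.2 + l.2 ∈ X').card := by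
    intro l hl
    have h2 : (X.filter fun x => l.1 * x + l.2 ∈ X').offDiag ⊆ (X ×ˢ X).filter fun q : F × F =>
        q.1 ≠ q.2 ∧ l.1 * q.1 + l.2 ∈ X' ∧ l.1 * q.2 + l.2 ∈ X' := by
      intro x hx
      simp only [Finset.mem_offDiag, Finset.mem_filter, Finset.mem_product] at hx ⊢
      tauto
    refine le_trans ?_ (Finset.card_le_card h2)
    rw [Finset.offDiag_card]
    have h3 := hL l hl
    rw [IsRich] at h3
    generalize (X.filter fun x => l.1 * x + l.2 ∈ X').card = t at *
    have h4 : t * t - t = t * (t - 1) := by rw [Nat.mul_sub_one]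
    rw [h4]
    exact Nat.mul_le_mul h3 (Nat.sub_le_sub_right h3 1)
  refine (card_mul_le_card_filter_product (fun (l q : F × F) => q.1 ≠ q.2 ∧
    l.1 * q.1 + l.2 ∈ X' ∧ l.1 * q.2 + l.2 ∈ X') h1).trans ?_
  rw [← Finset.card_product, pow_two, ← Finset.card_product]
  refine Finset.card_le_card_of_injOn (fun q => ((q.2.1, q.1.1 * q.2.1 + q.1.2),
    (q.2.2, q.1.1 * q.2.2 + q.1.2))) ?_ ?_
  · rintro ⟨l, x⟩ h
    simp only [Finset.coe_filter, Finset.mem_product, Set.mem_ofPred_eq] at h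
    simp only [Finset.coe_product, Set.mem_prod, Finset.mem_coe]
    tauto
  · rintro ⟨⟨m, c⟩, x, y⟩ h ⟨⟨m', c'⟩, x', y'⟩ h' e
    simp only [Finset.coe_filter, Finset.mem_product, Set.mem_ofPred_eq] at h h'
    simp only [Prod.mk.injEq] at e ⊢
    obtain ⟨⟨rfl, e⟩, rfl, e'⟩ := e
    have hm : m = m' := by
      have : (m - m') * (x - y) = 0 := by linear_combination e - e'
      rcases mul_eq_zero.1 this with h3 | h3
      · exact sub_eq_zero.1 h3
      · exact absurd (sub_eq_zero.1 h3) h.2.1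
    subst hm
    exact ⟨⟨rfl, by linear_combination e⟩, rfl, rfl⟩

/-- Cauchy–Schwarz: rich lines produce many aligned pairs. -/
lemma sq_le_card_mul_sum_aligned (hL : ∀ l ∈ L, IsRich X X' k l) :
    (L.card * k) ^ 2 ≤ X'.card *
      ∑ i ∈ X ×ˢ L, ((X ×ˢ L).filter fun j => Aligned i j).card := by
  set S := (L ×ˢ X).filter fun q => q.1.1 * q.2 + q.1.2 ∈ X' with hS
  have h1 : L.card * k ≤ S.card := 
    card_mul_le_card_filter_product (fun (l : F × F) x => l.1 * x + l.2 ∈ X') hL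
  let φ : (F × F) × F → F := fun q => q.1.1 * q.2 + q.1.2
  have h2 : S.card = ∑ y ∈ X', (S.filter fun q => φ q = y).card :=
    Finset.card_eq_sum_card_fiberwise fun q hq => (Finset.mem_filter.1 hq).2
  have h3 := sq_sum_le_card_mul_sum_sq (s := X') (f := fun y => (S.filter fun q => φ q = y).card)
  rw [← h2] at h3
  refine (Nat.pow_le_pow_left h1 2).trans (h3.trans (Nat.mul_le_mul_left _ ?_))
  have h4 : ∑ y ∈ X', (S.filter fun q => φ q = y).card ^ 2 =
      (X'.sigma fun y => (S.filter fun q => φ q = y) ×ˢ (S.filter fun q => φ q = y)).card := by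
    rw [Finset.card_sigma]
    exact Finset.sum_congr rfl fun y _ => by rw [Finset.card_product, pow_two]
  have h5 : ∑ i ∈ X ×ˢ L, ((X ×ˢ L).filter fun j => Aligned i j).card =
      ((X ×ˢ L).sigma fun i => (X ×ˢ L).filter fun j => Aligned i j).card :=
    (Finset.card_sigma _ _).symm
  rw [h4, h5]
  refine Finset.card_le_card_of_injOn
    (fun q => ⟨(q.2.2.2, q.2.1.1), (q.2.1.2, q.2.2.1)⟩) ?_ ?_
  · rintro ⟨y, ⟨l, x⟩, ⟨l', x'⟩⟩ h
    simp only [hS, Finset.coe_sigma, Set.mem_sigma_iff, Finset.mem_coe, Finset.mem_product,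
      Finset.mem_filter, φ] at h ⊢
    refine ⟨⟨h.2.2.1.1.2, h.2.1.1.1.1⟩, ⟨h.2.1.1.1.2, h.2.2.1.1.1⟩, ?_⟩
    have a := h.2.1.2
    have b := h.2.2.2
    simp only [Aligned]
    linear_combination a - b
  · rintro ⟨y, ⟨l, x⟩, ⟨l', x'⟩⟩ h ⟨z, ⟨l₁, x₁⟩, ⟨l₁', x₁'⟩⟩ h' e
    simp only [hS, Finset.coe_sigma, Set.mem_sigma_iff, Finset.mem_coe, Finset.mem_product,
      Finset.mem_filter, φ] at h h'
    simp only [Sigma.mk.injEq, Prod.mk.injEq, heq_eq_eq] at e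
    obtain ⟨⟨rfl, rfl⟩, rfl, rfl⟩ := e
    have : y = z := by rw [← h.2.1.2, ← h'.2.1.2]
    rw [this]

lemma card_aligned_le (hL : ∀ l ∈ L, IsRich X X' k l) (hX : X.card ≤ n) (hX' : X'.card ≤ n)
    (hk : 2 ≤ k) {j₁ j₂ : F × F × F} (hj₁ : j₁ ∈ X ×ˢ L) (hne : j₁ ≠ j₂) :
    ((X ×ˢ L).filter fun i => Aligned i j₁ ∧ Aligned i j₂).card * k ≤ 2 * n ^ 2 := by
  have hkn : k ≤ n := (hL j₁.2 (Finset.mem_product.1 hj₁).2).trans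
    ((Finset.card_filter_le _ _).trans hX)
  obtain ⟨x₁, m₁, c₁⟩ := j₁
  obtain ⟨x₂, m₂, c₂⟩ := j₂
  by_cases hx : x₁ = x₂
  · subst hx
    rcases Finset.eq_empty_or_nonempty ((X ×ˢ L).filter fun i => Aligned i (x₁, m₁, c₁) ∧
      Aligned i (x₁, m₂, c₂)) with he | ⟨⟨x₀, l₀⟩, hi₀⟩
    · rw [he]; simp
    have hm : m₁ ≠ m₂ := by
      rintro rfl
      rw [Finset.mem_filter] at hi₀
      simp only [Aligned] at hi₀
      apply hne
      simp only [Prod.mk.injEq, true_and]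
      linear_combination hi₀.2.2 - hi₀.2.1
    have hx₀ : ∀ x l, (x, l) ∈ ((X ×ˢ L).filter fun i => Aligned i (x₁, m₁, c₁) ∧
        Aligned i (x₁, m₂, c₂)) → x = x₀ := by
      intro x l h
      rw [Finset.mem_filter] at hi₀ h
      simp only [Aligned] at hi₀ h
      have : (m₁ - m₂) * (x - x₀) = 0 := by
        linear_combination hi₀.2.1 - hi₀.2.2 - h.2.1 + h.2.2
      rcases mul_eq_zero.1 this with h3 | h3
      · exact absurd (sub_eq_zero.1 h3) hm
      · exact sub_eq_zero.1 h3
    have h1 := card_mul_le_of_mem (X := X) (X' := X') (k := k)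
      (L := L.filter fun l => l.1 * x₁ + l.2 = c₁ + m₁ * x₀) (x₀ := x₁) (y₀ := c₁ + m₁ * x₀)
      (fun l hl => hL l (Finset.mem_filter.1 hl).1) (fun l hl => (Finset.mem_filter.1 hl).2)
    have h2 : ((X ×ˢ L).filter fun i => Aligned i (x₁, m₁, c₁) ∧ Aligned i (x₁, m₂, c₂)).card ≤
        (L.filter fun l => l.1 * x₁ + l.2 = c₁ + m₁ * x₀).card := by
      refine Finset.card_le_card_of_injOn Prod.snd ?_ ?_
      · rintro ⟨x, l⟩ h
        have e := hx₀ x l h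
        subst e
        have h' := Finset.mem_filter.1 (Finset.mem_coe.1 h)
        have h'' := h'.2.1
        simp only [Aligned] at h''
        exact Finset.mem_coe.2 (Finset.mem_filter.2
          ⟨(Finset.mem_product.1 h'.1).2, by linear_combination h''⟩)
      · rintro ⟨x, l⟩ h ⟨x', l'⟩ h' e
        rw [hx₀ x l h, hx₀ x' l' h']
        exact congrArg _ e
    have h3 : k ≤ 2 * (k - 1) := by omega
    have h4 : X.card * X'.card ≤ n * n := Nat.mul_le_mul hX hX'
    generalize (L.filter fun l => l.1 * x₁ + l.2 = c₁ + m₁ * x₀).card = t at *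
    calc _ ≤ t * (2 * (k - 1)) := Nat.mul_le_mul h2 h3
      _ = 2 * (t * (k - 1)) := by ring
      _ ≤ 2 * (n * n) := by omega
      _ = 2 * n ^ 2 := by ring
  · have h2 : ((X ×ˢ L).filter fun i => Aligned i (x₁, m₁, c₁) ∧ Aligned i (x₂, m₂, c₂)).card ≤
        X.card := by
      refine Finset.card_le_card_of_injOn Prod.fst ?_ ?_
      · rintro ⟨x, l⟩ h
        simp only [Finset.coe_filter, Finset.mem_product, Set.mem_ofPred_eq] at h
        exact h.1.1
      · rintro ⟨x, m, c⟩ h ⟨x', m', c'⟩ h' e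
        rw [Finset.mem_coe, Finset.mem_filter] at h h'
        simp only [Aligned] at h h' e
        subst e
        have hm : m = m' := by
          have : (m - m') * (x₁ - x₂) = 0 := by
            linear_combination h.2.1 - h.2.2 - h'.2.1 + h'.2.2
          rcases mul_eq_zero.1 this with h3 | h3
          · exact sub_eq_zero.1 h3
          · exact absurd (sub_eq_zero.1 h3) hx
        subst hm
        simp only [Prod.mk.injEq, true_and]
        linear_combination h.2.1 - h'.2.1
    have := Nat.mul_le_mul (h2.trans hX) hkn
    nlinarith

lemma log_four_mul_sq_le (n : ℕ) : Nat.log 2 (4 * n ^ 2) ≤ 2 * Nat.log 2 n + 3 := by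
  refine Nat.lt_succ_iff.1 (Nat.log_lt_of_lt_pow' (by omega) ?_)
  have h := Nat.lt_pow_succ_log_self (b := 2) (by norm_num) n
  have h2 : n ^ 2 < (2 ^ (Nat.log 2 n + 1)) ^ 2 := Nat.pow_lt_pow_left h (by norm_num)
  calc 4 * n ^ 2 < 4 * (2 ^ (Nat.log 2 n + 1)) ^ 2 := by omega
    _ = 2 ^ (2 * Nat.log 2 n + 3 + 1) := by ring

/-- The number of `k`-rich lines of a grid over a prime field. -/
theorem card_mul_pow_le {p : ℕ} [CharP F p] (hn : n ^ 2 ≤ p) (hX : X.card ≤ n)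
    (hX' : X'.card ≤ n) (h0 : ∀ x ∈ X, x ≠ 0) (hk : 2 ≤ k) (hL : ∀ l ∈ L, IsRich X X' k l) :
    L.card * k ^ 4 ≤ 2 ^ 58 * n ^ 5 * (1 + Nat.log 2 n) := by
  rcases L.eq_empty_or_nonempty with rfl | ⟨l₀, hl₀⟩
  · simp
  have hkn : k ≤ n := (hL l₀ hl₀).trans ((Finset.card_filter_le _ _).trans hX)
  have hM0 : 0 < L.card := Finset.card_pos.2 ⟨l₀, hl₀⟩
  have htriv : L.card * k ^ 2 ≤ 2 * n ^ 4 := by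
    have h1 := card_mul_le_sq hL
    have h2 : (X.card * X'.card) ^ 2 ≤ (n * n) ^ 2 := Nat.pow_le_pow_left (Nat.mul_le_mul hX hX') 2
    have h3 : k ^ 2 ≤ 2 * (k * (k - 1)) := by
      have : k ≤ 2 * (k - 1) := by omega
      nlinarith
    calc L.card * k ^ 2 ≤ L.card * (2 * (k * (k - 1))) := Nat.mul_le_mul_left _ h3
      _ = 2 * (L.card * (k * (k - 1))) := by ring
      _ ≤ 2 * (n * n) ^ 2 := by omega
      _ = 2 * n ^ 4 := by ring
  have hn0 : 0 < n := by omega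
  have hl1 : n ^ 5 ≤ n ^ 5 * (1 + Nat.log 2 n) := Nat.le_mul_of_pos_right _ (by omega)
  by_cases hkk : k ^ 2 ≤ n
  · have h1 : L.card * k ^ 4 ≤ 2 * n ^ 5 := by
      calc L.card * k ^ 4 = (L.card * k ^ 2) * k ^ 2 := by ring
        _ ≤ (2 * n ^ 4) * n := Nat.mul_le_mul htriv hkk
        _ = 2 * n ^ 5 := by ring
    rw [mul_assoc]
    omega
  push Not at hkk
  set M := L.card with hM
  have hN : n * M ≤ 2 * n ^ 4 := by nlinarith
  set s := Nat.sqrt (n * M) + 1 with hs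
  have hsN : n * M ≤ s ^ 2 := by
    have := Nat.lt_succ_sqrt (n * M)
    rw [pow_two]
    exact this.le
  have hNpos : 0 < n * M := Nat.mul_pos hn0 hM0
  have hsq : Nat.sqrt (n * M) * Nat.sqrt (n * M) ≤ n * M := Nat.sqrt_le _
  have hsq1 : 1 ≤ Nat.sqrt (n * M) := Nat.sqrt_pos.2 hNpos
  have hs4 : s ^ 2 ≤ 4 * (n * M) := by nlinarith
  have hsn : s ≤ 4 * n ^ 2 := by
    have : Nat.sqrt (n * M) ≤ 2 * n ^ 2 := by
      by_contra hcon
      push Not at hcon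
      have : (2 * n ^ 2) * (2 * n ^ 2) < n * M :=
        (Nat.mul_lt_mul'' hcon hcon).trans_le hsq
      nlinarith
    nlinarith
  have hX'k := sq_le_card_mul_sum_aligned hL
  have hIc : (X ×ˢ L).card ≤ n * M := by
    rw [Finset.card_product]
    exact Nat.mul_le_mul_right _ hX
  have hT := sum_aligned_le (p := p) (κ := 2 * n ^ 2 / k) (s := s) (by omega) (X ×ˢ L)
    (fun i hi => h0 _ (Finset.mem_product.1 hi).1) (hIc.trans hsN) (fun j₁ h₁ j₂ _ hne =>
      (Nat.le_div_iff_mul_le (by omega)).2 (card_aligned_le hL hX hX' hk h₁ hne))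
  have hκ : 2 * n ^ 2 / k * k ≤ 2 * n ^ 2 := Nat.div_mul_le_self _ _
  set κ := 2 * n ^ 2 / k
  have hlog : Nat.log 2 s ≤ 3 * (1 + Nat.log 2 n) := by
    have := log_four_mul_sq_le n
    have := Nat.log_mono_right (b := 2) hsn
    omega
  set Λ := Nat.log 2 s
  have key : (M * k) ^ 2 ≤ n * (2 ^ 25 * s ^ 3) + n * (κ * (8 * Λ) * (n * M)) := by
    refine hX'k.trans ?_
    rw [← mul_add]
    exact Nat.mul_le_mul hX' (hT.trans (Nat.add_le_add_left (Nat.mul_le_mul_left _ hIc) _))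
  rcases le_total (n * (κ * (8 * Λ) * (n * M))) (n * (2 ^ 25 * s ^ 3)) with hc | hc
  · have h1 : (M * k) ^ 2 ≤ 2 ^ 26 * (n * s ^ 3) := by
      calc _ ≤ n * (2 ^ 25 * s ^ 3) + n * (2 ^ 25 * s ^ 3) := by omega
        _ = _ := by ring
    have h2 : M ^ 3 * (M * k ^ 4) ≤ M ^ 3 * (2 ^ 58 * n ^ 5) := by
      calc M ^ 3 * (M * k ^ 4) = ((M * k) ^ 2) ^ 2 := by ring
        _ ≤ (2 ^ 26 * (n * s ^ 3)) ^ 2 := Nat.pow_le_pow_left h1 2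
        _ = 2 ^ 52 * n ^ 2 * (s ^ 2) ^ 3 := by ring
        _ ≤ 2 ^ 52 * n ^ 2 * (4 * (n * M)) ^ 3 :=
          Nat.mul_le_mul_left _ (Nat.pow_le_pow_left hs4 3)
        _ = M ^ 3 * (2 ^ 58 * n ^ 5) := by ring
    have h3 := Nat.le_of_mul_le_mul_left h2 (by positivity)
    rw [mul_assoc]
    omega
  · have h1 : M * (M * k ^ 4) ≤ M * (96 * n ^ 5 * (1 + Nat.log 2 n)) := by
      calc M * (M * k ^ 4) = (M * k) ^ 2 * (k * k) := by ring
        _ ≤ (2 * (n * (κ * (8 * Λ) * (n * M)))) * (k * n) :=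
          Nat.mul_le_mul (by omega) (Nat.mul_le_mul_left _ hkn)
        _ = M * (16 * n ^ 3 * (κ * k) * Λ) := by ring
        _ ≤ M * (16 * n ^ 3 * (2 * n ^ 2) * (3 * (1 + Nat.log 2 n))) := by gcongr
        _ = _ := by ring
    have h3 := Nat.le_of_mul_le_mul_left h1 hM0
    rw [mul_assoc] at h3 ⊢
    omega

end RichLines

namespace MoebiusCurves

open RichLines

variable {F : Type*} [Field F]

/-- The points of `A × A` on the curve `(x + b)⁻¹ = (y + b')⁻¹ + d`, where `w = (b, b', d)`. -/
noncomputable def points (A : Finset F) (w : F × F × F) : Finset (F × F) :=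
  (A ×ˢ A).filter fun q =>
    q.1 + w.1 ≠ 0 ∧ q.2 + w.2.1 ≠ 0 ∧ (q.1 + w.1)⁻¹ = (q.2 + w.2.1)⁻¹ + w.2.2

variable {A : Finset F} {k : ℕ} {W : Finset (F × F × F)}

lemma mem_points {w : F × F × F} {q : F × F} : q ∈ points A w ↔ (q.1 ∈ A ∧ q.2 ∈ A) ∧
    q.1 + w.1 ≠ 0 ∧ q.2 + w.2.1 ≠ 0 ∧ (q.1 + w.1)⁻¹ = (q.2 + w.2.1)⁻¹ + w.2.2 := by
  rw [points, Finset.mem_filter, Finset.mem_product]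

lemma injOn_fst_points (w : F × F × F) : Set.InjOn Prod.fst (points A w : Set (F × F)) := by
  rintro ⟨a, b⟩ h ⟨a', b'⟩ h' e
  rw [Finset.mem_coe, mem_points] at h h'
  simp only at e h h'
  subst e
  have : (b + w.2.1)⁻¹ = (b' + w.2.1)⁻¹ := by linear_combination h'.2.2.2 - h.2.2.2
  rw [add_right_cancel (inv_injective this)]

lemma card_points_le (w : F × F × F) : (points A w).card ≤ A.card :=
  Finset.card_le_card_of_injOn Prod.fst (fun _ h => (mem_points.1 h).1.1) (injOn_fst_points w)

/-- Inverting the two axes at a point `q` of the curve turns it into this line. -/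
def lineAt (q : F × F) (w : F × F × F) : F × F :=
  (((q.1 + w.1) / (q.2 + w.2.1)) ^ 2, ((q.1 + w.1) - (q.2 + w.2.1)) / (q.2 + w.2.1) ^ 2)

/-- The inverses of the nonzero elements of `A - a`. -/
noncomputable def invSub (A : Finset F) (a : F) : Finset F :=
  (A.erase a).image fun x => (x - a)⁻¹

lemma card_invSub_le (a : F) : (invSub A a).card ≤ A.card :=
  Finset.card_image_le.trans (Finset.card_le_card (Finset.erase_subset _ _))

lemma ne_zero_of_mem_invSub {a x : F} (h : x ∈ invSub A a) : x ≠ 0 := by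
  obtain ⟨y, hy, rfl⟩ := Finset.mem_image.1 h
  exact inv_ne_zero (sub_ne_zero.2 (Finset.ne_of_mem_erase hy))

lemma isRich_lineAt {q₀ : F × F} {w : F × F × F} (hq₀ : q₀ ∈ points A w)
    (hk : k ≤ (points A w).card) :
    IsRich (invSub A q₀.1) (invSub A q₀.2) (k - 1) (lineAt q₀ w) := by
  have h1 : k - 1 ≤ ((points A w).erase q₀).card :=
    (Nat.sub_le_sub_right hk 1).trans Finset.pred_card_le_card_erase
  refine h1.trans (Finset.card_le_card_of_injOn (fun q => (q.1 - q₀.1)⁻¹) ?_ ?_)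
  · intro q hq
    rw [Finset.mem_coe, Finset.mem_erase] at hq
    have hq1 : q.1 ≠ q₀.1 := fun h => hq.1 (injOn_fst_points w hq.2 hq₀ h)
    have hq2 : q.2 ≠ q₀.2 := by
      intro h
      have a := mem_points.1 hq.2
      have b := mem_points.1 hq₀
      rw [h] at a
      exact hq1 (add_right_cancel (inv_injective (a.2.2.2.trans b.2.2.2.symm)))
    have a := mem_points.1 hq.2
    have b := mem_points.1 hq₀
    rw [Finset.mem_coe, Finset.mem_filter]
    refine ⟨Finset.mem_image.2 ⟨q.1, Finset.mem_erase.2 ⟨hq1, a.1.1⟩, rfl⟩,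
      Finset.mem_image.2 ⟨q.2, Finset.mem_erase.2 ⟨hq2, a.1.2⟩, ?_⟩⟩
    obtain ⟨-, a1, a2, a3⟩ := a
    obtain ⟨-, b1, b2, b3⟩ := b
    have e : (q.1 + w.1)⁻¹ - (q₀.1 + w.1)⁻¹ = (q.2 + w.2.1)⁻¹ - (q₀.2 + w.2.1)⁻¹ := by
      linear_combination a3 - b3
    have c1 : q.1 - q₀.1 ≠ 0 := sub_ne_zero.2 hq1
    have c2 : q.2 - q₀.2 ≠ 0 := sub_ne_zero.2 hq2
    simp only [lineAt]
    have e1 : q.1 + w.1 = (q.1 - q₀.1) + (q₀.1 + w.1) := by ring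
    have e2 : q.2 + w.2.1 = (q.2 - q₀.2) + (q₀.2 + w.2.1) := by ring
    rw [e1] at e a1
    rw [e2] at e a2
    generalize q.1 - q₀.1 = u at *
    generalize q₀.1 + w.1 = y at *
    generalize q.2 - q₀.2 = u' at *
    generalize q₀.2 + w.2.1 = y' at *
    field_simp at e ⊢
    linear_combination -e
  · intro q hq q' hq' e
    refine injOn_fst_points w (Finset.mem_of_mem_erase hq) (Finset.mem_of_mem_erase hq') ?_
    simpa using e

lemma card_le_two_mul_card_image_lineAt {q : F × F} (h0 : ∀ w ∈ W, w.2.2 ≠ 0)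
    (hq : ∀ w ∈ W, q ∈ points A w) : W.card ≤ 2 * (W.image (lineAt q)).card := by
  have hne : ∀ w ∈ W, q.1 + w.1 ≠ q.2 + w.2.1 := by
    intro w hw h
    have := (mem_points.1 (hq w hw)).2.2.2
    rw [h] at this
    exact h0 w hw (by linear_combination -this)
  refine Finset.card_le_mul_card_image _ _ fun l hl => ?_
  obtain ⟨w₀, hw₀, rfl⟩ := Finset.mem_image.1 hl
  set σ : F × F × F → F := fun w => (q.1 + w.1) / (q.2 + w.2.1) with hσ
  refine le_trans (Finset.card_le_card_of_injOn (t := {σ w₀, -σ w₀}) σ ?_ ?_) Finset.card_le_two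
  · intro w hw
    rw [Finset.mem_coe, Finset.mem_filter] at hw
    have : σ w ^ 2 = σ w₀ ^ 2 := congrArg Prod.fst hw.2
    simpa using sq_eq_sq_iff_eq_or_eq_neg.1 this
  · intro w hw w' hw' e
    rw [Finset.mem_coe, Finset.mem_filter] at hw hw'
    have hc := congrArg Prod.snd (hw.2.trans hw'.2.symm)
    have a := mem_points.1 (hq w hw.1)
    have b := mem_points.1 (hq w' hw'.1)
    have hn := hne w hw.1
    obtain ⟨-, a1, a2, a3⟩ := a
    obtain ⟨-, b1, b2, b3⟩ := b
    simp only [lineAt, hσ] at hc e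
    have hy : q.1 + w.1 = q.1 + w'.1 ∧ q.2 + w.2.1 = q.2 + w'.2.1 := by
      generalize q.1 + w.1 = y at *
      generalize q.2 + w.2.1 = z at *
      generalize q.1 + w'.1 = y' at *
      generalize q.2 + w'.2.1 = z' at *
      have e1 : y * z' = y' * z := by
        field_simp at e
        linear_combination e
      have e2 : (y - z) * z' ^ 2 = (y' - z') * z ^ 2 := by
        field_simp at hc
        linear_combination hc
      have e3 : (y - z) * z' * (z' - z) = 0 := by
        linear_combination e2 - z * e1
      have e4 : z = z' := by
        rcases mul_eq_zero.1 e3 with h | h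
        · exact absurd h (mul_ne_zero (sub_ne_zero.2 hn) b2)
        · exact (sub_eq_zero.1 h).symm
      subst e4
      exact ⟨mul_right_cancel₀ a2 e1, rfl⟩
    have h1 := add_left_cancel hy.1
    have h2 := add_left_cancel hy.2
    rw [h1, h2] at a3
    have h3 : w.2.2 = w'.2.2 := by linear_combination b3 - a3
    exact Prod.ext h1 (Prod.ext h2 h3)

theorem card_mul_pow_le {p : ℕ} [CharP F p] (hA : A.card ^ 2 ≤ p) (hk : 3 ≤ k)
    (h0 : ∀ w ∈ W, w.2.2 ≠ 0) (hW : ∀ w ∈ W, k ≤ (points A w).card) :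
    W.card * k ^ 5 ≤ 2 ^ 63 * A.card ^ 7 * (1 + Nat.log 2 A.card) := by
  set Λ := 1 + Nat.log 2 A.card
  have h1 : W.card * k ≤ ∑ q ∈ A ×ˢ A, (W.filter fun w => q ∈ points A w).card := by
    have h2 : ∀ w ∈ W, k ≤ ((A ×ˢ A).filter fun q => q ∈ points A w).card := by
      intro w hw
      refine (hW w hw).trans (Finset.card_le_card fun q hq => ?_)
      exact Finset.mem_filter.2 ⟨Finset.mem_product.2 (mem_points.1 hq).1, hq⟩
    refine (card_mul_le_card_filter_product (fun w q => q ∈ points A w) h2).trans (le_of_eq ?_)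
    rw [Finset.card_filter, Finset.sum_product_right]
    exact Finset.sum_congr rfl fun q _ => (Finset.card_filter _ _).symm
  have h2 : ∀ q ∈ A ×ˢ A, (W.filter fun w => q ∈ points A w).card * k ^ 4 ≤
      2 ^ 63 * A.card ^ 5 * Λ := by
    intro q _
    set V := W.filter fun w => q ∈ points A w
    have hV := card_le_two_mul_card_image_lineAt (W := V) (q := q) (A := A)
      (fun w hw => h0 w (Finset.mem_filter.1 hw).1) (fun w hw => (Finset.mem_filter.1 hw).2)
    have hL := RichLines.card_mul_pow_le (p := p) (k := k - 1) (L := V.image (lineAt q)) hA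
      (card_invSub_le q.1) (card_invSub_le q.2) (fun x => ne_zero_of_mem_invSub) (by omega) (by
        intro l hl
        obtain ⟨w, hw, rfl⟩ := Finset.mem_image.1 hl
        exact isRich_lineAt (Finset.mem_filter.1 hw).2 (hW w (Finset.mem_filter.1 hw).1))
    have hk2 : k ^ 4 ≤ (2 * (k - 1)) ^ 4 := Nat.pow_le_pow_left (by omega) 4
    calc V.card * k ^ 4 ≤ (2 * (V.image (lineAt q)).card) * (2 * (k - 1)) ^ 4 :=
          Nat.mul_le_mul hV hk2
      _ = 2 ^ 5 * ((V.image (lineAt q)).card * (k - 1) ^ 4) := by ring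
      _ ≤ 2 ^ 5 * (2 ^ 58 * A.card ^ 5 * Λ) := Nat.mul_le_mul_left _ hL
      _ = _ := by ring
  calc W.card * k ^ 5 = (W.card * k) * k ^ 4 := by ring
    _ ≤ (∑ q ∈ A ×ˢ A, (W.filter fun w => q ∈ points A w).card) * k ^ 4 :=
      Nat.mul_le_mul_right _ h1
    _ ≤ ∑ q ∈ A ×ˢ A, 2 ^ 63 * A.card ^ 5 * Λ := by
      rw [Finset.sum_mul]
      exact Finset.sum_le_sum h2
    _ = _ := by
      rw [Finset.sum_const, Finset.card_product, smul_eq_mul]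
      ring

/-- The fifth moment of the number of points over the curves with at least three points. -/
theorem sum_card_points_pow_le {p : ℕ} [CharP F p] (hA : A.card ^ 2 ≤ p)
    (h0 : ∀ w ∈ W, w.2.2 ≠ 0) (hW : ∀ w ∈ W, 3 ≤ (points A w).card) :
    ∑ w ∈ W, (points A w).card ^ 5 ≤ 2 ^ 68 * A.card ^ 7 * (1 + Nat.log 2 A.card) ^ 2 := by
  set Λ := 1 + Nat.log 2 A.card with hΛ
  have hmaps : ∀ w ∈ W, Nat.log 2 (points A w).card ∈ Finset.range Λ := fun w _ =>
    Finset.mem_range.2 (by have := Nat.log_mono_right (b := 2) (card_points_le (A := A) w); omega)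
  rw [← Finset.sum_fiberwise_of_maps_to hmaps]
  have h1 : ∀ j ∈ Finset.range Λ, ∑ w ∈ W.filter (fun w => Nat.log 2 (points A w).card = j),
      (points A w).card ^ 5 ≤ 2 ^ 68 * A.card ^ 7 * Λ := by
    intro j _
    set V := W.filter fun w => Nat.log 2 (points A w).card = j
    have hV : ∀ w ∈ V, w ∈ W ∧ Nat.log 2 (points A w).card = j := fun w hw =>
      Finset.mem_filter.1 hw
    have h2 := card_mul_pow_le (p := p) (k := max 3 (2 ^ j)) (W := V) hA (le_max_left _ _)
      (fun w hw => h0 w (hV w hw).1) (fun w hw => max_le (hW w (hV w hw).1) (by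
        rw [← (hV w hw).2]
        have := hW w (hV w hw).1
        exact Nat.pow_log_le_self 2 (by omega)))
    calc ∑ w ∈ V, (points A w).card ^ 5 ≤ ∑ w ∈ V, (2 * max 3 (2 ^ j)) ^ 5 := by
          refine Finset.sum_le_sum fun w hw => Nat.pow_le_pow_left ?_ 5
          have h3 := Nat.lt_pow_succ_log_self (b := 2) (by norm_num) (points A w).card
          rw [(hV w hw).2, pow_succ] at h3
          have := le_max_right 3 (2 ^ j)
          omega
      _ = 2 ^ 5 * (V.card * max 3 (2 ^ j) ^ 5) := by
        rw [Finset.sum_const, smul_eq_mul]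
        ring
      _ ≤ 2 ^ 5 * (2 ^ 63 * A.card ^ 7 * Λ) := Nat.mul_le_mul_left _ h2
      _ = _ := by ring
  calc _ ≤ ∑ j ∈ Finset.range Λ, 2 ^ 68 * A.card ^ 7 * Λ := Finset.sum_le_sum h1
    _ = _ := by
      rw [Finset.sum_const, Finset.card_range, smul_eq_mul]
      ring

end MoebiusCurves

namespace MoebiusCurves

variable {F : Type*} [Field F] {A B : Finset F}

/-- The number of solutions of `(a + b)⁻¹ = (a' + b')⁻¹ + d` with `a, a' ∈ A`, `b, b' ∈ B`. -/
noncomputable def solutionCount (A B : Finset F) (d : F) : ℕ :=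
  ∑ v ∈ B ×ˢ B, (points A (v.1, v.2, d)).card

lemma solutionCount_le_card_mul_sq (d : F) : solutionCount A B d ≤ A.card * B.card ^ 2 := by
  refine (Finset.sum_le_card_nsmul _ _ _ fun v _ => card_points_le _).trans (le_of_eq ?_)
  rw [Finset.card_product, smul_eq_mul]
  ring

lemma solutionCount_le_sq_mul_card (d : F) : solutionCount A B d ≤ A.card ^ 2 * B.card := by
  rw [solutionCount, ← Finset.card_sigma (B ×ˢ B) fun v => points A (v.1, v.2, d), pow_two,
    ← Finset.card_product, ← Finset.card_product]
  refine Finset.card_le_card_of_injOn (fun z => (z.2, z.1.1)) ?_ ?_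
  · rintro ⟨⟨b, b'⟩, q⟩ h
    simp only [Finset.coe_sigma, Set.mem_sigma_iff, Finset.mem_coe, mem_points,
      Finset.mem_product] at h ⊢
    exact ⟨h.2.1, h.1.1⟩
  · rintro ⟨⟨b, b'⟩, q⟩ h ⟨⟨c, c'⟩, q'⟩ h' e
    simp only [Finset.coe_sigma, Set.mem_sigma_iff, Finset.mem_coe, mem_points,
      Finset.mem_product, Prod.mk.injEq] at h h' e
    obtain ⟨rfl, rfl⟩ := e
    have h1 : (q.2 + b')⁻¹ = (q.2 + c')⁻¹ := by
      linear_combination h'.2.2.2.2 - h.2.2.2.2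
    rw [add_left_cancel (inv_injective h1)]

lemma sum_solutionCount_le [Fintype F] :
    ∑ d, solutionCount A B d ≤ A.card ^ 2 * B.card ^ 2 := by
  simp only [solutionCount]
  rw [← Finset.sum_product', ← Finset.card_sigma (Finset.univ ×ˢ (B ×ˢ B)) fun z : F × F × F =>
    points A (z.2.1, z.2.2, z.1), pow_two, pow_two, ← Finset.card_product, ← Finset.card_product,
    ← Finset.card_product]
  refine Finset.card_le_card_of_injOn (fun z => (z.2, z.1.2)) ?_ ?_
  · rintro ⟨⟨d, b, b'⟩, q⟩ h
    simp only [Finset.coe_sigma, Set.mem_sigma_iff, Finset.mem_coe, mem_points,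
      Finset.mem_product] at h ⊢
    exact ⟨h.2.1, h.1.2⟩
  · rintro ⟨⟨d, b, b'⟩, q⟩ h ⟨⟨e, c, c'⟩, q'⟩ h' he
    simp only [Finset.coe_sigma, Set.mem_sigma_iff, Finset.mem_coe, mem_points,
      Finset.mem_product, Prod.mk.injEq] at h h' he
    obtain ⟨rfl, rfl, rfl⟩ := he
    have h1 : d = e := by linear_combination h'.2.2.2.2 - h.2.2.2.2
    rw [h1]

/-- The fifth moment of `solutionCount`. -/
theorem sum_solutionCount_pow_le [Fintype F] {p : ℕ} [CharP F p] (hA : A.card ^ 2 ≤ p)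
    (hA0 : A.Nonempty) :
    ∑ d, solutionCount A B d ^ 5 ≤
      2 ^ 73 * A.card ^ 7 * B.card ^ 8 * (1 + Nat.log 2 A.card) ^ 2 := by
  have hn0 : 0 < A.card := hA0.card_pos
  set n := A.card with hn
  set m := B.card with hm
  set Λ := 1 + Nat.log 2 n with hΛ
  let rich : F → Finset (F × F) := fun d =>
    (B ×ˢ B).filter fun v => 3 ≤ (points A (v.1, v.2, d)).card
  let poor : F → Finset (F × F) := fun d =>
    (B ×ˢ B).filter fun v => ¬ 3 ≤ (points A (v.1, v.2, d)).card
  let Nr : F → ℕ := fun d => ∑ v ∈ rich d, (points A (v.1, v.2, d)).card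
  let Ns : F → ℕ := fun d => ∑ v ∈ poor d, (points A (v.1, v.2, d)).card
  have hsplit : ∀ d, solutionCount A B d = Nr d + Ns d := fun d =>
    (Finset.sum_filter_add_sum_filter_not _ _ _).symm
  have hBB : (B ×ˢ B).card = m ^ 2 := by rw [Finset.card_product, pow_two]
  have hrich : ∑ d ∈ Finset.univ.erase 0, Nr d ^ 5 ≤ m ^ 8 * (2 ^ 68 * n ^ 7 * Λ ^ 2) := by
    have h1 : ∀ d, Nr d ^ 5 ≤ m ^ 8 * ∑ v ∈ rich d, (points A (v.1, v.2, d)).card ^ 5 := by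
      intro d
      refine (pow_sum_le_card_mul_sum_pow (fun _ _ => Nat.zero_le _) 4).trans
        (Nat.mul_le_mul_right _ ?_)
      calc (rich d).card ^ 4 ≤ (m ^ 2) ^ 4 :=
            Nat.pow_le_pow_left ((Finset.card_filter_le _ _).trans hBB.le) 4
        _ = m ^ 8 := by ring
    refine (Finset.sum_le_sum fun d _ => h1 d).trans ?_
    rw [← Finset.mul_sum]
    refine Nat.mul_le_mul_left _ ?_
    set W : Finset (F × F × F) := ((Finset.univ.erase 0).sigma rich).image
      fun z => (z.2.1, z.2.2, z.1) with hW
    have h2 := sum_card_points_pow_le (A := A) (W := W) (p := p) hA (by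
        intro w hw
        obtain ⟨z, hz, rfl⟩ := Finset.mem_image.1 hw
        exact Finset.ne_of_mem_erase (Finset.mem_sigma.1 hz).1) (by
        intro w hw
        obtain ⟨z, hz, rfl⟩ := Finset.mem_image.1 hw
        exact (Finset.mem_filter.1 (Finset.mem_sigma.1 hz).2).2)
    refine le_trans (le_of_eq ?_) h2
    rw [hW, Finset.sum_image, Finset.sum_sigma]
    rintro ⟨d, v⟩ _ ⟨d', v'⟩ _ e
    simp only [Prod.mk.injEq] at e
    obtain ⟨e1, e2, rfl⟩ := e
    rw [Prod.ext e1 e2]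
  have hpoor : ∑ d ∈ Finset.univ.erase 0, Ns d ^ 5 ≤ 4 * n ^ 6 * m ^ 8 := by
    have h1 : ∀ d, Ns d ^ 5 ≤ 4 * n ^ 4 * m ^ 6 * solutionCount A B d := by
      intro d
      have h2 : Ns d ≤ m ^ 2 * 2 := by
        refine (Finset.sum_le_card_nsmul _ _ 2 fun v hv => ?_).trans
          (Nat.mul_le_mul_right _ ((Finset.card_filter_le _ _).trans hBB.le))
        have := (Finset.mem_filter.1 hv).2
        omega
      have h3 : Ns d ≤ solutionCount A B d := by rw [hsplit]; omega
      have h4 : Ns d ≤ n ^ 2 * m := h3.trans (solutionCount_le_sq_mul_card d)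
      calc Ns d ^ 5 = Ns d ^ 2 * Ns d ^ 2 * Ns d := by ring
        _ ≤ (m ^ 2 * 2) ^ 2 * (n ^ 2 * m) ^ 2 * solutionCount A B d := by gcongr
        _ = _ := by ring
    calc _ ≤ ∑ d ∈ Finset.univ.erase 0, 4 * n ^ 4 * m ^ 6 * solutionCount A B d :=
          Finset.sum_le_sum fun d _ => h1 d
      _ ≤ ∑ d, 4 * n ^ 4 * m ^ 6 * solutionCount A B d :=
        Finset.sum_le_sum_of_subset (Finset.erase_subset _ _)
      _ ≤ 4 * n ^ 4 * m ^ 6 * (n ^ 2 * m ^ 2) := by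
        rw [← Finset.mul_sum]
        exact Nat.mul_le_mul_left _ sum_solutionCount_le
      _ = _ := by ring
  have hzero : solutionCount A B 0 ^ 5 ≤ n ^ 7 * m ^ 8 := by
    have h1 := solutionCount_le_card_mul_sq (A := A) (B := B) 0
    have h2 := solutionCount_le_sq_mul_card (A := A) (B := B) 0
    calc solutionCount A B 0 ^ 5 = solutionCount A B 0 ^ 3 * solutionCount A B 0 ^ 2 := by ring
      _ ≤ (n * m ^ 2) ^ 3 * (n ^ 2 * m) ^ 2 := by gcongr
      _ = _ := by ring
  rw [← Finset.add_sum_erase _ _ (Finset.mem_univ (0 : F))]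
  have hsum : ∑ d ∈ Finset.univ.erase 0, solutionCount A B d ^ 5 ≤
      16 * (∑ d ∈ Finset.univ.erase 0, Nr d ^ 5 + ∑ d ∈ Finset.univ.erase 0, Ns d ^ 5) := by
    rw [← Finset.sum_add_distrib, Finset.mul_sum]
    refine Finset.sum_le_sum fun d _ => ?_
    rw [hsplit]
    exact add_pow_le (Nat.zero_le _) (Nat.zero_le _) 5
  have hΛ1 : 1 ≤ Λ ^ 2 := Nat.one_le_pow _ _ (by omega)
  have hu : n ^ 6 * m ^ 8 ≤ n ^ 7 * m ^ 8 :=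
    Nat.mul_le_mul_right _ (Nat.pow_le_pow_right hn0 (by norm_num))
  have hv : n ^ 7 * m ^ 8 ≤ n ^ 7 * m ^ 8 * Λ ^ 2 := Nat.le_mul_of_pos_right _ hΛ1
  have e1 : m ^ 8 * (2 ^ 68 * n ^ 7 * Λ ^ 2) = 2 ^ 68 * (n ^ 7 * m ^ 8 * Λ ^ 2) := by ring
  have e2 : 4 * n ^ 6 * m ^ 8 = 4 * (n ^ 6 * m ^ 8) := by ring
  have e3 : 2 ^ 73 * n ^ 7 * m ^ 8 * Λ ^ 2 = 2 ^ 73 * (n ^ 7 * m ^ 8 * Λ ^ 2) := by ring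
  rw [e1] at hrich
  rw [e2] at hpoor
  rw [e3]
  omega

end MoebiusCurves

lemma sum_mul_le_rpow_mul_rpow_mul_rpow {ι : Type*} (s : Finset ι) {r N : ι → ℝ}
    (hr : ∀ i, 0 ≤ r i) (hN : ∀ i, 0 ≤ N i) :
    ∑ i ∈ s, r i * N i ≤ (∑ i ∈ s, r i) ^ ((3 : ℝ) / 5) * (∑ i ∈ s, r i ^ 2) ^ ((1 : ℝ) / 5) *
      (∑ i ∈ s, N i ^ 5) ^ ((1 : ℝ) / 5) := by
  have h1 := Real.inner_le_weight_mul_Lp_of_nonneg s (p := 5 / 2) (by norm_num) r N hr hN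
  have h2 := Real.sum_mul_le_sqrt_mul_sqrt s r fun i => N i ^ ((5 : ℝ) / 2)
  have h3 : ∀ i ∈ s, (N i ^ ((5 : ℝ) / 2)) ^ 2 = N i ^ 5 := by
    intro i _
    rw [← Real.rpow_natCast, ← Real.rpow_mul (hN i), ← Real.rpow_natCast]
    norm_num
  rw [Finset.sum_congr rfl h3] at h2
  have hr2 : 0 ≤ ∑ i ∈ s, r i ^ 2 := Finset.sum_nonneg fun i _ => sq_nonneg _
  have hN5 : 0 ≤ ∑ i ∈ s, N i ^ 5 := Finset.sum_nonneg fun i _ => pow_nonneg (hN i) 5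
  have hrs : 0 ≤ ∑ i ∈ s, r i := Finset.sum_nonneg fun i _ => hr i
  refine h1.trans ?_
  rw [mul_assoc]
  refine mul_le_mul (le_of_eq (by norm_num)) ?_ (Real.rpow_nonneg (Finset.sum_nonneg fun i _ =>
    mul_nonneg (hr i) (Real.rpow_nonneg (hN i) _)) _) (Real.rpow_nonneg hrs _)
  refine (Real.rpow_le_rpow (Finset.sum_nonneg fun i _ =>
    mul_nonneg (hr i) (Real.rpow_nonneg (hN i) _)) h2 (by norm_num)).trans (le_of_eq ?_)
  rw [Real.mul_rpow (Real.sqrt_nonneg _) (Real.sqrt_nonneg _), Real.sqrt_eq_rpow,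
    Real.sqrt_eq_rpow, ← Real.rpow_mul hr2, ← Real.rpow_mul hN5]
  norm_num

lemma one_add_natLog_le {n : ℕ} (hn : 0 < n) :
    ((1 + Nat.log 2 n : ℕ) : ℝ) ≤ 2 * Real.log (2 * n) := by
  have hn' : (0 : ℝ) < n := by exact_mod_cast hn
  have h1 := Real.natLog_le_logb n 2
  have hl2 : (1 : ℝ) / 2 < Real.log 2 := by linarith [Real.log_two_gt_d9]
  have hln : 0 ≤ Real.log n := Real.log_natCast_nonneg n
  rw [Real.logb, Nat.cast_ofNat, le_div_iff₀ (by linarith)] at h1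
  rw [Real.log_mul (by norm_num) hn'.ne']
  push_cast
  have h0 : (0 : ℝ) ≤ Nat.log 2 n := Nat.cast_nonneg _
  nlinarith

/-- The number of representations of `d` as a difference of two elements of `C`. -/
noncomputable def diffCount {p : ℕ} (C : Finset (ZMod p)) (d : ZMod p) : ℕ :=
  ((C ×ˢ C).filter fun c => c.2 - c.1 = d).card

section DiffCount

variable {p : ℕ} [NeZero p] (C : Finset (ZMod p))

lemma sum_diffCount : ∑ d, diffCount C d = C.card ^ 2 := by
  rw [pow_two, ← Finset.card_product]
  exact (Finset.card_eq_sum_card_fiberwise fun _ _ => Finset.mem_coe.2 (Finset.mem_univ _)).symm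

lemma sum_diffCount_sq_le : ∑ d, diffCount C d ^ 2 ≤ _root_.addEnergy C := by
  have h1 : ∑ d, diffCount C d ^ 2 = (Finset.univ.sigma fun d : ZMod p =>
      ((C ×ˢ C).filter fun c => c.2 - c.1 = d) ×ˢ
        ((C ×ˢ C).filter fun c => c.2 - c.1 = d)).card := by
    rw [Finset.card_sigma]
    exact Finset.sum_congr rfl fun d _ => by rw [Finset.card_product, pow_two, diffCount]
  rw [h1, _root_.addEnergy]
  refine Finset.card_le_card_of_injOn
    (fun z => ((z.2.1.2, z.2.2.1), (z.2.2.2, z.2.1.1))) ?_ ?_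
  · rintro ⟨d, ⟨a, b⟩, ⟨c, e⟩⟩ h
    simp only [Finset.coe_sigma, Set.mem_sigma_iff, Finset.mem_coe, Finset.mem_product,
      Finset.mem_filter] at h ⊢
    exact ⟨⟨⟨h.2.1.1.2, h.2.2.1.1⟩, h.2.2.1.2, h.2.1.1.1⟩, by
      linear_combination h.2.1.2 - h.2.2.2⟩
  · rintro ⟨d, ⟨a, b⟩, ⟨c, e⟩⟩ h ⟨d', ⟨a', b'⟩, ⟨c', e'⟩⟩ h' he
    simp only [Finset.coe_sigma, Set.mem_sigma_iff, Finset.mem_coe, Finset.mem_product,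
      Finset.mem_filter] at h h'
    simp only [Prod.mk.injEq] at he
    obtain ⟨⟨rfl, rfl⟩, rfl, rfl⟩ := he
    have : d = d' := by rw [← h.2.1.2, ← h'.2.1.2]
    rw [this]

end DiffCount

lemma card_solutions_le {p : ℕ} [Fact p.Prime] (A B C : Finset (ZMod p)) :
    ((((A ×ˢ A) ×ˢ (B ×ˢ B)) ×ˢ (C ×ˢ C)).filter fun q =>
      q.1.1.1 + q.1.2.1 ≠ 0 ∧ q.1.1.2 + q.1.2.2 ≠ 0 ∧
      (q.1.1.1 + q.1.2.1)⁻¹ + q.2.1 = (q.1.1.2 + q.1.2.2)⁻¹ + q.2.2).card ≤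
      ∑ d, diffCount C d * MoebiusCurves.solutionCount A B d := by
  have h1 : ∑ d, diffCount C d * MoebiusCurves.solutionCount A B d =
      ∑ c ∈ C ×ˢ C, MoebiusCurves.solutionCount A B (c.2 - c.1) := by
    rw [← Finset.sum_fiberwise (C ×ˢ C) (fun c => c.2 - c.1)]
    refine Finset.sum_congr rfl fun d _ => ?_
    rw [Finset.sum_congr rfl fun c hc => by rw [(Finset.mem_filter.1 hc).2], Finset.sum_const,
      smul_eq_mul, diffCount]
  have h2 : ∑ c ∈ C ×ˢ C, MoebiusCurves.solutionCount A B (c.2 - c.1) =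
      (((C ×ˢ C) ×ˢ (B ×ˢ B)).sigma fun z =>
        MoebiusCurves.points A (z.2.1, z.2.2, z.1.2 - z.1.1)).card := by
    rw [Finset.card_sigma, Finset.sum_product (C ×ˢ C)]
    rfl
  rw [h1, h2]
  refine Finset.card_le_card_of_injOn (fun q => ⟨(q.2, q.1.2), q.1.1⟩) ?_ ?_
  · intro q h
    rw [Finset.mem_coe, Finset.mem_filter] at h
    simp only [Finset.mem_product, Finset.coe_sigma, Set.mem_sigma_iff, Finset.mem_coe,
      MoebiusCurves.mem_points] at h ⊢
    exact ⟨⟨h.1.2, h.1.1.2⟩, h.1.1.1, h.2.1, h.2.2.1, by linear_combination h.2.2.2⟩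
  · rintro ⟨⟨a, b⟩, c⟩ _ ⟨⟨a', b'⟩, c'⟩ _ e
    simp only [Sigma.mk.injEq, Prod.mk.injEq, heq_eq_eq] at e
    obtain ⟨⟨rfl, rfl⟩, rfl⟩ := e
    rfl

theorem stmt_10 :
    ∃ K : ℝ, 0 < K ∧ ∃ c₀ : ℝ, 0 < c₀ ∧
      ∀ (p : ℕ) [Fact p.Prime], ∀ A B C : Finset (ZMod p),
        A.Nonempty → B.Nonempty → C.Nonempty → (A.card : ℝ) ≤ Real.sqrt p →
        (((((A ×ˢ A) ×ˢ (B ×ˢ B)) ×ˢ (C ×ˢ C)).filter fun q =>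
              q.1.1.1 + q.1.2.1 ≠ 0 ∧ q.1.1.2 + q.1.2.2 ≠ 0 ∧
              (q.1.1.1 + q.1.2.1)⁻¹ + q.2.1 = (q.1.1.2 + q.1.2.2)⁻¹ + q.2.2).card : ℝ)
          ≤ K * (A.card : ℝ) ^ ((7 : ℝ) / 5) * (B.card : ℝ) ^ ((8 : ℝ) / 5)
              * (C.card : ℝ) ^ ((6 : ℝ) / 5) * (addEnergy C : ℝ) ^ ((1 : ℝ) / 5)
              * Real.log (2 * A.card) ^ c₀ := by
  refine ⟨2 ^ 15, by norm_num, 2 / 5, by norm_num, ?_⟩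
  intro p _ A B C hA _ _ hAp
  have hn0 : 0 < A.card := hA.card_pos
  have hA2 : A.card ^ 2 ≤ p := by
    have h := (Real.le_sqrt (Nat.cast_nonneg _) (Nat.cast_nonneg _)).1 hAp
    exact_mod_cast h
  refine (Nat.cast_le.2 (card_solutions_le A B C)).trans ?_
  push_cast
  refine (sum_mul_le_rpow_mul_rpow_mul_rpow Finset.univ (fun d => Nat.cast_nonneg _)
    (fun d => Nat.cast_nonneg _)).trans ?_
  have h1 : ∑ d, (diffCount C d : ℝ) = (C.card : ℝ) ^ 2 := by exact_mod_cast sum_diffCount C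
  have h2 : ∑ d, (diffCount C d : ℝ) ^ 2 ≤ _root_.addEnergy C := by
    exact_mod_cast sum_diffCount_sq_le C
  have h3 : ∑ d, (MoebiusCurves.solutionCount A B d : ℝ) ^ 5 ≤
      2 ^ 73 * (A.card : ℝ) ^ 7 * (B.card : ℝ) ^ 8 * (2 * Real.log (2 * A.card)) ^ 2 := by
    have h : ∑ d, (MoebiusCurves.solutionCount A B d : ℝ) ^ 5 ≤ 2 ^ 73 * (A.card : ℝ) ^ 7 *
        (B.card : ℝ) ^ 8 * ((1 + Nat.log 2 A.card : ℕ) : ℝ) ^ 2 := by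
      exact_mod_cast MoebiusCurves.sum_solutionCount_pow_le (A := A) (B := B) (p := p) hA2 hA
    refine h.trans ?_
    gcongr
    exact one_add_natLog_le hn0
  have hlog : 0 ≤ Real.log (2 * A.card) := Real.log_nonneg (by
    have : (1 : ℝ) ≤ A.card := by exact_mod_cast hn0
    linarith)
  set n := (A.card : ℝ)
  set m := (B.card : ℝ)
  set ℓ := Real.log (2 * n)
  have hn : 0 ≤ n := Nat.cast_nonneg _
  have hm : 0 ≤ m := Nat.cast_nonneg _
  have h4 : (2 ^ 73 * n ^ 7 * m ^ 8 * (2 * ℓ) ^ 2) ^ ((1 : ℝ) / 5) =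
      2 ^ 15 * n ^ ((7 : ℝ) / 5) * m ^ ((8 : ℝ) / 5) * ℓ ^ ((2 : ℝ) / 5) := by
    have e : (2 : ℝ) ^ 73 * n ^ 7 * m ^ 8 * (2 * ℓ) ^ 2 = (2 ^ 15) ^ 5 * n ^ 7 * m ^ 8 * ℓ ^ 2 := by
      ring
    have hpow : ∀ (x : ℝ) (k : ℕ), 0 ≤ x → (x ^ k) ^ ((1 : ℝ) / 5) = x ^ ((k : ℝ) / 5) := by
      intro x k hx
      rw [← Real.rpow_natCast, ← Real.rpow_mul hx]
      congr 1
      ring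
    rw [e, Real.mul_rpow (by positivity) (by positivity), Real.mul_rpow (by positivity)
      (by positivity), Real.mul_rpow (by positivity) (by positivity), hpow _ _ hn, hpow _ _ hm,
      hpow _ _ hlog, hpow _ _ (by positivity)]
    norm_num
  have h5 : ((C.card : ℝ) ^ 2) ^ ((3 : ℝ) / 5) = (C.card : ℝ) ^ ((6 : ℝ) / 5) := by
    rw [← Real.rpow_natCast, ← Real.rpow_mul (Nat.cast_nonneg _)]
    norm_num
  rw [h1, h5]
  calc _ ≤ (C.card : ℝ) ^ ((6 : ℝ) / 5) * (_root_.addEnergy C : ℝ) ^ ((1 : ℝ) / 5) *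
        (2 ^ 73 * n ^ 7 * m ^ 8 * (2 * ℓ) ^ 2) ^ ((1 : ℝ) / 5) := by gcongr
    _ = _ := by
      rw [h4]
      ring
end

section
/- There exists an absolute constant C > 0 such that for every odd prime p the following holds: if a and H are positive integers such that each of a, a+1, …, a+H−1 is a nonzero quadratic residue modulo p, then H ≤ C · p^{1/4} · log p. Equivalently, the maximal number of consecutive quadratic residues modulo p is O(p^{1/4} log p). -/
open Polynomial

section Stepanov

variable {K : Type*} [Field K]

/-- The first-order operator for which
`f * derivative (r * f ^ g) = twistedDeriv f g r * f ^ g`. -/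
noncomputable def twistedDeriv (f : K[X]) (c : K) : K[X] →ₗ[K] K[X] :=
  LinearMap.mulLeft K f ∘ₗ derivative + LinearMap.mulLeft K (C c * derivative f)

theorem twistedDeriv_apply (f : K[X]) (c : K) (r : K[X]) :
    twistedDeriv f c r = f * derivative r + C c * derivative f * r := rfl

theorem natDegree_lt_of_mem_degreeLT {n : ℕ} (hn : 0 < n) {q : K[X]} (hq : q ∈ degreeLT K n) :
    q.natDegree < n := by
  by_cases h0 : q = 0
  · simpa [h0] using hn
  · exact (natDegree_lt_iff_degree_lt h0).2 (mem_degreeLT.1 hq)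

theorem twistedDeriv_zero_mul_pow_mul (f r u : K[X]) (g : ℕ) (hu : derivative u = 0) :
    twistedDeriv f 0 (r * f ^ g * u) = twistedDeriv f g r * f ^ g * u := by
  rcases g with _ | g
  · simp [twistedDeriv_apply, hu]; ring
  · simp [twistedDeriv_apply, hu, derivative_pow]; ring

theorem twistedDeriv_zero_pow_mul_pow_mul (f r u : K[X]) (g k : ℕ) (hu : derivative u = 0) :
    (twistedDeriv f 0 ^ k) (r * f ^ g * u) = (twistedDeriv f g ^ k) r * f ^ g * u := by
  induction k with
  | zero => simp
  | succ k ih =>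
    rw [pow_succ', Module.End.mul_apply, ih, twistedDeriv_zero_mul_pow_mul _ _ _ _ hu, pow_succ',
      Module.End.mul_apply]

theorem twistedDeriv_mem_degreeLT {f : K[X]} {d n : ℕ} (hf : f.natDegree ≤ d) (c : K) {r : K[X]}
    (hr : r ∈ degreeLT K n) : twistedDeriv f c r ∈ degreeLT K (n + d) := by
  by_cases h0 : r = 0
  · simp [h0]
  have hrn : r.natDegree < n := (natDegree_lt_iff_degree_lt h0).2 (mem_degreeLT.1 hr)
  have key : ∀ q : K[X], q.natDegree < n + d → q ∈ degreeLT K (n + d) := by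
    intro q hq
    exact mem_degreeLT.2 (lt_of_le_of_lt degree_le_natDegree (by exact_mod_cast hq))
  rw [twistedDeriv_apply]
  refine Submodule.add_mem _ (key _ ?_) (key _ ?_)
  · have := natDegree_mul_le (p := f) (q := derivative r)
    have := natDegree_derivative_le r
    omega
  · have h1 := natDegree_mul_le (p := C c * derivative f) (q := r)
    have h2 := natDegree_C_mul_le c (derivative f)
    have h3 := natDegree_derivative_le f
    omega

theorem twistedDeriv_pow_mem_degreeLT {f : K[X]} {d n : ℕ} (hf : f.natDegree ≤ d) (c : K)
    {r : K[X]} (hr : r ∈ degreeLT K n) (k : ℕ) :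
    (twistedDeriv f c ^ k) r ∈ degreeLT K (n + k * d) := by
  induction k with
  | zero => simpa using hr
  | succ k ih =>
    rw [pow_succ', Module.End.mul_apply, Nat.succ_mul, ← add_assoc]
    exact twistedDeriv_mem_degreeLT hf c ih

/-- Multiplicity is detected by iterating `f d/dx` at a point where `f` does not vanish. -/
theorem eval_twistedDeriv_zero_pow (f G : K[X]) (a : K) (m : ℕ) :
    eval a ((twistedDeriv f 0 ^ m) ((X - C a) ^ m * G)) = m.factorial * eval a f ^ m * eval a G := by
  induction m generalizing G with
  | zero => simp
  | succ m ih =>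
    have h : twistedDeriv f 0 ((X - C a) ^ (m + 1) * G) =
        (X - C a) ^ m * ((m + 1 : K[X]) * f * G + (X - C a) * f * derivative G) := by
      simp [twistedDeriv_apply, derivative_pow]; ring
    rw [pow_succ, Module.End.mul_apply, h, ih]
    simp [Nat.factorial_succ, pow_succ]; ring

theorem le_rootMultiplicity_of_eval_twistedDeriv {p : ℕ} [Fact p.Prime] [CharP K p]
    {f F : K[X]} {a : K} {M : ℕ} (hM : M ≤ p) (hF : F ≠ 0) (hfa : eval a f ≠ 0)
    (h : ∀ k < M, eval a ((twistedDeriv f 0 ^ k) F) = 0) : M ≤ F.rootMultiplicity a := by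
  by_contra! hlt
  obtain ⟨G, hG, hG'⟩ := exists_eq_pow_rootMultiplicity_mul_and_not_dvd F hF a
  have h1 := h _ hlt
  set m := F.rootMultiplicity a
  rw [hG, eval_twistedDeriv_zero_pow] at h1
  have h2 : ((m.factorial : ℕ) : K) ≠ 0 := by
    rw [Ne, CharP.cast_eq_zero_iff K p, (Fact.out : p.Prime).dvd_factorial]
    omega
  have h3 : eval a G ≠ 0 := fun h => hG' (dvd_iff_isRoot.2 h)
  exact mul_ne_zero (mul_ne_zero h2 (pow_ne_zero _ hfa)) h3 h1

theorem eq_zero_of_sq_mul_eq_C_mul_sq {f r s : K[X]} {α c : K} (hα : f.rootMultiplicity α = 1)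
    (hc : c ≠ 0) (h : r ^ 2 * f = C c * s ^ 2) : r = 0 ∧ s = 0 := by
  have hf : f ≠ 0 := by rintro rfl; simp at hα
  have hr : r = 0 := by
    by_contra hr
    have hs : s ≠ 0 := by
      rintro rfl
      simp [hr, hf] at h
    have h1 := congrArg (rootMultiplicity α) h
    rw [sq, sq, rootMultiplicity_mul (mul_ne_zero (mul_ne_zero hr hr) hf),
      rootMultiplicity_mul (mul_ne_zero (C_ne_zero.2 hc) (mul_ne_zero hs hs)),
      rootMultiplicity_mul (mul_ne_zero hr hr), rootMultiplicity_mul (mul_ne_zero hs hs), hα,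
      rootMultiplicity_C] at h1
    omega
  subst hr
  refine ⟨rfl, ?_⟩
  simpa [hc] using h.symm

theorem eq_zero_of_X_pow_dvd_add_mul_pow {p : ℕ} [Fact p.Prime] [CharP K p] {f r s : K[X]}
    {α : K} {d D g : ℕ} (hg : 2 * g + 1 = p) (hf : f.natDegree ≤ d) (hD : 2 * D + d ≤ p)
    (hD0 : 0 < D)
    (hα : f.rootMultiplicity α = 1) (hf0 : eval 0 f ≠ 0) (hr : r ∈ degreeLT K D)
    (hs : s ∈ degreeLT K D) (h : X ^ p ∣ r + s * f ^ g) : r = 0 ∧ s = 0 := by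
  have hdvd : X ^ p ∣ f ^ p - C (eval 0 f ^ p) := by
    rw [C_pow, ← sub_pow_char]
    apply pow_dvd_pow_of_dvd
    have := X_sub_C_dvd_sub_C_eval (a := (0 : K)) (p := f)
    simpa using this
  have h1 : X ^ p ∣ r ^ 2 * f - C (eval 0 f ^ p) * s ^ 2 := by
    have e : r ^ 2 * f - C (eval 0 f ^ p) * s ^ 2 =
        (r + s * f ^ g) * ((r - s * f ^ g) * f) + (f ^ p - C (eval 0 f ^ p)) * s ^ 2 := by
      have : f ^ p = f ^ g * f ^ g * f := by rw [← hg]; ring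
      rw [this]; ring
    rw [e]
    exact dvd_add (h.mul_right _) (hdvd.mul_right _)
  have h2 : r ^ 2 * f - C (eval 0 f ^ p) * s ^ 2 = 0 := by
    by_contra hne
    have h3 := natDegree_le_of_dvd h1 hne
    rw [natDegree_X_pow] at h3
    have h4 := natDegree_sub_le (r ^ 2 * f) (C (eval 0 f ^ p) * s ^ 2)
    have h5 := natDegree_mul_le (p := r ^ 2) (q := f)
    have h6 := natDegree_C_mul_le (eval 0 f ^ p) (s ^ 2)
    rw [natDegree_pow] at h5 h6
    have := natDegree_lt_of_mem_degreeLT hD0 hr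
    have := natDegree_lt_of_mem_degreeLT hD0 hs
    omega
  exact eq_zero_of_sq_mul_eq_C_mul_sq hα (pow_ne_zero _ hf0) (sub_eq_zero.1 h2)

theorem eq_zero_of_sum_eq_zero {p : ℕ} [Fact p.Prime] [CharP K p] {f : K[X]}
    {α : K} {d D g J : ℕ} (hg : 2 * g + 1 = p) (hf : f.natDegree ≤ d) (hD : 2 * D + d ≤ p)
    (hD0 : 0 < D) (hα : f.rootMultiplicity α = 1) (hf0 : eval 0 f ≠ 0) (r s : Fin J → K[X])
    (hr : ∀ j, r j ∈ degreeLT K D) (hs : ∀ j, s j ∈ degreeLT K D)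
    (h : ∑ j, (r j + s j * f ^ g) * X ^ (p * (j : ℕ)) = 0) : r = 0 ∧ s = 0 := by
  induction J with
  | zero => exact ⟨Subsingleton.elim _ _, Subsingleton.elim _ _⟩
  | succ J ih =>
    have e : ∑ j : Fin J, (r j.succ + s j.succ * f ^ g) * X ^ (p * ((j.succ : Fin (J + 1)) : ℕ)) =
        X ^ p * ∑ j : Fin J, (r j.succ + s j.succ * f ^ g) * X ^ (p * (j : ℕ)) := by
      rw [Finset.mul_sum]
      refine Finset.sum_congr rfl fun j _ => ?_
      rw [Fin.val_succ, Nat.mul_succ, pow_add]; ring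
    rw [Fin.sum_univ_succ, e] at h
    simp only [Fin.val_zero, mul_zero, pow_zero, mul_one] at h
    have h0 := eq_zero_of_X_pow_dvd_add_mul_pow hg hf hD hD0 hα hf0 (hr 0) (hs 0)
      ((Dvd.intro _ rfl : X ^ p ∣ X ^ p * _).neg_right.trans (eq_neg_of_add_eq_zero_left h).symm.dvd)
    rw [h0.1, h0.2, zero_mul, zero_add, zero_add] at h
    have h1 := ih (fun j => r j.succ) (fun j => s j.succ) (fun j => hr _) (fun j => hs _)
      ((mul_eq_zero.1 h).resolve_left (pow_ne_zero _ X_ne_zero))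
    constructor <;> funext j <;> refine Fin.cases ?_ (fun i => ?_) j
    · exact h0.1
    · exact congrFun h1.1 i
    · exact h0.2
    · exact congrFun h1.2 i

theorem finrank_degreeLT (n : ℕ) : Module.finrank K (degreeLT K n) = n := by
  rw [(degreeLTEquiv K n).finrank_eq, Module.finrank_fin_fun]

instance finite_degreeLT (n : ℕ) : Module.Finite K (degreeLT K n) :=
  Module.Finite.equiv (degreeLTEquiv K n).symm

theorem exists_stepanov_coefficients {f : K[X]} {d D J M : ℕ} (hf : f.natDegree ≤ d) (c ε : K)
    (hcard : M * (D + M * d + J) < 2 * D * J) :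
    ∃ r s : Fin J → K[X], (∀ j, r j ∈ degreeLT K D) ∧ (∀ j, s j ∈ degreeLT K D) ∧
      ¬ (r = 0 ∧ s = 0) ∧ ∀ k < M, ∑ j : Fin J, ((twistedDeriv f 0 ^ k) (r j) +
        C ε * (twistedDeriv f c ^ k) (s j)) * X ^ (j : ℕ) = 0 := by
  let V := (Fin J → degreeLT K D) × (Fin J → degreeLT K D)
  let φ (k : Fin M) : V →ₗ[K] K[X] := ∑ j : Fin J, LinearMap.mulRight K (X ^ (j : ℕ)) ∘ₗ
    ((twistedDeriv f 0 ^ (k : ℕ)) ∘ₗ (degreeLT K D).subtype ∘ₗ LinearMap.proj j ∘ₗ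
        LinearMap.fst K _ _ +
      ε • ((twistedDeriv f c ^ (k : ℕ)) ∘ₗ (degreeLT K D).subtype ∘ₗ LinearMap.proj j ∘ₗ
        LinearMap.snd K _ _))
  have hφ (k : Fin M) (v : V) : φ k v = ∑ j : Fin J, ((twistedDeriv f 0 ^ (k : ℕ)) (v.1 j) +
        C ε * (twistedDeriv f c ^ (k : ℕ)) (v.2 j)) * X ^ (j : ℕ) := by
    simp only [φ, LinearMap.sum_apply, smul_eq_C_mul, LinearMap.comp_apply, LinearMap.add_apply,
      LinearMap.smul_apply, LinearMap.mulRight_apply]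
    rfl
  have hmem (k : Fin M) (v : V) : φ k v ∈ degreeLT K (D + M * d + J) := by
    rw [hφ]
    refine Submodule.sum_mem _ fun j _ => ?_
    have hq : ∀ (c' : K) (u : degreeLT K D),
        (twistedDeriv f c' ^ (k : ℕ)) u ∈ degreeLT K (D + M * d) := fun c' u =>
      degreeLT_mono (by gcongr; exact k.2.le) (twistedDeriv_pow_mem_degreeLT hf c' u.2 k)
    have hu : (twistedDeriv f 0 ^ (k : ℕ)) (v.1 j) + C ε * (twistedDeriv f c ^ (k : ℕ)) (v.2 j) ∈
        degreeLT K (D + M * d) := by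
      rw [← smul_eq_C_mul]
      exact Submodule.add_mem _ (hq _ _) (Submodule.smul_mem _ _ (hq _ _))
    generalize (twistedDeriv f 0 ^ (k : ℕ)) (v.1 j) +
      C ε * (twistedDeriv f c ^ (k : ℕ)) (v.2 j) = u at hu
    by_cases hu0 : u = 0
    · simp [hu0]
    · rw [mem_degreeLT] at hu ⊢
      rw [← natDegree_lt_iff_degree_lt hu0] at hu
      rw [← natDegree_lt_iff_degree_lt (mul_ne_zero hu0 (pow_ne_zero _ X_ne_zero)),
        natDegree_mul_X_pow _ hu0]
      omega
  let Φ : V →ₗ[K] (Fin M → degreeLT K (D + M * d + J)) :=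
    LinearMap.pi fun k => (φ k).codRestrict _ (hmem k)
  have hker : LinearMap.ker Φ ≠ ⊥ := by
    apply LinearMap.ker_ne_bot_of_finrank_lt
    simp only [V, Module.finrank_prod, Module.finrank_pi_fintype, finrank_degreeLT,
      Finset.sum_const, Finset.card_univ, Fintype.card_fin, smul_eq_mul]
    nlinarith
  obtain ⟨v, hv, hv0⟩ := (Submodule.ne_bot_iff _).1 hker
  refine ⟨fun j => v.1 j, fun j => v.2 j, fun j => (v.1 j).2, fun j => (v.2 j).2, ?_, ?_⟩
  · rintro ⟨h1, h2⟩
    apply hv0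
    ext1 <;> funext j <;> apply Subtype.ext
    · exact congrFun h1 j
    · exact congrFun h2 j
  · intro k hk
    rw [← hφ ⟨k, hk⟩ v]
    exact congrArg Subtype.val (congrFun (LinearMap.mem_ker.1 hv) ⟨k, hk⟩)

theorem mul_card_le_natDegree [DecidableEq K] {F : K[X]} {A : Finset K} {M : ℕ}
    (h : ∀ a ∈ A, M ≤ F.rootMultiplicity a) : M * A.card ≤ F.natDegree := by
  calc M * A.card = ∑ _a ∈ A, M := by rw [Finset.sum_const, smul_eq_mul, mul_comm]
    _ ≤ ∑ a ∈ A, F.roots.count a := Finset.sum_le_sum fun a ha => by simpa using h a ha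
    _ ≤ ∑ a ∈ A ∪ F.roots.toFinset, F.roots.count a :=
      Finset.sum_le_sum_of_subset Finset.subset_union_left
    _ = F.roots.card := Multiset.sum_count_eq_card fun a ha => by simp [Multiset.mem_toFinset.2 ha]
    _ ≤ F.natDegree := card_roots' F

end Stepanov

theorem stepanov_mul_card_le {p : ℕ} [Fact p.Prime] {f : (ZMod p)[X]} {α ε : ZMod p}
    {d D g J M : ℕ} (hg : 2 * g + 1 = p) (hf : f.natDegree ≤ d) (hD : 2 * D + d ≤ p)
    (hD0 : 0 < D) (hM : M ≤ p) (hcard : M * (D + M * d + J) < 2 * D * J)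
    (hα : f.rootMultiplicity α = 1) (hf0 : eval 0 f ≠ 0) (hε : ε ≠ 0) :
    M * (Finset.univ.filter fun a : ZMod p => eval a f ^ g = ε).card ≤ J * p + d * g := by
  obtain ⟨r, s, hr, hs, hne, hvan⟩ := exists_stepanov_coefficients hf (g : ZMod p) ε hcard
  set F : (ZMod p)[X] := ∑ j, (r j + s j * f ^ g) * X ^ (p * (j : ℕ)) with hFdef
  have hF : F ≠ 0 := fun h => hne (eq_zero_of_sum_eq_zero hg hf hD hD0 hα hf0 r s hr hs h)
  have hg0 : g ≠ 0 := by
    rintro rfl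
    exact (Fact.out : p.Prime).ne_one (by omega)
  have hdeg : F.natDegree ≤ J * p + d * g := by
    refine natDegree_sum_le_of_forall_le _ _ fun j _ => ?_
    have h1 := natDegree_mul_le (p := r j + s j * f ^ g) (q := X ^ (p * (j : ℕ)))
    have h2 := natDegree_add_le (r j) (s j * f ^ g)
    have h3 := natDegree_mul_le (p := s j) (q := f ^ g)
    have h4 : (f ^ g).natDegree ≤ d * g := by
      rw [natDegree_pow, mul_comm]; gcongr
    have h5 := natDegree_lt_of_mem_degreeLT hD0 (hr j)
    have h6 := natDegree_lt_of_mem_degreeLT hD0 (hs j)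
    have h7 : p * (j : ℕ) + p ≤ J * p := by
      calc p * (j : ℕ) + p = (j + 1) * p := by ring
        _ ≤ J * p := by gcongr; exact j.2
    rw [natDegree_X_pow] at h1
    omega
  refine (mul_card_le_natDegree fun a ha => ?_).trans hdeg
  have ha' : eval a f ^ g = ε := (Finset.mem_filter.1 ha).2
  have hfa : eval a f ≠ 0 := by
    intro h
    rw [h, zero_pow hg0] at ha'
    exact hε ha'.symm
  refine le_rootMultiplicity_of_eval_twistedDeriv hM hF hfa fun k hk => ?_
  have hu (j : ℕ) : derivative (X ^ (p * j) : (ZMod p)[X]) = 0 := by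
    simp [derivative_X_pow]
  have hL : (twistedDeriv f 0 ^ k) F = ∑ j, ((twistedDeriv f 0 ^ k) (r j) +
      (twistedDeriv f g ^ k) (s j) * f ^ g) * X ^ (p * (j : ℕ)) := by
    rw [hFdef, map_sum]
    refine Finset.sum_congr rfl fun j _ => ?_
    rw [add_mul, map_add, twistedDeriv_zero_pow_mul_pow_mul _ _ _ _ _ (hu j), add_mul]
    have := twistedDeriv_zero_pow_mul_pow_mul f (r j) _ 0 k (hu j)
    simp only [pow_zero, mul_one, Nat.cast_zero] at this
    rw [this]
  have h0 := congrArg (eval a) (hvan k hk)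
  rw [eval_finsetSum, eval_zero] at h0
  rw [hL, eval_finsetSum]
  refine Eq.trans (Finset.sum_congr rfl fun j _ => ?_) h0
  simp only [eval_mul, eval_add, eval_pow, eval_X, eval_C, ha', pow_mul, ZMod.pow_card]
  ring

theorem two_mul_card_eval_pow_eq_le {p : ℕ} [Fact p.Prime] {f : (ZMod p)[X]} {α ε : ZMod p}
    {d g : ℕ} (hg : 2 * g + 1 = p) (hf : f.natDegree ≤ d) (hd : 0 < d)
    (hp : 4 * (d + 1 + p.sqrt) ≤ p) (hα : f.rootMultiplicity α = 1) (hf0 : eval 0 f ≠ 0)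
    (hε : ε ≠ 0) :
    2 * (Finset.univ.filter fun a : ZMod p => eval a f ^ g = ε).card ≤ p + 27 * d * p.sqrt := by
  have hM1 : p.sqrt * p.sqrt ≤ p := Nat.sqrt_le p
  have hM2 : p ≤ p.sqrt * p.sqrt + p.sqrt + p.sqrt := Nat.sqrt_le_add p
  have hM0 : 0 < p.sqrt := Nat.sqrt_pos.2 (Fact.out : p.Prime).pos
  set M := p.sqrt
  set D := (p - d) / 2 with hDdef
  set J := M / 2 + 2 * d + 2 with hJdef
  have hD1 : 2 * D + d ≤ p := by omega
  have hD2 : p ≤ 2 * D + d + 1 := by omega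
  have hJ1 : M + 4 * d + 3 ≤ 2 * J := by omega
  have hJ2 : 2 * J ≤ M + 4 * d + 4 := by omega
  have hD3 : 3 * p + 4 * M ≤ 8 * D := by omega
  have hcard : M * (D + M * d + J) < 2 * D * J := by
    have h1 : D * (M + 4 * d + 3) ≤ 2 * D * J := by nlinarith
    have h2 : 2 * (M * J) ≤ M * (M + 4 * d + 4) := by nlinarith
    have h3 : (3 * p + 4 * M) * (4 * d + 3) ≤ 8 * D * (4 * d + 3) := by gcongr
    have h4 : M * M * d ≤ p * d := by gcongr
    have h5 : M ≤ p := by nlinarith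
    have h6 : 0 < p * d := Nat.mul_pos (by omega) hd
    nlinarith
  have key := stepanov_mul_card_le hg hf hD1 (by omega) (by nlinarith) hcard hα hf0 hε
  set N := (Finset.univ.filter fun a : ZMod p => eval a f ^ g = ε).card
  have h1 : M * (2 * N) ≤ M * (p + 27 * d * M) := by
    have h2 : 2 * J * p ≤ (M + 4 * d + 4) * p := by gcongr
    have h3 : 2 * (d * g) ≤ d * p := by nlinarith
    have h4 : (9 * d) * p ≤ (9 * d) * (M * M + M + M) := by gcongr
    have h5 : 4 * p ≤ 4 * d * p := by nlinarith
    have h6 : d * M ≤ d * (M * M) := by gcongr; nlinarith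
    nlinarith
  exact Nat.le_of_mul_le_mul_left h1 hM0

section CharacterSum

variable {p : ℕ} [Fact p.Prime]

theorem abs_sum_quadraticChar_eval_le (hp2 : p ≠ 2) {f : (ZMod p)[X]} {α : ZMod p}
    {d : ℕ} (hf : f.natDegree ≤ d) (hd : 0 < d)
    (hp : 4 * (d + 1 + p.sqrt) ≤ p) (hα : f.rootMultiplicity α = 1) (hf0 : eval 0 f ≠ 0) :
    |∑ x : ZMod p, quadraticChar (ZMod p) (eval x f)| ≤ 28 * d * p.sqrt := by
  have hchar : ringChar (ZMod p) ≠ 2 := by rwa [ZMod.ringChar_zmod_n]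
  have hodd : 2 * (p / 2) + 1 = p := by
    have := (Fact.out : p.Prime).eq_two_or_odd
    omega
  have hM0 : 0 < p.sqrt := Nat.sqrt_pos.2 (Fact.out : p.Prime).pos
  have hne : (1 : ZMod p) ≠ -1 := (Ring.neg_one_ne_one_of_char_ne_two hchar).symm
  have hpow (y : ZMod p) : (quadraticChar (ZMod p) y : ZMod p) = y ^ (p / 2) := by
    rw [quadraticChar_eq_pow_of_char_ne_two' hchar, ZMod.card]
  have h1 := two_mul_card_eval_pow_eq_le (ε := 1) hodd hf hd hp hα hf0 one_ne_zero
  have h2 := two_mul_card_eval_pow_eq_le (ε := -1) hodd hf hd hp hα hf0 (by simp)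
  have hroots : (Finset.univ.filter fun x : ZMod p => eval x f = 0).card ≤ d := by
    have hfne : f ≠ 0 := by rintro rfl; simp at hf0
    calc (Finset.univ.filter fun x : ZMod p => eval x f = 0).card ≤ f.roots.toFinset.card := by
          apply Finset.card_le_card
          intro x hx
          simpa [hfne] using hx
      _ ≤ f.roots.card := Multiset.toFinset_card_le _
      _ ≤ d := (card_roots' f).trans hf
  have hpos (x : ZMod p) : quadraticChar (ZMod p) (eval x f) =
      2 * (if eval x f ^ (p / 2) = 1 then 1 else 0) - 1 + if eval x f = 0 then 1 else 0 := by
    rw [← hpow]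
    by_cases h0 : eval x f = 0
    · simp [h0]
    · rcases quadraticChar_dichotomy h0 with h | h <;> simp [h, h0, hne.symm]
  have hneg (x : ZMod p) : -quadraticChar (ZMod p) (eval x f) =
      2 * (if eval x f ^ (p / 2) = -1 then 1 else 0) - 1 + if eval x f = 0 then 1 else 0 := by
    rw [← hpow]
    by_cases h0 : eval x f = 0
    · simp [h0]
    · rcases quadraticChar_dichotomy h0 with h | h <;> simp [h, h0, hne]
  have hcard : Fintype.card (ZMod p) = p := ZMod.card p
  have hdM : d ≤ d * p.sqrt := Nat.le_mul_of_pos_right d hM0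
  zify at h1 h2 hroots hdM
  rw [abs_le']
  constructor
  · rw [Finset.sum_congr rfl fun x _ => hpos x]
    simp only [Finset.sum_add_distrib, Finset.sum_sub_distrib, ← Finset.mul_sum, Finset.sum_boole,
      Finset.sum_const, Finset.card_univ, hcard, nsmul_eq_mul, mul_one]
    linarith
  · rw [← Finset.sum_neg_distrib, Finset.sum_congr rfl fun x _ => hneg x]
    simp only [Finset.sum_add_distrib, Finset.sum_sub_distrib, ← Finset.mul_sum, Finset.sum_boole,
      Finset.sum_const, Finset.card_univ, hcard, nsmul_eq_mul, mul_one]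
    linarith

theorem abs_sum_quadraticChar_prod_sub_le (hp2 : p ≠ 2) {T : Finset (ZMod p)} (hT : T.Nonempty)
    (h0 : 0 ∉ T) {d : ℕ} (hTd : T.card ≤ d) (hp : 4 * (d + 1 + p.sqrt) ≤ p) :
    |∑ x : ZMod p, ∏ t ∈ T, quadraticChar (ZMod p) (x - t)| ≤ 28 * d * p.sqrt := by
  obtain ⟨t, ht⟩ := hT
  have h := abs_sum_quadraticChar_eval_le hp2 (f := ∏ t ∈ T, (X - C t)) (α := t) (d := d)
    (by rwa [natDegree_finsetProd_X_sub_C_eq_card]) (by have := Finset.card_pos.2 ⟨t, ht⟩; omega) hp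
    (by rw [← count_roots, roots_prod_X_sub_C, Multiset.count_eq_one_of_mem T.nodup ht])
    (by
      rw [eval_prod, Finset.prod_ne_zero_iff]
      intro a ha
      simpa using ne_of_mem_of_not_mem ha h0)
  simpa [eval_prod, map_prod] using h

theorem two_pow_mul_card_quadraticChar_eq_le (hp2 : p ≠ 2) {T : Finset (ZMod p)}
    (h0 : 0 ∉ T) (hp : 4 * (T.card + 1 + p.sqrt) ≤ p) {ε : ℤ} (hε : ε = 1 ∨ ε = -1) :
    2 ^ T.card * (Finset.univ.filter fun x : ZMod p =>
      ∀ t ∈ T, quadraticChar (ZMod p) (x - t) = ε).card ≤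
      p + 2 ^ T.card * (28 * T.card * p.sqrt) := by
  set χ := quadraticChar (ZMod p)
  set A := Finset.univ.filter fun x : ZMod p => ∀ t ∈ T, χ (x - t) = ε with hA
  have hε2 : ε * ε = 1 := by rcases hε with rfl | rfl <;> norm_num
  have hterm (x t : ZMod p) : 0 ≤ 1 + ε * χ (x - t) := by
    rcases quadraticChar_isQuadratic (ZMod p) (x - t) with h | h | h <;>
      rcases hε with rfl | rfl <;> simp [χ, h]
  have hlow : (2 : ℤ) ^ T.card * A.card ≤ ∑ x : ZMod p, ∏ t ∈ T, (1 + ε * χ (x - t)) := by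
    calc (2 : ℤ) ^ T.card * A.card = ∑ x ∈ A, ∏ t ∈ T, (1 + ε * χ (x - t)) := by
          rw [mul_comm, ← nsmul_eq_mul, ← Finset.sum_const]
          refine Finset.sum_congr rfl fun x hx => ?_
          rw [← Finset.prod_const]
          refine Finset.prod_congr rfl fun t ht => ?_
          rw [(Finset.mem_filter.1 hx).2 t ht, hε2]
          norm_num
      _ ≤ _ := Finset.sum_le_sum_of_subset_of_nonneg (Finset.subset_univ _)
          fun x _ _ => Finset.prod_nonneg fun t _ => hterm x t
  have hup : ∑ x : ZMod p, ∏ t ∈ T, (1 + ε * χ (x - t)) ≤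
      p + 2 ^ T.card * (28 * T.card * p.sqrt) := by
    simp_rw [Finset.prod_one_add]
    rw [Finset.sum_comm, ← Finset.add_sum_erase _ _ (Finset.empty_mem_powerset T)]
    refine add_le_add (by simp) ?_
    calc ∑ S ∈ T.powerset.erase ∅, ∑ x : ZMod p, ∏ t ∈ S, ε * χ (x - t)
        ≤ ∑ S ∈ T.powerset.erase ∅, (28 * T.card * p.sqrt : ℤ) := by
          refine Finset.sum_le_sum fun S hS => ?_
          rw [Finset.mem_erase, Finset.mem_powerset] at hS
          have h := abs_sum_quadraticChar_prod_sub_le hp2 (Finset.nonempty_iff_ne_empty.2 hS.1)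
            (fun h => h0 (hS.2 h)) (Finset.card_le_card hS.2) hp
          simp_rw [Finset.prod_mul_distrib, Finset.prod_const, ← Finset.mul_sum]
          refine (le_abs_self _).trans ?_
          rw [abs_mul, abs_pow]
          have : |ε| = 1 := by rcases hε with rfl | rfl <;> simp
          rwa [this, one_pow, one_mul]
      _ ≤ ∑ S ∈ T.powerset, (28 * T.card * p.sqrt : ℤ) :=
          Finset.sum_le_sum_of_subset_of_nonneg (Finset.erase_subset _ _)
            fun _ _ _ => by positivity
      _ = 2 ^ T.card * (28 * T.card * p.sqrt) := by
          simp [Finset.card_powerset]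
  exact_mod_cast hlow.trans hup

end CharacterSum

section CoprimePairs

theorem sum_Icc_two_inv_sq_le (n : ℕ) : ∑ r ∈ Finset.Icc 2 n, (1 : ℝ) / (r : ℝ) ^ 2 ≤ 3 / 4 := by
  rcases Nat.lt_or_ge n 2 with hn | hn
  · rw [Finset.Icc_eq_empty_of_lt hn]; norm_num
  suffices h : ∑ r ∈ Finset.Icc 2 n, (1 : ℝ) / (r : ℝ) ^ 2 ≤ 3 / 4 - 1 / n by
    have : (0 : ℝ) ≤ 1 / n := by positivity
    linarith
  induction n, hn using Nat.le_induction with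
  | base => norm_num
  | succ n hn ih =>
    rw [Finset.sum_Icc_succ_top (by omega)]
    have hn0 : (0 : ℝ) < n := by positivity
    have h : (1 : ℝ) / ((n + 1 : ℕ) : ℝ) ^ 2 ≤ 1 / n - 1 / (n + 1 : ℕ) := by
      push_cast
      rw [div_sub_div _ _ hn0.ne' (by positivity), div_le_div_iff₀ (by positivity) (by positivity)]
      nlinarith
    linarith

theorem card_filter_dvd_add_mul_le {v b : ℤ} (hvb : IsCoprime v b) {r : ℕ} (hr : r.Prime) (L : ℕ) :
    ((Finset.range L).filter fun j : ℕ => (r : ℤ) ∣ v + b * j).card ≤ L / r + 1 := by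
  rw [← Finset.card_range (L / r + 1)]
  refine Finset.card_le_card_of_injOn (fun j => j / r) ?_ ?_
  · intro j hj
    have hj' := Finset.mem_range.1 (Finset.mem_filter.1 hj).1
    simpa [Nat.lt_succ_iff] using Nat.div_le_div_right hj'.le
  · intro i hi j hj hij
    have hi' := (Finset.mem_filter.1 hi).2
    have hj' := (Finset.mem_filter.1 hj).2
    have hp : Prime (r : ℤ) := Nat.prime_iff_prime_int.1 hr
    have hb : ¬ (r : ℤ) ∣ b := fun h =>
      hp.not_isUnit (hvb.isUnit_of_dvd' ((dvd_add_left (h.mul_right _)).1 hi') h)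
    have h1 : (r : ℤ) ∣ b * ((i : ℤ) - j) := by
      have := dvd_sub hi' hj'
      rwa [show v + b * (i : ℤ) - (v + b * j) = b * (i - j) by ring] at this
    have h2 : j ≡ i [MOD r] := (Nat.modEq_iff_dvd).2 ((hp.dvd_or_dvd h1).resolve_left hb)
    have h3 : j / r = i / r := hij.symm
    rw [← Nat.div_add_mod i r, ← Nat.div_add_mod j r, h3, h2]

/-- A positive proportion of the pairs formed from a primitive arithmetic progression and an
initial segment of the integers are coprime. -/
theorem mul_le_card_coprime_pairs {v b : ℤ} (hvb : IsCoprime v b) {L Q : ℕ} (hLQ : 8 * Q ≤ L) :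
    L * Q ≤ 8 * ((Finset.range L ×ˢ Finset.Icc 1 Q).filter fun z =>
      Int.gcd (v + b * z.1) z.2 = 1).card := by
  set P := (Finset.range L ×ˢ Finset.Icc 1 Q).filter fun z => Int.gcd (v + b * z.1) z.2 = 1
  set R := (Finset.Icc 2 Q).filter Nat.Prime
  have hsub : (Finset.range L ×ˢ Finset.Icc 1 Q) ⊆ P ∪ R.biUnion fun r =>
      ((Finset.range L).filter fun j : ℕ => (r : ℤ) ∣ v + b * j) ×ˢ
        ((Finset.Icc 1 Q).filter fun q => r ∣ q) := by
    intro z hz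
    by_cases hg : Int.gcd (v + b * z.1) z.2 = 1
    · exact Finset.mem_union_left _ (Finset.mem_filter.2 ⟨hz, hg⟩)
    · obtain ⟨r, hr, hrd⟩ := Nat.exists_prime_and_dvd hg
      have h1 : (r : ℤ) ∣ v + b * z.1 :=
        (Int.natCast_dvd_natCast.2 hrd).trans (Int.gcd_dvd_left _ _)
      have h2 : r ∣ z.2 := Int.natCast_dvd_natCast.1
        ((Int.natCast_dvd_natCast.2 hrd).trans (Int.gcd_dvd_right _ _))
      obtain ⟨hz1, hz2⟩ := Finset.mem_product.1 hz
      have hz2' := Finset.mem_Icc.1 hz2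
      have hrQ : r ≤ Q := (Nat.le_of_dvd hz2'.1 h2).trans hz2'.2
      refine Finset.mem_union_right _ (Finset.mem_biUnion.2 ⟨r, ?_, ?_⟩)
      · exact Finset.mem_filter.2 ⟨Finset.mem_Icc.2 ⟨hr.two_le, hrQ⟩, hr⟩
      · exact Finset.mem_product.2 ⟨Finset.mem_filter.2 ⟨hz1, h1⟩, Finset.mem_filter.2 ⟨hz2, h2⟩⟩
  have hcard : L * Q ≤ P.card + ∑ r ∈ R, (L / r + 1) * (Q / r) := by
    calc L * Q = (Finset.range L ×ˢ Finset.Icc 1 Q).card := by simp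
      _ ≤ _ := Finset.card_le_card hsub
      _ ≤ _ := Finset.card_union_le _ _
      _ ≤ _ := Nat.add_le_add_left Finset.card_biUnion_le _
      _ ≤ _ := by
        refine Nat.add_le_add_left (Finset.sum_le_sum fun r hr => ?_) _
        rw [Finset.card_product]
        refine Nat.mul_le_mul (card_filter_dvd_add_mul_le hvb (Finset.mem_filter.1 hr).2 L) ?_
        rw [← Nat.Ioc_filter_dvd_card_eq_div Q r]
        exact le_of_eq (congrArg _ rfl)
  have hsum : ((∑ r ∈ R, (L / r + 1) * (Q / r) : ℕ) : ℝ) ≤ 3 / 4 * (L * Q) + Q * Q / 2 := by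
    push_cast
    calc ∑ r ∈ R, (((L / r : ℕ) : ℝ) + 1) * ((Q / r : ℕ) : ℝ)
        ≤ ∑ r ∈ Finset.Icc 2 Q, (((L / r : ℕ) : ℝ) + 1) * ((Q / r : ℕ) : ℝ) :=
          Finset.sum_le_sum_of_subset_of_nonneg (Finset.filter_subset _ _)
            fun _ _ _ => by positivity
      _ ≤ ∑ r ∈ Finset.Icc 2 Q, ((L * Q : ℝ) * (1 / (r : ℝ) ^ 2) + Q / 2) := by
          refine Finset.sum_le_sum fun r hr => ?_
          have hr2 : (2 : ℝ) ≤ r := by exact_mod_cast (Finset.mem_Icc.1 hr).1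
          have hQr : (Q : ℝ) / r ≤ Q / 2 := by gcongr
          calc (((L / r : ℕ) : ℝ) + 1) * ((Q / r : ℕ) : ℝ)
              ≤ ((L : ℝ) / r + 1) * ((Q : ℝ) / r) := by
                gcongr <;> exact Nat.cast_div_le
            _ = (L * Q : ℝ) * (1 / (r : ℝ) ^ 2) + Q / r := by
                field_simp
            _ ≤ _ := by gcongr
      _ = (L * Q : ℝ) * ∑ r ∈ Finset.Icc 2 Q, (1 / (r : ℝ) ^ 2) + (Q - 1 : ℕ) * (Q / 2) := by
          rw [Finset.sum_add_distrib, Finset.mul_sum, Finset.sum_const, Nat.card_Icc, nsmul_eq_mul]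
          rfl
      _ ≤ (L * Q : ℝ) * (3 / 4) + Q * (Q / 2) := by
          gcongr
          · exact sum_Icc_two_inv_sq_le Q
          · omega
      _ = _ := by ring
  have hcard' : (L * Q : ℝ) ≤ P.card + ((∑ r ∈ R, (L / r + 1) * (Q / r) : ℕ) : ℝ) := by
    exact_mod_cast hcard
  have hLQ' : (8 * Q : ℝ) ≤ L := by exact_mod_cast hLQ
  have : (L * Q : ℝ) ≤ 8 * P.card := by nlinarith
  exact_mod_cast this

end CoprimePairs

theorem exists_small_coprime_multiple {p : ℕ} [Fact p.Prime] (N : ℕ) {B : ℕ} (hB : 0 < B)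
    (hBp : B < p) :
    ∃ (b : ℕ) (v : ℤ), 0 < b ∧ b ≤ B ∧ IsCoprime v b ∧ (v : ZMod p) = b * N ∧
      |v| * (B + 1) ≤ p := by
  obtain ⟨q, hq, hqB⟩ := Real.exists_rat_abs_sub_le_and_den_le ((N : ℝ) / p) hB
  have hp0 : (0 : ℝ) < p := by exact_mod_cast (Fact.out : p.Prime).pos
  have hd0 : (0 : ℝ) < q.den := by exact_mod_cast q.pos
  refine ⟨q.den, q.den * N - q.num * p, q.pos, hqB, ?_, ?_, ?_⟩
  · have h1 : IsCoprime q.num (q.den : ℤ) := by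
      rw [Int.isCoprime_iff_nat_coprime]
      exact q.reduced
    have h2 : IsCoprime (p : ℤ) (q.den : ℤ) := by
      rw [Nat.isCoprime_iff_coprime, Nat.Prime.coprime_iff_not_dvd Fact.out]
      exact Nat.not_dvd_of_pos_of_lt q.pos (by omega)
    have h3 := (h1.mul_left h2).neg_left.add_mul_left_left (N : ℤ)
    rwa [show -(q.num * (p : ℤ)) + q.den * N = q.den * N - q.num * p by ring] at h3
  · simp
  · have e : (N : ℝ) / p - q = ((q.den * N - q.num * p : ℤ) : ℝ) / (p * q.den) := by
      conv_lhs => rw [Rat.cast_def]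
      push_cast
      field_simp
    rw [e, abs_div, abs_of_pos (by positivity : (0 : ℝ) < p * q.den),
      div_le_div_iff₀ (by positivity) (by positivity)] at hq
    have h1 : |((q.den * N - q.num * p : ℤ) : ℝ)| * (B + 1) ≤ p := by
      refine le_of_mul_le_mul_right ?_ hd0
      linarith
    rw [← Int.cast_abs] at h1
    exact_mod_cast h1

/-- The fractions `(N + j) / q` attached to coprime pairs are distinct modulo `p`. -/
theorem mul_le_card_of_div_mem {p : ℕ} [Fact p.Prime] {N L Q : ℕ} (hQ : 0 < Q) (hLQ : 8 * Q ≤ L)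
    (hp : 32 * Q ^ 2 * L ≤ p) {A : Finset (ZMod p)}
    (hA : ∀ j < L, ∀ q, 0 < q → q ≤ Q → ((N + j : ℕ) : ZMod p) / (q : ZMod p) ∈ A) :
    L * Q ≤ 8 * A.card := by
  have hBp : 8 * Q < p := by nlinarith [Nat.mul_le_mul hQ hQ]
  obtain ⟨b, v, hb0, hbB, hvb, hv, hvp⟩ := exists_small_coprime_multiple (p := p) N
    (B := 8 * Q) (by omega) hBp
  refine (mul_le_card_coprime_pairs hvb hLQ).trans (Nat.mul_le_mul_left 8 ?_)
  refine Finset.card_le_card_of_injOn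
    (fun z => ((N + z.1 : ℕ) : ZMod p) / ((z.2 : ℕ) : ZMod p)) ?_ ?_
  · intro z hz
    simp only [Finset.coe_filter, Finset.mem_product, Finset.mem_range, Finset.mem_Icc,
      Set.mem_ofPred_eq] at hz
    exact hA _ hz.1.1 _ hz.1.2.1 hz.1.2.2
  · rintro ⟨i, q⟩ hz ⟨j, r⟩ hz' heq
    simp only [Finset.coe_filter, Finset.mem_product, Finset.mem_range, Finset.mem_Icc,
      Set.mem_ofPred_eq] at hz hz' heq
    obtain ⟨⟨hi, hq0, hqQ⟩, hiq⟩ := hz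
    obtain ⟨⟨hj, hr0, hrQ⟩, hjr⟩ := hz'
    have hne : ∀ n : ℕ, 0 < n → n ≤ Q → (n : ZMod p) ≠ 0 := by
      intro n hn hnQ h
      rw [ZMod.natCast_eq_zero_iff] at h
      have := Nat.le_of_dvd hn h
      omega
    rw [div_eq_div_iff (hne q hq0 hqQ) (hne r hr0 hrQ)] at heq
    have hbound : ∀ i < L, ∀ q ≤ Q, |(v + b * (i : ℤ)) * (q : ℤ)| * 2 < p := by
      intro i hi q hq
      zify at hi hq hbB hp hQ
      have h1 : |v + b * (i : ℤ)| ≤ |v| + 8 * Q * L := by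
        refine (abs_add_le _ _).trans ?_
        rw [abs_of_nonneg (by positivity : (0 : ℤ) ≤ b * i)]
        gcongr
      have h2 : |(v + b * (i : ℤ)) * (q : ℤ)| ≤ (|v| + 8 * Q * L) * Q := by
        rw [abs_mul, abs_of_nonneg (by positivity : (0 : ℤ) ≤ q)]
        gcongr
      have h3 := abs_nonneg v
      push_cast at hvp
      nlinarith
    have hdvd : (p : ℤ) ∣ (v + b * (i : ℤ)) * r - (v + b * (j : ℤ)) * q := by
      rw [← ZMod.intCast_zmod_eq_zero_iff_dvd]
      push_cast at heq ⊢
      rw [hv]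
      linear_combination (b : ZMod p) * heq
    have h0 : (v + b * (i : ℤ)) * r - (v + b * (j : ℤ)) * q = 0 := by
      refine Int.eq_zero_of_abs_lt_dvd hdvd ?_
      have h1 := hbound i hi r hrQ
      have h2 := hbound j hj q hqQ
      have := abs_sub ((v + b * (i : ℤ)) * r) ((v + b * (j : ℤ)) * q)
      linarith
    have h1 : (v + b * (i : ℤ)) * r = (v + b * (j : ℤ)) * q := sub_eq_zero.1 h0
    have hqr : q = r := by
      apply Nat.dvd_antisymm <;> rw [← Int.natCast_dvd_natCast]
      · exact (Int.isCoprime_iff_gcd_eq_one.2 hiq).symm.dvd_of_dvd_mul_left (Dvd.intro_left _ h1.symm)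
      · exact (Int.isCoprime_iff_gcd_eq_one.2 hjr).symm.dvd_of_dvd_mul_left (Dvd.intro_left _ h1)
    subst hqr
    have h2 := mul_right_cancel₀ (by omega : (q : ℤ) ≠ 0) h1
    have h3 : (i : ℤ) = j :=
      mul_left_cancel₀ (by exact_mod_cast hb0.ne' : (b : ℤ) ≠ 0) (add_left_cancel h2)
    rw [Nat.cast_injective h3]

theorem not_forall_quadraticChar_eq_one {p : ℕ} [Fact p.Prime] (hp2 : p ≠ 2) {a h u : ℕ}
    (hh : 8 ≤ h) (hph : p < 2 ^ h) (hu : p.sqrt < u ^ 2) (hp : 32 * 22 ^ 3 * u ^ 3 * h ≤ p) :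
    ¬ ∀ i < 44 * u * h, quadraticChar (ZMod p) ((a + i : ℕ) : ZMod p) = 1 := by
  intro hrun
  have hu0 : 0 < u := by
    rcases Nat.eq_zero_or_pos u with rfl | h
    · simp at hu
    · exact h
  have hhu : h * u ^ 2 ≤ u ^ 3 * h := by
    rw [mul_comm]
    gcongr
    omega
  have hu2 : 0 < u ^ 2 := by positivity
  have hhu2 : h ≤ h * u ^ 2 := Nat.le_mul_of_pos_right h hu2
  have huh2 : u ^ 2 ≤ h * u ^ 2 := Nat.le_mul_of_pos_left _ (by omega)
  have hp' : 32 * 22 ^ 3 * (u ^ 3 * h) ≤ p := by rwa [← mul_assoc]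
  have hsqrt : 4 * (h + 1 + p.sqrt) ≤ p := by omega
  set T : Finset (ZMod p) := (Finset.Icc 1 h).image fun m : ℕ => -(m : ZMod p) with hTdef
  have hTcard : T.card = h := by
    rw [hTdef, Finset.card_image_of_injOn, Nat.card_Icc, Nat.add_sub_cancel]
    intro m hm n hn hmn
    have hm' := Finset.mem_Icc.1 hm
    have hn' := Finset.mem_Icc.1 hn
    have h1 := (ZMod.natCast_eq_natCast_iff' m n p).1 (neg_injective hmn)
    rwa [Nat.mod_eq_of_lt (by omega), Nat.mod_eq_of_lt (by omega)] at h1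
  have hT0 : (0 : ZMod p) ∉ T := by
    intro h0
    obtain ⟨m, hm, hm0⟩ := Finset.mem_image.1 h0
    have hm' := Finset.mem_Icc.1 hm
    rw [neg_eq_zero, ZMod.natCast_eq_zero_iff] at hm0
    have := Nat.le_of_dvd (by omega) hm0
    omega
  set A : ℤ → Finset (ZMod p) := fun ε => Finset.univ.filter fun x : ZMod p =>
    ∀ t ∈ T, quadraticChar (ZMod p) (x - t) = ε with hAdef
  have hAcard : ∀ ε : ℤ, ε = 1 ∨ ε = -1 → (A ε).card ≤ 28 * h * p.sqrt := by
    intro ε hε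
    have h1 := two_pow_mul_card_quadraticChar_eq_le hp2 hT0 (by rwa [hTcard]) hε
    rw [hTcard] at h1
    have h2 : 2 ^ h * (A ε).card < 2 ^ h * (28 * h * p.sqrt + 1) := by
      rw [mul_add, mul_one]
      exact h1.trans_lt (by omega)
    have := Nat.lt_of_mul_lt_mul_left h2
    omega
  have hcount : 22 * u * h * (22 * u) ≤ 8 * (A 1 ∪ A (-1)).card := by
    refine mul_le_card_of_div_mem (N := a) (by omega) (by nlinarith) ?_ ?_
    · calc 32 * (22 * u) ^ 2 * (22 * u * h) = 32 * 22 ^ 3 * u ^ 3 * h := by ring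
        _ ≤ p := hp
    · intro j hj q hq0 hqQ
      have hup : u ≤ u ^ 3 * h := by
        calc u = u ^ 1 * 1 := by ring
          _ ≤ u ^ 3 * h := by gcongr <;> omega
      have hq : (q : ZMod p) ≠ 0 := by
        intro h0
        rw [ZMod.natCast_eq_zero_iff] at h0
        have := Nat.le_of_dvd hq0 h0
        omega
      have hχ : ∀ t ∈ T, quadraticChar (ZMod p) (((a + j : ℕ) : ZMod p) / q - t) =
          quadraticChar (ZMod p) (q : ZMod p) := by
        intro t ht
        obtain ⟨m, hm, rfl⟩ := Finset.mem_image.1 ht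
        have hm' := Finset.mem_Icc.1 hm
        have hlt : j + q * m < 44 * u * h := by
          have : q * m ≤ 22 * u * h := Nat.mul_le_mul hqQ hm'.2
          have : 44 * u * h = 22 * u * h + 22 * u * h := by ring
          omega
        have e : ((a + (j + q * m) : ℕ) : ZMod p) =
            (((a + j : ℕ) : ZMod p) / q - -(m : ZMod p)) * q := by
          push_cast
          field_simp
          ring
        have h1 := hrun _ hlt
        rw [e, map_mul] at h1
        have h2 := quadraticChar_sq_one hq
        linear_combination quadraticChar (ZMod p) (q : ZMod p) * h1 -
          quadraticChar (ZMod p) (((a + j : ℕ) : ZMod p) / q - -(m : ZMod p)) * h2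
      rcases quadraticChar_dichotomy hq with h1 | h1 <;> rw [h1] at hχ
      · exact Finset.mem_union_left _ (by simpa [hAdef] using hχ)
      · exact Finset.mem_union_right _ (by simpa [hAdef] using hχ)
  have h1 := Finset.card_union_le (A 1) (A (-1))
  have h2 := hAcard 1 (Or.inl rfl)
  have h3 := hAcard (-1) (Or.inr rfl)
  have h4 : h * p.sqrt ≤ h * u ^ 2 := by gcongr
  nlinarith

theorem one_le_log_natCast {p : ℕ} (hp : 3 ≤ p) : 1 ≤ Real.log p := by
  have hp3 : (3 : ℝ) ≤ p := by exact_mod_cast hp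
  rw [Real.le_log_iff_exp_le (by linarith)]
  exact Real.exp_one_lt_three.le.trans hp3

theorem natLog_add_one_le {p : ℕ} (hp : 3 ≤ p) : ((Nat.log 2 p + 1 : ℕ) : ℝ) ≤ 3 * Real.log p := by
  have h1 := one_le_log_natCast hp
  have h2 : ((Nat.log 2 p : ℕ) : ℝ) * Real.log 2 ≤ Real.log p := by
    rw [← Real.log_pow]
    apply Real.log_le_log (by positivity)
    exact_mod_cast Nat.pow_log_le_self 2 (by omega)
  have h3 := Real.log_two_gt_d9
  push_cast
  nlinarith [(Nat.cast_nonneg (Nat.log 2 p) : (0 : ℝ) ≤ _)]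

theorem sqrt_sqrt_add_one_le {p : ℕ} (hp : 1 ≤ p) :
    ((p.sqrt.sqrt + 1 : ℕ) : ℝ) ≤ 2 * (p : ℝ) ^ ((1 : ℝ) / 4) := by
  have hp1 : (1 : ℝ) ≤ p := by exact_mod_cast hp
  have h1 : (1 : ℝ) ≤ (p : ℝ) ^ ((1 : ℝ) / 4) := Real.one_le_rpow hp1 (by norm_num)
  have h2 : (p.sqrt.sqrt : ℝ) ≤ (p : ℝ) ^ ((1 : ℝ) / 4) := by
    have h3 : p.sqrt.sqrt ^ 4 ≤ p := by
      calc p.sqrt.sqrt ^ 4 = (p.sqrt.sqrt ^ 2) ^ 2 := by ring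
        _ ≤ p.sqrt ^ 2 := by gcongr; exact Nat.sqrt_le' _
        _ ≤ p := Nat.sqrt_le' _
    calc (p.sqrt.sqrt : ℝ) = ((p.sqrt.sqrt : ℝ) ^ (4 : ℕ)) ^ ((1 : ℝ) / 4) := by
          rw [← Real.rpow_natCast, ← Real.rpow_mul (by positivity)]
          norm_num
      _ ≤ (p : ℝ) ^ ((1 : ℝ) / 4) := by
          gcongr
          exact_mod_cast h3
  push_cast
  linarith

theorem eventually_mul_sqrt_sqrt_pow_mul_log_le (c : ℕ) :
    ∀ᶠ p : ℕ in Filter.atTop, c * (p.sqrt.sqrt + 1) ^ 3 * (Nat.log 2 p + 1) ≤ p := by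
  have hlog := (isLittleO_log_rpow_atTop (r := 1 / 4) (by norm_num)).def
    (c := 1 / (24 * (c + 1))) (by positivity)
  filter_upwards [tendsto_natCast_atTop_atTop.eventually hlog, Filter.eventually_ge_atTop 3]
    with p hp hp3
  have hp0 : (0 : ℝ) ≤ p := by positivity
  set y := (p : ℝ) ^ ((1 : ℝ) / 4) with hy
  have hy0 : 0 ≤ y := by positivity
  have hlog0 : 0 ≤ Real.log p := Real.log_natCast_nonneg p
  have hy4 : y ^ 4 = p := by
    rw [hy, ← Real.rpow_natCast, ← Real.rpow_mul hp0]
    norm_num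
  rw [Real.norm_of_nonneg hlog0, Real.norm_of_nonneg hy0, div_mul_eq_mul_div, one_mul,
    le_div_iff₀ (by positivity)] at hp
  have h1 := sqrt_sqrt_add_one_le (p := p) (by omega)
  have h2 := natLog_add_one_le hp3
  have : ((c * (p.sqrt.sqrt + 1) ^ 3 * (Nat.log 2 p + 1) : ℕ) : ℝ) ≤ p := by
    calc ((c * (p.sqrt.sqrt + 1) ^ 3 * (Nat.log 2 p + 1) : ℕ) : ℝ)
        = c * ((p.sqrt.sqrt + 1 : ℕ) : ℝ) ^ 3 * ((Nat.log 2 p + 1 : ℕ) : ℝ) := by push_cast; ring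
      _ ≤ (c + 1) * (2 * y) ^ 3 * (3 * Real.log p) := by
          gcongr
          linarith
      _ = y ^ 3 * (Real.log p * (24 * (c + 1))) := by ring
      _ ≤ y ^ 3 * y := by gcongr
      _ = p := by rw [← hy4]; ring
  exact_mod_cast this

theorem stmt_18 :
    ∃ C : ℝ, 0 < C ∧ ∀ (p : ℕ) [Fact p.Prime], p ≠ 2 →
      ∀ a H : ℕ, 0 < a → 0 < H →
        (∀ i < H, ¬ p ∣ (a + i) ∧ ∃ x : ZMod p, x ^ 2 = ((a + i : ℕ) : ZMod p)) →
        (H : ℝ) ≤ C * (p : ℝ) ^ ((1 : ℝ) / 4) * Real.log p := by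
  obtain ⟨P, hP⟩ := Filter.eventually_atTop.1
    (eventually_mul_sqrt_sqrt_pow_mul_log_le (32 * 22 ^ 3))
  refine ⟨264 + P + 128, by positivity, ?_⟩
  intro p _ hp2 a H _ _ hrun
  have hp3 : 3 ≤ p := by
    have := (Fact.out : p.Prime).two_le
    omega
  have hp3' : (3 : ℝ) ≤ p := by exact_mod_cast hp3
  have hlog := one_le_log_natCast hp3
  have hy : (1 : ℝ) ≤ (p : ℝ) ^ ((1 : ℝ) / 4) := Real.one_le_rpow (by linarith) (by norm_num)
  set y := (p : ℝ) ^ ((1 : ℝ) / 4)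
  have hχ : ∀ i < H, quadraticChar (ZMod p) ((a + i : ℕ) : ZMod p) = 1 := by
    intro i hi
    obtain ⟨hdvd, x, hx⟩ := hrun i hi
    have hne : ((a + i : ℕ) : ZMod p) ≠ 0 := by rwa [Ne, ZMod.natCast_eq_zero_iff]
    rw [quadraticChar_one_iff_isSquare hne, ← hx]
    exact IsSquare.sq x
  have hyl : 1 ≤ y * Real.log p := one_le_mul_of_one_le_of_one_le hy hlog
  rcases Nat.lt_or_ge p (P + 128) with hlt | hge
  · have hHp : H < p := by
      by_contra! hle
      have hmod : a % p < p := Nat.mod_lt _ (by omega)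
      rcases Nat.eq_zero_or_pos (a % p) with h0 | h0
      · exact (hrun 0 (by omega)).1 (Nat.dvd_of_mod_eq_zero h0)
      · refine (hrun (p - a % p) (by omega)).1 ⟨a / p + 1, ?_⟩
        have := Nat.div_add_mod a p
        rw [mul_add, mul_one]
        omega
    have hH : (H : ℝ) ≤ P + 128 := by exact_mod_cast (hHp.trans hlt).le
    have hP0 : (0 : ℝ) ≤ P := by positivity
    rw [mul_assoc]
    nlinarith
  · have hu : p.sqrt < (p.sqrt.sqrt + 1) ^ 2 := Nat.lt_succ_sqrt' _
    have hph : p < 2 ^ (Nat.log 2 p + 1) := Nat.lt_pow_succ_log_self (by norm_num) p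
    have hh : 8 ≤ Nat.log 2 p + 1 := by
      have : 7 ≤ Nat.log 2 p := Nat.le_log_of_pow_le (by norm_num) (by omega)
      omega
    have hlt : H < 44 * (p.sqrt.sqrt + 1) * (Nat.log 2 p + 1) := by
      by_contra! hle
      exact not_forall_quadraticChar_eq_one hp2 hh hph hu (hP p (by omega))
        fun i hi => hχ i (hi.trans_le hle)
    have hlt' : (H : ℝ) ≤ 44 * ((p.sqrt.sqrt + 1 : ℕ) : ℝ) * ((Nat.log 2 p + 1 : ℕ) : ℝ) := by
      exact_mod_cast hlt.le
    calc (H : ℝ) ≤ 44 * ((p.sqrt.sqrt + 1 : ℕ) : ℝ) * ((Nat.log 2 p + 1 : ℕ) : ℝ) := hlt'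
      _ ≤ 44 * (2 * y) * (3 * Real.log p) := by
          gcongr
          · exact sqrt_sqrt_add_one_le (by omega)
          · exact natLog_add_one_le hp3
      _ = 264 * y * Real.log p := by ring
      _ ≤ (264 + P + 128) * y * Real.log p := by
          gcongr
          have : (0 : ℝ) ≤ P := by positivity
          linarith
end
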